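/- Let ℓ be an odd prime, q a prime power coprime to ℓ, r and n_0 positive integers, and g ∈ GL(n_0, F_q). Then the proportion of irreducible complex characters χ of GL(n, F_q) such that ℓ^r does not divide χ(g) tends to 0 as n → ∞: lim_{n→∞} #{χ ∈ Irr(GL(n,q)) : ℓ^r ∤ χ(g)} / |Irr(GL(n,q))| = 0. -/

import Mathlib

open Matrix

noncomputable def blockOneHom (F : Type*) [Field F] (n₀ n : ℕ) (h : n₀ ≤ n) :
    Matrix (Fin n₀) (Fin n₀) F →* Matrix (Fin n) (Fin n) F :=
  (Matrix.reindexAlgEquiv F F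
      ((finSumFinEquiv (m := n₀) (n := n - n₀)).trans
        (finCongr (Nat.add_sub_cancel' h)))).toAlgHom.toMonoidHom.comp
    { toFun := fun A => Matrix.fromBlocks A 0 0 (1 : Matrix (Fin (n - n₀)) (Fin (n - n₀)) F)
      map_one' := by simp [Matrix.fromBlocks_one]
      map_mul' := fun A B => by
        simp [Matrix.fromBlocks_multiply] }

noncomputable def glEmbed {F : Type*} [Field F] {n₀ n : ℕ} (h : n₀ ≤ n) :
    GL (Fin n₀) F →* GL (Fin n) F :=
  Units.map (blockOneHom F n₀ n h)

def IsIrrChar (G : Type) [Group G] (f : G → ℂ) : Prop :=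
  ∃ V : FDRep ℂ G, CategoryTheory.Simple V ∧ FDRep.character V = f

/-- `d` divides the algebraic number `z`, i.e. `z / d` is an algebraic integer. -/
def NatDvdAlg (d : ℕ) (z : ℂ) : Prop := IsIntegral ℤ (z / (d : ℂ))

section RepTheory
open CategoryTheory

lemma wed_trace {n : ℕ} (d : Fin n → ℕ) (X Y : (i : Fin n) → Matrix (Fin (d i)) (Fin (d i)) ℂ) :
    LinearMap.trace ℂ _ (LinearMap.mulLeftRight ℂ (X, Y)) = ∑ i, (X i).trace * (Y i).trace := by
  classical
  rw [LinearMap.trace_eq_matrix_trace ℂ (Pi.basis fun i => Matrix.stdBasis ℂ (Fin (d i)) (Fin (d i)))]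
  simp only [Matrix.trace, Matrix.diag, LinearMap.toMatrix_apply, Fintype.sum_sigma,
    Fintype.sum_prod_type, Finset.sum_mul_sum]
  refine Finset.sum_congr rfl fun i _ => Finset.sum_congr rfl fun a _ =>
    Finset.sum_congr rfl fun b _ => ?_
  simp [Pi.basis_repr, Pi.basis_apply, Matrix.stdBasis_eq_single, LinearMap.mulLeftRight_apply]
  have : ∀ M : Matrix (Fin (d i)) (Fin (d i)) ℂ,
    ((stdBasis ℂ (Fin (d i)) (Fin (d i))).repr M) (a, b) = M a b := fun M => rfl
  rw [this]
  simp [Matrix.mul_apply, Matrix.single_apply, ite_and]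

lemma grp_trace (G : Type) [Group G] [Fintype G] [DecidableEq G] (x y : G) :
    LinearMap.trace ℂ (MonoidAlgebra ℂ G) (LinearMap.mulLeftRight ℂ
      (MonoidAlgebra.of ℂ G x, MonoidAlgebra.of ℂ G y⁻¹)) =
      (Finset.univ.filter fun h : G => x * h = h * y).card := by
  classical
  rw [LinearMap.trace_eq_matrix_trace ℂ (MonoidAlgebra.basis G ℂ)]
  simp only [Matrix.trace, Matrix.diag, LinearMap.toMatrix_apply]
  rw [Finset.card_filter]
  push_cast
  refine Finset.sum_congr rfl fun h _ => ?_
  simp [LinearMap.mulLeftRight_apply, MonoidAlgebra.single_mul_single]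
  have : ∀ M : MonoidAlgebra ℂ G, (MonoidAlgebra.basis G ℂ).repr M h = M.coeff h := fun M => rfl
  rw [this]
  simp [MonoidAlgebra.coeff_single, Finsupp.single_apply, mul_inv_eq_iff_eq_mul]

/-- irreducible characters -/
abbrev Irr (G : Type) [Group G] := {χ : G → ℂ // IsIrrChar G χ}

theorem irr_main (G : Type) [Group G] [Fintype G] [DecidableEq G] :
    ∃ (n : ℕ) (χ : Fin n → Irr G), Function.Bijective χ ∧ ∀ x y : G,
      ∑ i, (χ i).1 x * (χ i).1 y⁻¹ = (Finset.univ.filter fun h : G => x * h = h * y).card := by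
  obtain ⟨n, d, hd, ⟨e⟩⟩ := IsSemisimpleRing.exists_algEquiv_pi_matrix_of_isAlgClosed ℂ (MonoidAlgebra ℂ G)
  let π (i : Fin n) : MonoidAlgebra ℂ G →ₐ[ℂ] Matrix (Fin (d i)) (Fin (d i)) ℂ :=
    (Pi.evalAlgHom ℂ (fun i => Matrix (Fin (d i)) (Fin (d i)) ℂ) i).comp e.toAlgHom
  let ρ (i : Fin n) : Representation ℂ G (Fin (d i) → ℂ) :=
    ((Matrix.toLinAlgEquiv' (R := ℂ) (n := Fin (d i))).toAlgHom.comp (π i)).toMonoidHom.comp (MonoidAlgebra.of ℂ G)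
  let V (i : Fin n) : FDRep ℂ G := FDRep.of (ρ i)
  have hchar (i : Fin n) (g : G) : (V i).character g = (π i (MonoidAlgebra.of ℂ G g)).trace := by
    change LinearMap.trace ℂ _ (Matrix.toLin' _) = _
    rw [Matrix.trace_toLin'_eq]
    rfl
  have hK (x y : G) : ∑ i, (V i).character x * (V i).character y⁻¹ = 
      ((Finset.univ.filter fun h : G => x * h = h * y).card : ℂ) := by
    simp_rw [hchar]
    rw [← grp_trace, ← LinearMap.trace_conj' _ e.toLinearEquiv]
    have : (e.toLinearEquiv.conj (LinearMap.mulLeftRight ℂ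
      (MonoidAlgebra.of ℂ G x, MonoidAlgebra.of ℂ G y⁻¹))) = LinearMap.mulLeftRight ℂ
        (e (MonoidAlgebra.of ℂ G x), e (MonoidAlgebra.of ℂ G y⁻¹)) := by
      refine LinearMap.ext fun a => ?_
      simp [LinearEquiv.conj_apply, LinearMap.mulLeftRight_apply]
    rw [this, wed_trace]
    rfl
  have hG : (Nat.card G : ℂ) ≠ 0 := by
    have := Nat.card_pos (α := G)
    exact_mod_cast this.ne'
  have : Invertible (Nat.card G : ℂ) := invertibleOfNonzero hG
  -- reproducing
  have hrep (W : FDRep ℂ G) (x : G) : W.character x = 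
      ∑ i, ((Nat.card G : ℂ)⁻¹ * ∑ g, W.character g * (V i).character g⁻¹) * (V i).character x := by
    have h1 : ∑ y, (∑ i, (V i).character x * (V i).character y⁻¹) * W.character y = 
        Nat.card G * W.character x := by
      simp_rw [hK, Finset.card_filter, Nat.cast_sum, Finset.sum_mul]
      rw [Finset.sum_comm]
      have : ∀ h : G, ∑ y, ((if x * h = h * y then 1 else 0 : ℕ) : ℂ) * W.character y = W.character x := by
        intro h
        rw [Finset.sum_eq_single (h⁻¹ * x * h)]
        · have := W.char_conj x h⁻¹
          simp only [inv_inv] at this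
          simp [mul_assoc] at this ⊢
          exact this
        · intro b _ hb
          rw [if_neg]; · simp
          intro hh; apply hb; rw [mul_assoc, hh]; simp
        · simp
      simp only [this]
      simp [Nat.card_eq_fintype_card]
    rw [eq_comm, ← mul_right_inj' hG, ← h1]
    simp_rw [Finset.mul_sum, Finset.sum_mul]
    rw [Finset.sum_comm]
    refine Finset.sum_congr rfl fun y _ => ?_
    rw [Finset.mul_sum]
    refine Finset.sum_congr rfl fun i _ => ?_
    field_simp
  simp_rw [FDRep.scalar_product_char_eq_finrank_equivariant] at hrep
  have hdim (i) : (V i).character 1 = d i := by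
    rw [hchar, map_one, map_one]; simp
  have hN (i j : Fin n) : Module.finrank ℂ (V j ⟶ V i) = if i = j then 1 else 0 := by
    have h1 := hrep (V i) 1
    simp_rw [hdim] at h1
    have h2 : d i = ∑ j, Module.finrank ℂ (V j ⟶ V i) * d j := by exact_mod_cast h1
    have hpos : ∀ j, 0 < d j := fun j => Nat.pos_of_ne_zero (hd j).out
    have hii : 1 ≤ Module.finrank ℂ (V i ⟶ V i) := by
      rw [Nat.one_le_iff_ne_zero]
      intro h0
      have h3 := FDRep.scalar_product_char_eq_finrank_equivariant (V i) (V i)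
      have h4 : (𝟙 (V i) : V i ⟶ V i) = 0 := by
        have := (Module.finrank_eq_zero_iff_of_free ..).mp h0
        exact Subsingleton.elim _ _
      have h5 : Module.finrank ℂ (V i) = 0 := by
        rw [Module.finrank_eq_zero_iff_of_free]
        refine ⟨fun a b => ?_⟩
        have h6 : ∀ a : V i, a = 0 := by
          intro a
          have h7 := congrArg (fun f : V i ⟶ V i => f.hom a) h4
          exact h7
        rw [h6 a, h6 b]
      have h8 := (V i).char_one
      rw [h5, hdim] at h8
      have := hpos i
      norm_cast at h8; omega
    rw [← Finset.add_sum_erase _ _ (Finset.mem_univ i)] at h2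
    have hS : ∑ j ∈ Finset.univ.erase i, Module.finrank ℂ (V j ⟶ V i) * d j = 0 := by
      have := Nat.mul_le_mul_right (d i) hii
      omega
    split_ifs with hij
    · subst hij
      rw [hS] at h2
      have := hpos i
      nlinarith
    · have := (Finset.sum_eq_zero_iff.mp hS) j (by simp [Ne.symm hij])
      have h9 := hpos j
      rcases Nat.mul_eq_zero.mp this with h | h <;> omega
  have hs (i) : Simple (V i) := by
    rw [FDRep.simple_iff_end_is_rank_one, hN]; simp
  refine ⟨n, fun i => ⟨(V i).character, V i, hs i, rfl⟩, ⟨?_, ?_⟩, hK⟩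
  · intro i j hij
    have hij : (V i).character = (V j).character := congrArg Subtype.val hij
    by_contra hne
    have h1 := FDRep.scalar_product_char_eq_finrank_equivariant (V j) (V i)
    have h2 := FDRep.scalar_product_char_eq_finrank_equivariant (V j) (V j)
    rw [hij, h2, hN, hN] at h1
    simp [hne] at h1
  · rintro ⟨ψ, W, hW, rfl⟩
    by_contra! hcon
    have h0 : ∀ i, Module.finrank ℂ (V i ⟶ W) = 0 := by
      intro i
      by_contra hne
      have := hs i
      have h1 := FDRep.scalar_product_char_eq_finrank_equivariant (V i) W
      rw [FDRep.char_orthonormal] at h1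
      split_ifs at h1 with h2
      · obtain ⟨f⟩ := h2
        exact hcon i (Subtype.ext (FDRep.char_iso f).symm)
      · exact hne (by exact_mod_cast h1.symm)
    have h1 : W.character = 0 := by
      ext x
      rw [hrep W x]
      simp [h0]
    have h2 := (FDRep.simple_iff_char_is_norm_one W).mp hW
    rw [h1] at h2
    exact hG (by simpa using h2.symm)

end RepTheory

section RepTheory2
open CategoryTheory

instance irrFinite (G : Type) [Group G] [Finite G] : Finite (Irr G) := by
  classical
  have := Fintype.ofFinite G
  obtain ⟨n, χ, hχ, -⟩ := irr_main G
  exact Finite.of_surjective χ hχ.2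

noncomputable instance irrFintype (G : Type) [Group G] [Finite G] : Fintype (Irr G) :=
  Fintype.ofFinite _

lemma irr_col {G : Type} [Group G] [Finite G] (x y : G) :
    ∑ χ : Irr G, χ.1 x * χ.1 y⁻¹ = Nat.card {h : G // x * h = h * y} := by
  classical
  have := Fintype.ofFinite G
  obtain ⟨n, χ, hχ, h⟩ := irr_main G
  rw [← (Equiv.ofBijective χ hχ).sum_comp]
  simp only [Equiv.ofBijective_apply, h]
  rw [Nat.card_eq_fintype_card, Fintype.card_subtype]

lemma irr_conj {G : Type} [Group G] (χ : Irr G) (g h : G) : χ.1 (h * g * h⁻¹) = χ.1 g := by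
  obtain ⟨_, V, hV, rfl⟩ := χ
  exact V.char_conj g h

lemma irr_orth {G : Type} [Group G] [Fintype G] [DecidableEq (Irr G)] (χ ψ : Irr G) :
    ∑ x, χ.1 x * ψ.1 x⁻¹ = if χ = ψ then (Nat.card G : ℂ) else 0 := by
  have hG : (Nat.card G : ℂ) ≠ 0 := by
    have := Nat.card_pos (α := G)
    exact_mod_cast this.ne'
  have : Invertible (Nat.card G : ℂ) := invertibleOfNonzero hG
  obtain ⟨_, V, hV, rfl⟩ := χ
  obtain ⟨_, W, hW, rfl⟩ := ψ
  have h := FDRep.char_orthonormal V W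
  have h2 := (FDRep.simple_iff_char_is_norm_one V).mp hV
  rw [inv_mul_eq_iff_eq_mul₀ hG] at h
  split_ifs with h1
  · have h1 : V.character = W.character := congrArg Subtype.val h1
    simp only [← h1]
    exact h2
  · rw [if_neg] at h
    · simpa using h
    · rintro ⟨f⟩
      exact h1 (Subtype.ext (FDRep.char_iso f))

lemma irr_card (G : Type) [Group G] [Finite G] : Nat.card (Irr G) = Nat.card (ConjClasses G) := by
  classical
  have := Fintype.ofFinite G
  have h := card_comm_eq_card_conjClasses_mul_card G
  have h1 : ∑ x : G, ∑ χ : Irr G, χ.1 x * χ.1 x⁻¹ = Nat.card (Irr G) * Nat.card G := by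
    rw [Finset.sum_comm]
    simp [irr_orth]
  simp_rw [irr_col] at h1
  have h2 : ∑ x : G, Nat.card {h : G // x * h = h * x} = Nat.card {p : G × G // Commute p.1 p.2} := by
    rw [← Nat.card_sigma]
    refine Nat.card_congr ⟨fun p => ⟨(p.1, p.2.1), p.2.2⟩, fun p => ⟨p.1.1, p.1.2, p.2⟩, fun _ => rfl, fun _ => rfl⟩
  rw [← h2] at h
  have h3 : Nat.card (Irr G) * Nat.card G = Nat.card (ConjClasses G) * Nat.card G := by
    rw [← h]
    exact_mod_cast h1.symm
  exact Nat.eq_of_mul_eq_mul_right Nat.card_pos h3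

lemma irr_mult_nat {P G H K : Type} [Group P] [Fintype P] [Group G] [Group H] [Group K]
    (φ : P →* G) (α : P →* H) (β : P →* K) (χ : Irr G) (σ : Irr H) (τ : Irr K) :
    ∃ m : ℕ, (Nat.card P : ℂ)⁻¹ * ∑ p, χ.1 (φ p) * (σ.1 (α p)⁻¹ * τ.1 (β p)⁻¹) = m := by
  have hG : (Nat.card P : ℂ) ≠ 0 := by
    have := Nat.card_pos (α := P)
    exact_mod_cast this.ne'
  have : Invertible (Nat.card P : ℂ) := invertibleOfNonzero hG
  obtain ⟨_, V, hV, rfl⟩ := χ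
  obtain ⟨_, W, hW, rfl⟩ := σ
  obtain ⟨_, U, hU, rfl⟩ := τ
  have h := FDRep.scalar_product_char_eq_finrank_equivariant
    (FDRep.of (Representation.tprod (W.ρ.comp α) (U.ρ.comp β))) (FDRep.of (V.ρ.comp φ))
  refine ⟨_, Eq.trans ?_ h⟩
  congr 1
  refine Finset.sum_congr rfl fun p _ => ?_
  congr 1
  have := congrFun (Representation.char_tensor (W.ρ.comp α) (U.ρ.comp β)) p⁻¹
  refine Eq.trans ?_ this.symm
  simp [Representation.character, FDRep.character]

lemma trace_integral {V : Type} [AddCommGroup V] [Module ℂ V] [FiniteDimensional ℂ V]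
    (A : Module.End ℂ V) (s : ℕ) (hs : 0 < s) (hA : A ^ (s + 1) = A) :
    IsIntegral ℤ (LinearMap.trace ℂ V A) := by
  rw [Module.End.trace_eq_sum_roots_charpoly_of_splits (IsAlgClosed.splits _)]
  refine IsIntegral.multiset_sum fun μ hμ => ?_
  have h1 : A.HasEigenvalue μ := by
    rw [Module.End.hasEigenvalue_iff_isRoot_charpoly]
    exact Polynomial.isRoot_of_mem_roots hμ
  obtain ⟨v, hv⟩ := h1.exists_hasEigenvector
  have h2 := hv.pow_apply (s + 1)
  rw [hA, hv.apply_eq_smul] at h2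
  have h3 : μ = μ ^ (s + 1) := smul_left_injective ℂ hv.2 h2
  refine ⟨Polynomial.X ^ (s + 1) - Polynomial.X, ?_, ?_⟩
  · refine Polynomial.monic_X_pow_sub ?_
    rw [Polynomial.degree_X]
    exact_mod_cast Nat.succ_lt_succ hs
  · simp [← h3]

lemma irr_avg_integral {G : Type} [Group G] [Finite G] (χ : Irr G) (y c : G) (hyc : Commute y c)
    (m : ℕ) (hm : 0 < m) (hc : c ^ m = 1) :
    IsIntegral ℤ ((m : ℂ)⁻¹ * ∑ j ∈ Finset.range m, χ.1 (y * c ^ j)) := by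
  obtain ⟨_, V, hV, rfl⟩ := χ
  have hm' : (m : ℂ) ≠ 0 := by exact_mod_cast hm.ne'
  let e : Module.End ℂ V := (m : ℂ)⁻¹ • ∑ j ∈ Finset.range m, V.ρ (c ^ j)
  have hce : V.ρ c * e = e := by
    simp only [e, mul_smul_comm, Finset.mul_sum, ← map_mul, ← pow_succ']
    congr 1
    have := Finset.sum_range_succ (fun j => V.ρ (c ^ j)) m
    rw [Finset.sum_range_succ'] at this
    simpa [hc] using this
  have hce' : ∀ j : ℕ, V.ρ (c ^ j) * e = e := by
    intro j
    induction j with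
    | zero => simp
    | succ j ih => rw [pow_succ, map_mul, mul_assoc, hce, ih]
  have hee : e * e = e := by
    conv_lhs => enter [1]; simp only [e]
    rw [smul_mul_assoc, Finset.sum_mul]
    simp only [hce']
    rw [Finset.sum_const, Finset.card_range, ← Nat.cast_smul_eq_nsmul ℂ, smul_smul, inv_mul_cancel₀ hm', one_smul]
  have hcomm : Commute (V.ρ y) e := by
    refine Commute.smul_right ?_ _
    refine Commute.sum_right _ _ _ fun j _ => ?_
    exact ((hyc.pow_right j).map V.ρ)
  have hpow : ∀ s, (V.ρ y * e) ^ (s + 1) = V.ρ (y ^ (s + 1)) * e := by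
    intro s
    rw [hcomm.mul_pow, map_pow]
    congr 1
    exact IsIdempotentElem.pow_succ_eq s hee
  have key := trace_integral (V.ρ y * e) (Nat.card G) Nat.card_pos (by
    rw [hpow, pow_succ, pow_card_eq_one', one_mul])
  convert key using 1
  simp [e, Finset.mul_sum, FDRep.character, map_sum]

lemma irr_integral {G : Type} [Group G] [Finite G] (χ : Irr G) (y : G) : IsIntegral ℤ (χ.1 y) := by
  simpa using irr_avg_integral χ y 1 (Commute.one_right y) 1 one_pos (by simp)

end RepTheory2

section Framework
open scoped Classical
set_option linter.unusedSectionVars false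

variable {F : Type} [Field F] [Fintype F]

/-- all irreducible characters of all GL(n) -/
abbrev Ch (F : Type) [Field F] := Σ n : ℕ, Irr (GL (Fin n) F)

/-- level n -/
noncomputable def lvl (F : Type) [Field F] [Fintype F] (n : ℕ) : Finset (Ch F) :=
  (Finset.univ : Finset (Irr (GL (Fin n) F))).map (Function.Embedding.sigmaMk n)

lemma mem_lvl {n : ℕ} {χ : Ch F} : χ ∈ lvl F n ↔ χ.1 = n := by
  constructor
  · intro h
    obtain ⟨x, -, rfl⟩ := Finset.mem_map.mp h
    rfl
  · rintro rfl
    exact Finset.mem_map.mpr ⟨χ.2, Finset.mem_univ _, rfl⟩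

lemma sum_lvl {α : Type} [AddCommMonoid α] (n : ℕ) (f : Ch F → α) :
    ∑ χ ∈ lvl F n, f χ = ∑ χ : Irr (GL (Fin n) F), f ⟨n, χ⟩ := by
  simp [lvl, Finset.sum_map]

/-- value of a character at a matrix with arbitrary index type -/
noncomputable def ev (χ : Ch F) {ι : Type} [Fintype ι] [DecidableEq ι] (M : Matrix ι ι F) : ℂ :=
  if h : Fintype.card ι = χ.1 ∧ IsUnit M then
    χ.2.1 (Units.mapEquiv (reindexAlgEquiv F F (Fintype.equivFinOfCardEq h.1)).toMulEquiv h.2.unit)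
  else 0

variable {ι κ : Type} [Fintype ι] [DecidableEq ι] [Fintype κ] [DecidableEq κ]

lemma ev_eq (χ : Ch F) (e : ι ≃ Fin χ.1) (u : GL ι F) :
    ev χ u.1 = χ.2.1 (Units.mapEquiv (reindexAlgEquiv F F e).toMulEquiv u) := by
  have h : Fintype.card ι = χ.1 ∧ IsUnit u.1 := ⟨by simpa using Fintype.card_congr e, u.isUnit⟩
  rw [ev, dif_pos h]
  set e' := Fintype.equivFinOfCardEq h.1
  have hu : h.2.unit = u := Units.ext rfl
  rw [hu]
  let P : GL (Fin χ.1) F := ⟨(1 : Matrix _ _ F).submatrix (e'.symm.trans e) id,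
    (1 : Matrix _ _ F).submatrix id (e'.symm.trans e), by
      rw [← Matrix.submatrix_mul _ _ _ id _ Function.bijective_id, Matrix.mul_one]
      exact Matrix.submatrix_one_equiv _, by
      rw [← Matrix.submatrix_mul _ _ _ _ _ (e'.symm.trans e).bijective]
      simp ⟩
  rw [← irr_conj χ.2 (Units.mapEquiv (reindexAlgEquiv F F e).toMulEquiv u) P]
  refine congrArg χ.2.1 ?_
  ext i j
  have : (P.1 * (u.1.submatrix e.symm e.symm) * (P⁻¹).1) i j = u.1 (e'.symm i) (e'.symm j) := by
    simp [P, Matrix.mul_apply, Matrix.one_apply, Units.inv_mk]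
  simpa using this.symm

lemma ev_ne_card (χ : Ch F) (h : Fintype.card ι ≠ χ.1) (M : Matrix ι ι F) : ev χ M = 0 := by
  rw [ev, dif_neg]; exact fun h' => h h'.1

lemma ev_not_unit (χ : Ch F) (M : Matrix ι ι F) (h : ¬ IsUnit M) : ev χ M = 0 := by
  rw [ev, dif_neg]; exact fun h' => h h'.2

lemma ev_submatrix (χ : Ch F) (e : κ ≃ ι) (M : Matrix ι ι F) : ev χ (M.submatrix e e) = ev χ M := by
  have hu : M.submatrix e e = (reindexAlgEquiv F F e.symm) M := by ext; simp
  by_cases hM : IsUnit M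
  · by_cases hc : Fintype.card ι = χ.1
    · obtain ⟨u, rfl⟩ := hM
      have f := Fintype.equivFinOfCardEq hc
      rw [ev_eq χ f u, hu]
      have := ev_eq χ (e.trans f) (Units.mapEquiv (reindexAlgEquiv F F e.symm).toMulEquiv u)
      refine Eq.trans this ?_
      refine congrArg χ.2.1 ?_
      ext i j
      simp
    · rw [ev_ne_card χ hc, ev_ne_card χ]
      rwa [Fintype.card_congr e]
  · rw [ev_not_unit χ M hM, ev_not_unit]
    rw [hu]
    simpa using hM

lemma ev_conj_sq (χ : Ch F) (A B M : Matrix ι ι F) (h : A * B = 1) : ev χ (A * M * B) = ev χ M := by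
  have h' : B * A = 1 := mul_eq_one_comm.mp h
  have hM' : M = B * (A * M * B) * A := by
    rw [show B * (A * M * B) * A = (B * A) * M * (B * A) by simp only [mul_assoc], h']; simp
  let a : GL ι F := ⟨A, B, h, h'⟩
  by_cases hM : IsUnit M
  · by_cases hc : Fintype.card ι = χ.1
    · obtain ⟨u, rfl⟩ := hM
      have f := Fintype.equivFinOfCardEq hc
      rw [ev_eq χ f u]
      have := ev_eq χ f (a * u * a⁻¹)
      refine Eq.trans this ?_
      rw [map_mul, map_mul, map_inv, irr_conj]
    · rw [ev_ne_card χ hc, ev_ne_card χ hc]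
  · rw [ev_not_unit χ M hM, ev_not_unit]
    intro h2
    apply hM
    rw [hM']
    exact ((a⁻¹).isUnit.mul h2).mul a.isUnit

/-- rectangular invertible matrices -/
@[ext] structure MI (F : Type) [Field F] (ι κ : Type) [Fintype ι] [DecidableEq ι] [Fintype κ] [DecidableEq κ] where
  m : Matrix ι κ F
  i : Matrix κ ι F
  mi : m * i = 1
  im : i * m = 1

lemma MI.ext' {a b : MI F ι κ} (h : a.m = b.m) : a = b := by
  have : a.i = b.i := by
    calc a.i = a.i * (b.m * b.i) := by rw [b.mi, Matrix.mul_one]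
      _ = (a.i * a.m) * b.i := by rw [h, Matrix.mul_assoc]
      _ = b.i := by rw [a.im, Matrix.one_mul]
  exact MI.ext h this

instance : Finite (MI F ι κ) := Finite.of_injective (fun a : MI F ι κ => a.m) fun _ _ h => MI.ext' h

lemma MI.card (a : MI F ι κ) : Fintype.card ι = Fintype.card κ :=
  Matrix.square_of_invertible a.m a.i a.mi a.im

lemma ev_conj (χ : Ch F) (a : MI F ι κ) (M : Matrix κ κ F) : ev χ (a.m * M * a.i) = ev χ M := by
  have e := Fintype.equivOfCardEq a.card
  have h := ev_conj_sq χ (a.m.submatrix e.symm id) (a.i.submatrix id e.symm) M (by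
    have h2 : (a.m * a.i).submatrix e.symm e.symm = 1 := by rw [a.mi]; simp
    rw [← h2, Matrix.submatrix_mul _ _ _ id _ Function.bijective_id])
  rw [← h, ← ev_submatrix χ e.symm (a.m * M * a.i)]
  congr 1

lemma ev_col {n : ℕ} (hι : Fintype.card ι = n) (hκ : Fintype.card κ = n) (x : GL ι F) (y : GL κ F) :
    ∑ χ ∈ lvl F n, ev χ x.1 * ev χ (y⁻¹).1 = Nat.card {h : MI F ι κ // x.1 * h.m = h.m * y.1} := by
  rw [sum_lvl]
  have e := Fintype.equivFinOfCardEq hι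
  have f := Fintype.equivFinOfCardEq hκ
  have h1 : ∀ χ : Irr (GL (Fin n) F), ev (⟨n, χ⟩ : Ch F) x.1 = 
    χ.1 (Units.mapEquiv (reindexAlgEquiv F F e).toMulEquiv x) := fun χ => ev_eq (⟨n, χ⟩ : Ch F) e x
  have h2 : ∀ χ : Irr (GL (Fin n) F), ev (⟨n, χ⟩ : Ch F) (y⁻¹).1 = 
    χ.1 (Units.mapEquiv (reindexAlgEquiv F F f).toMulEquiv y)⁻¹ := fun χ => by
      rw [← map_inv]; exact ev_eq (⟨n, χ⟩ : Ch F) f y⁻¹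
  simp_rw [h1, h2]
  rw [irr_col]
  congr 1
  have key : ∀ (a : Matrix (Fin n) (Fin n) F), 
     ((reindexAlgEquiv F F e x.1) * a = a * (reindexAlgEquiv F F f y.1) ↔ 
      x.1 * a.submatrix e f = a.submatrix e f * y.1) := by
    intro a
    have h3 : (reindexAlgEquiv F F e x.1) * a = (x.1 * a.submatrix e f).submatrix e.symm f.symm := by
      rw [Matrix.submatrix_mul _ _ _ e.symm _ e.symm.bijective]
      simp [reindexAlgEquiv]
    have h4 : a * (reindexAlgEquiv F F f y.1) = (a.submatrix e f * y.1).submatrix e.symm f.symm := by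
      rw [Matrix.submatrix_mul _ _ _ f.symm _ f.symm.bijective]
      simp [reindexAlgEquiv]
    rw [h3, h4]
    constructor
    · intro h
      have := congrArg (fun m => m.submatrix e f) h
      simpa using this
    · intro h; rw [h]
  refine Nat.card_congr ⟨fun h => ⟨⟨h.1.1.submatrix e f, (h.1⁻¹).1.submatrix f e, ?_, ?_⟩, ?_⟩,
    fun h => ⟨⟨h.1.m.submatrix e.symm f.symm, h.1.i.submatrix f.symm e.symm, ?_, ?_⟩, ?_⟩, ?_, ?_⟩
  · rw [← Matrix.submatrix_mul _ _ _ f _ f.bijective]; simp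
  · rw [← Matrix.submatrix_mul _ _ _ e _ e.bijective]; simp
  · exact (key _).mp (congrArg Units.val h.2)
  · rw [← Matrix.submatrix_mul _ _ _ f.symm _ f.symm.bijective, h.1.mi]; simp
  · rw [← Matrix.submatrix_mul _ _ _ e.symm _ e.symm.bijective, h.1.im]; simp
  · apply Units.ext
    refine (key _).mpr ?_
    simpa using h.2
  · intro h; apply Subtype.ext; apply Units.ext; simp
  · intro h; apply Subtype.ext; apply MI.ext'; simp

end Framework

section Parabolic
open scoped Classical
set_option linter.unusedSectionVars false

variable {F : Type} [Field F] [Fintype F]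
variable {ι κ ι' κ' : Type} [Fintype ι] [DecidableEq ι] [Fintype κ] [DecidableEq κ]
  [Fintype ι'] [DecidableEq ι'] [Fintype κ'] [DecidableEq κ']

lemma ev_orth (χ ψ : Ch F) (h1 : Fintype.card ι = χ.1) (h2 : Fintype.card ι = ψ.1) :
    ∑ x : GL ι F, ev χ x.1 * ev ψ (x⁻¹).1 = if χ = ψ then (Nat.card (GL ι F) : ℂ) else 0 := by
  obtain ⟨n, χ⟩ := χ
  obtain ⟨m, ψ⟩ := ψ
  simp only at h1 h2
  obtain rfl : n = m := by omega
  have e := Fintype.equivFinOfCardEq h1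
  have h := irr_orth χ ψ
  rw [← (Units.mapEquiv (reindexAlgEquiv F F e).toMulEquiv).toEquiv.sum_comp] at h
  have hc := Nat.card_congr (Units.mapEquiv (reindexAlgEquiv F F e).toMulEquiv).toEquiv
  rw [hc]
  have h4 : ((⟨n, χ⟩ : Ch F) = ⟨n, ψ⟩) ↔ χ = ψ := by simp
  simp only [h4]
  rw [← h]
  refine Finset.sum_congr rfl fun x _ => ?_
  rw [ev_eq (⟨n, χ⟩ : Ch F) e x, ev_eq (⟨n, ψ⟩ : Ch F) e x⁻¹]
  simp

/-- block upper triangular group -/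
@[ext] structure PB (F : Type) [Field F] (ι κ : Type) [Fintype ι] [DecidableEq ι] [Fintype κ] [DecidableEq κ] where
  A : GL ι F
  B : Matrix ι κ F
  C : GL κ F

namespace PB

/-- equivalence with product -/
def equivProd : PB F ι κ ≃ GL ι F × Matrix ι κ F × GL κ F where
  toFun p := (p.A, p.B, p.C)
  invFun p := ⟨p.1, p.2.1, p.2.2⟩
  left_inv _ := rfl
  right_inv _ := rfl

noncomputable instance : Fintype (PB F ι κ) := Fintype.ofEquiv _ equivProd.symm

instance : Mul (PB F ι κ) := ⟨fun p p' => ⟨p.A * p'.A, p.A.1 * p'.B + p.B * p'.C.1, p.C * p'.C⟩⟩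
instance : One (PB F ι κ) := ⟨⟨1, 0, 1⟩⟩
instance : Inv (PB F ι κ) := ⟨fun p => ⟨p.A⁻¹, - ((p.A⁻¹).1 * p.B * (p.C⁻¹).1), p.C⁻¹⟩⟩

@[simp] lemma mul_A (p p' : PB F ι κ) : (p * p').A = p.A * p'.A := rfl
@[simp] lemma mul_B (p p' : PB F ι κ) : (p * p').B = p.A.1 * p'.B + p.B * p'.C.1 := rfl
@[simp] lemma mul_C (p p' : PB F ι κ) : (p * p').C = p.C * p'.C := rfl
@[simp] lemma one_A : (1 : PB F ι κ).A = 1 := rfl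
@[simp] lemma one_B : (1 : PB F ι κ).B = 0 := rfl
@[simp] lemma one_C : (1 : PB F ι κ).C = 1 := rfl
@[simp] lemma inv_A (p : PB F ι κ) : (p⁻¹).A = p.A⁻¹ := rfl
@[simp] lemma inv_B (p : PB F ι κ) : (p⁻¹).B = - ((p.A⁻¹).1 * p.B * (p.C⁻¹).1) := rfl
@[simp] lemma inv_C (p : PB F ι κ) : (p⁻¹).C = p.C⁻¹ := rfl

noncomputable instance : Group (PB F ι κ) := Group.ofLeftAxioms
  (by intro a b c; ext1 <;> simp [mul_assoc, Matrix.mul_add, Matrix.add_mul, Matrix.mul_assoc, add_assoc])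
  (by intro a; ext1 <;> simp)
  (by
    intro a; ext1
    · simp
    · rw [mul_B, inv_A, inv_B, Matrix.neg_mul, Matrix.mul_assoc _ _ a.C.1, ← Units.val_mul]; simp
    · simp)

/-- the underlying matrix -/
def mat (p : PB F ι κ) : Matrix (ι ⊕ κ) (ι ⊕ κ) F := fromBlocks p.A.1 p.B 0 p.C.1

/-- hom to matrices -/
noncomputable def matHom : PB F ι κ →* Matrix (ι ⊕ κ) (ι ⊕ κ) F where
  toFun := mat
  map_one' := by simp [mat]
  map_mul' p p' := by simp [mat, fromBlocks_multiply]

/-- hom to GL -/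
noncomputable def gl : PB F ι κ →* GL (ι ⊕ κ) F := (matHom (F := F) (ι := ι) (κ := κ)).toHomUnits

@[simp] lemma gl_val (p : PB F ι κ) : (gl p).1 = p.mat := rfl
lemma mat_mul (p p' : PB F ι κ) : (p * p').mat = p.mat * p'.mat := matHom.map_mul p p'
lemma mat_one : (1 : PB F ι κ).mat = 1 := matHom.map_one
lemma gl_inv_val (p : PB F ι κ) : ((gl p)⁻¹).1 = (p⁻¹).mat := by rw [← map_inv]; rfl

lemma mat_inj {p p' : PB F ι κ} (h : p.mat = p'.mat) : p = p' := by
  rw [mat, mat, fromBlocks_inj] at h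
  ext1
  · exact Units.ext h.1
  · exact h.2.1
  · exact Units.ext h.2.2.2

/-- hom to A -/
def homA : PB F ι κ →* GL ι F := ⟨⟨PB.A, rfl⟩, fun _ _ => rfl⟩
/-- hom to C -/
def homC : PB F ι κ →* GL κ F := ⟨⟨PB.C, rfl⟩, fun _ _ => rfl⟩

/-- reindexing -/
noncomputable def reindex (e : ι ≃ ι') (f : κ ≃ κ') : PB F ι κ ≃ PB F ι' κ' where
  toFun p := ⟨Units.mapEquiv (reindexAlgEquiv F F e).toMulEquiv p.A, p.B.submatrix e.symm f.symm,
    Units.mapEquiv (reindexAlgEquiv F F f).toMulEquiv p.C⟩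
  invFun p := ⟨Units.mapEquiv (reindexAlgEquiv F F e.symm).toMulEquiv p.A, p.B.submatrix e f,
    Units.mapEquiv (reindexAlgEquiv F F f.symm).toMulEquiv p.C⟩
  left_inv p := by
    ext1
    · apply Units.ext; simp
    · simp
    · apply Units.ext; simp
  right_inv p := by
    ext1
    · apply Units.ext; simp
    · simp
    · apply Units.ext; simp

lemma ev_reindex_unit (χ : Ch F) (e : ι ≃ ι') (u : GL ι F) :
    ev χ (Units.mapEquiv (reindexAlgEquiv F F e).toMulEquiv u).1 = ev χ u.1 := by
  rw [← ev_submatrix χ e.symm u.1]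
  rfl

lemma card_eq : Nat.card (PB F ι κ) = Nat.card (GL ι F) * (Nat.card (Matrix ι κ F) * Nat.card (GL κ F)) := by
  rw [Nat.card_congr equivProd, Nat.card_prod, Nat.card_prod]

lemma card_ne : (Nat.card (PB F ι κ) : ℂ) ≠ 0 := by
  have : 0 < Nat.card (PB F ι κ) := Nat.card_pos
  exact_mod_cast this.ne'

end PB

/-- unnormalised multiplicity -/
noncomputable def pbSum (F : Type) [Field F] [Fintype F] (ι κ : Type) [Fintype ι] [DecidableEq ι] [Fintype κ] [DecidableEq κ]
    (σ τ χ : Ch F) : ℂ :=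
  ∑ p : PB F ι κ, ev χ p.mat * (ev σ (p.A⁻¹).1 * ev τ (p.C⁻¹).1)

lemma pbSum_inv (σ τ χ : Ch F) : pbSum F ι κ σ τ χ =
    ∑ p : PB F ι κ, ev χ (p⁻¹).mat * (ev σ p.A.1 * ev τ p.C.1) := by
  rw [pbSum]
  refine Fintype.sum_equiv (Equiv.inv (PB F ι κ)) _ _ fun p => ?_
  simp

lemma pbSum_reindex (e : ι ≃ ι') (f : κ ≃ κ') (σ τ χ : Ch F) :
    pbSum F ι κ σ τ χ = pbSum F ι' κ' σ τ χ := by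
  rw [pbSum, pbSum, ← (PB.reindex e f).sum_comp]
  refine Finset.sum_congr rfl fun p _ => ?_
  congr 1
  · rw [← ev_submatrix χ (Equiv.sumCongr e f).symm p.mat]
    congr 1
    ext i j
    rcases i with i | i <;> rcases j with j | j <;> simp [PB.mat, PB.reindex]
  · simp only [PB.reindex, Equiv.coe_fn_mk, ← map_inv, PB.ev_reindex_unit]

lemma pbSum_nat (σ τ χ : Ch F) (hσ : Fintype.card ι = σ.1) (hτ : Fintype.card κ = τ.1) :
    ∃ m : ℕ, (Nat.card (PB F ι κ) : ℂ)⁻¹ * pbSum F ι κ σ τ χ = m := by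
  by_cases hc : Fintype.card (ι ⊕ κ) = χ.1
  · have e := Fintype.equivFinOfCardEq hc
    have f := Fintype.equivFinOfCardEq hσ
    have g := Fintype.equivFinOfCardEq hτ
    obtain ⟨m, hm⟩ := irr_mult_nat 
      ((Units.mapEquiv (reindexAlgEquiv F F e).toMulEquiv).toMonoidHom.comp (PB.gl (F := F) (ι := ι) (κ := κ)))
      ((Units.mapEquiv (reindexAlgEquiv F F f).toMulEquiv).toMonoidHom.comp (PB.homA (F := F) (ι := ι) (κ := κ)))
      ((Units.mapEquiv (reindexAlgEquiv F F g).toMulEquiv).toMonoidHom.comp (PB.homC (F := F) (ι := ι) (κ := κ)))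
      χ.2 σ.2 τ.2
    refine ⟨m, Eq.trans ?_ hm⟩
    congr 1
    refine Finset.sum_congr rfl fun p _ => ?_
    rw [← PB.gl_val, ev_eq χ e, ev_eq σ f, ev_eq τ g]
    simp [PB.homA, PB.homC]
  · refine ⟨0, ?_⟩
    simp [pbSum, ev_ne_card χ hc]

/-- multiplicity of sigma tensor tau in the restriction of chi -/
noncomputable def mm (σ τ χ : Ch F) : ℕ :=
  (pbSum_nat (ι := Fin σ.1) (κ := Fin τ.1) σ τ χ (by simp) (by simp)).choose

lemma pbSum_eq (σ τ χ : Ch F) (hσ : Fintype.card ι = σ.1) (hτ : Fintype.card κ = τ.1) :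
    pbSum F ι κ σ τ χ = Nat.card (PB F ι κ) * mm σ τ χ := by
  have h := (pbSum_nat (ι := Fin σ.1) (κ := Fin τ.1) σ τ χ (by simp) (by simp)).choose_spec
  change _ = ((mm σ τ χ : ℕ) : ℂ) at h
  have f := Fintype.equivFinOfCardEq hσ
  have g := Fintype.equivFinOfCardEq hτ
  rw [inv_mul_eq_iff_eq_mul₀ PB.card_ne, ← Nat.card_congr (PB.reindex f g), ← pbSum_reindex f g] at h
  exact h

lemma mm_deg {σ τ χ : Ch F} (h : mm σ τ χ ≠ 0) : χ.1 = σ.1 + τ.1 := by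
  by_contra hne
  have h1 := pbSum_eq (ι := Fin σ.1) (κ := Fin τ.1) σ τ χ (by simp) (by simp)
  have h2 : pbSum F (Fin σ.1) (Fin τ.1) σ τ χ = 0 := by
    simp only [pbSum]
    refine Finset.sum_eq_zero fun p _ => ?_
    rw [ev_ne_card χ (by simp; omega)]
    simp
  rw [h2] at h1
  rcases mul_eq_zero.mp h1.symm with h3 | h3
  · exact PB.card_ne h3
  · exact h (by exact_mod_cast h3)

end Parabolic

section Mackey
open scoped Classical
set_option linter.unusedSectionVars false

variable {F : Type} [Field F] [Fintype F]
variable {k a t b : Type} [Fintype k] [DecidableEq k] [Fintype a] [DecidableEq a]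
  [Fintype t] [DecidableEq t] [Fintype b] [DecidableEq b]

/-- cuspidal characters -/
def Cusp (σ : Ch F) : Prop := 0 < σ.1 ∧ ∀ ε x : Matrix (Fin σ.1) (Fin σ.1) F,
  ε * ε = ε → ε ≠ 0 → ε ≠ 1 → IsUnit x → x * ε = ε * x * ε →
    ∑ φ : Matrix (Fin σ.1) (Fin σ.1) F, ev σ (x * (1 + ε * φ * (1 - ε))) = 0

lemma Cusp.sum_eq_zero {σ : Ch F} (hσ : Cusp σ) (hk : Fintype.card k = σ.1) (ε x : Matrix k k F)
    (h1 : ε * ε = ε) (h2 : ε ≠ 0) (h3 : ε ≠ 1) (hx : IsUnit x) (h4 : x * ε = ε * x * ε) :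
    ∑ φ : Matrix k k F, ev σ (x * (1 + ε * φ * (1 - ε))) = 0 := by
  have e := Fintype.equivFinOfCardEq hk
  let r := reindexAlgEquiv F F e
  have := hσ.2 (r ε) (r x) (by rw [← map_mul, h1]) (by simpa using h2) (by
    rw [← map_one r]; exact fun h => h3 (r.injective h)) (by simpa using hx)
    (by simp only [← map_mul]; rw [h4])
  rw [← this]
  refine Fintype.sum_equiv r.toEquiv _ _ fun φ => ?_
  have : (r x * (1 + r ε * r φ * (1 - r ε))) = r (x * (1 + ε * φ * (1 - ε))) := by simp
  change _ = ev σ (r x * (1 + r ε * r φ * (1 - r ε)))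
  rw [this, ← ev_submatrix σ e.symm]
  rfl

/-- the summand over a double coset representative -/
noncomputable def Sh (σ τ ρ ω : Ch F) (h : MI F (k ⊕ a) (t ⊕ b)) : ℂ :=
  ∑ x : PB F k a, ∑ y : PB F t b, if x.mat * h.m = h.m * y.mat then
    (ev σ x.A.1 * ev τ x.C.1) * (ev ρ (y.A⁻¹).1 * ev ω (y.C⁻¹).1) else 0

noncomputable instance : Fintype (MI F k a) := Fintype.ofFinite _

/-- inverse of a rectangular matrix -/
def MI.symm (h : MI F k a) : MI F a k := ⟨h.i, h.m, h.im, h.mi⟩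

/-- inverse as equivalence -/
def MI.symmEquiv : MI F k a ≃ MI F a k := ⟨MI.symm, MI.symm, fun _ => rfl, fun _ => rfl⟩

lemma MI.move (h : MI F k a) (x : Matrix k k F) (y : Matrix a a F) :
    y * h.i = h.i * x ↔ x * h.m = h.m * y := by
  constructor
  · intro e
    calc x * h.m = (h.m * h.i) * x * h.m := by rw [h.mi, Matrix.one_mul]
      _ = h.m * (h.i * x) * h.m := by simp only [Matrix.mul_assoc]
      _ = h.m * y * (h.i * h.m) := by rw [← e]; simp only [Matrix.mul_assoc]
      _ = _ := by rw [h.im, Matrix.mul_one]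
  · intro e
    calc y * h.i = (h.i * h.m) * y * h.i := by rw [h.im, Matrix.one_mul]
      _ = h.i * (h.m * y) * h.i := by simp only [Matrix.mul_assoc]
      _ = h.i * x * (h.m * h.i) := by rw [← e]; simp only [Matrix.mul_assoc]
      _ = _ := by rw [h.mi, Matrix.mul_one]

lemma mackey_lhs (σ τ ρ ω : Ch F) {n : ℕ} (h1 : Fintype.card (k ⊕ a) = n) (h2 : Fintype.card (t ⊕ b) = n) :
    ∑ χ ∈ lvl F n, pbSum F k a σ τ χ * pbSum F t b ρ ω χ = ∑ h : MI F (k ⊕ a) (t ⊕ b), Sh σ τ ρ ω h := by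
  simp only [Sh]
  rw [Finset.sum_comm]
  simp_rw [fun x : PB F k a => Finset.sum_comm (s := (Finset.univ : Finset (MI F (k ⊕ a) (t ⊕ b)))) 
    (t := (Finset.univ : Finset (PB F t b))) (f := fun h y => if x.mat * h.m = h.m * y.mat then
    (ev σ x.A.1 * ev τ x.C.1) * (ev ρ (y.A⁻¹).1 * ev ω (y.C⁻¹).1) else 0)]
  simp_rw [pbSum_inv σ τ]
  simp only [pbSum, Finset.sum_mul_sum]
  rw [Finset.sum_comm]
  refine Finset.sum_congr rfl fun x _ => ?_
  rw [Finset.sum_comm]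
  refine Finset.sum_congr rfl fun y _ => ?_
  have h := ev_col h2 h1 y.gl x.gl
  rw [PB.gl_inv_val, PB.gl_val, PB.gl_val] at h
  rw [← Finset.sum_filter, Finset.sum_const]
  have hc : Nat.card {h : MI F (t ⊕ b) (k ⊕ a) // y.mat * h.m = h.m * x.mat} = 
      (Finset.univ.filter fun h : MI F (k ⊕ a) (t ⊕ b) => x.mat * h.m = h.m * y.mat).card := by
    rw [← Fintype.card_subtype, ← Nat.card_eq_fintype_card]
    refine Nat.card_congr (Equiv.subtypeEquiv MI.symmEquiv fun h => ?_)
    exact (MI.move h.symm _ _)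
  rw [hc] at h
  rw [nsmul_eq_mul, ← h, Finset.sum_mul]
  refine Finset.sum_congr rfl fun χ _ => ?_
  ring

lemma Sh_act (σ τ ρ ω : Ch F) (h h' : MI F (k ⊕ a) (t ⊕ b)) (p : PB F k a) (p' : PB F t b)
    (hh : p.mat * h.m = h'.m * p'.mat) : Sh σ τ ρ ω h' = Sh σ τ ρ ω h := by
  have hcl : ∀ (χ : Ch F) {ι : Type} [Fintype ι] [DecidableEq ι] (u v : GL ι F), 
      ev χ (u * v * u⁻¹ : GL ι F).1 = ev χ v.1 := by
    intro χ ι _ _ u v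
    have := ev_conj_sq χ u.1 (u⁻¹).1 v.1 (by rw [← Units.val_mul]; simp)
    simpa using this
  symm
  refine Fintype.sum_equiv (MulAut.conj p).toEquiv _ _ fun x => ?_
  refine Fintype.sum_equiv (MulAut.conj p').toEquiv _ _ fun y => ?_
  simp only [MulEquiv.toEquiv_eq_coe, EquivLike.coe_coe, MulAut.conj_apply]
  have e1 : ((p * x * p⁻¹).mat * h'.m = h'.m * (p' * y * p'⁻¹).mat) ↔ (x.mat * h.m = h.m * y.mat) := by
    have e2 : h'.m = p.mat * h.m * (p'⁻¹).mat := by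
      rw [hh, Matrix.mul_assoc, ← PB.mat_mul]; simp [PB.mat_one]
    have e3 : (p * x * p⁻¹).mat * h'.m = p.mat * (x.mat * h.m) * (p'⁻¹).mat := by
      rw [e2, PB.mat_mul, PB.mat_mul]
      have : (p⁻¹).mat * p.mat = 1 := by rw [← PB.mat_mul]; simp [PB.mat_one]
      calc _ = p.mat * x.mat * ((p⁻¹).mat * p.mat) * h.m * (p'⁻¹).mat := by simp only [Matrix.mul_assoc]
        _ = _ := by rw [this]; simp [Matrix.mul_assoc]
    have e4 : h'.m * (p' * y * p'⁻¹).mat = p.mat * (h.m * y.mat) * (p'⁻¹).mat := by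
      rw [PB.mat_mul, PB.mat_mul, ← Matrix.mul_assoc, ← Matrix.mul_assoc, ← hh]; simp only [Matrix.mul_assoc]
    rw [e3, e4]
    constructor
    · intro e
      have := congrArg (fun m => (p⁻¹).mat * m * p'.mat) e
      have i1 : (p⁻¹).mat * p.mat = 1 := by rw [← PB.mat_mul]; simp [PB.mat_one]
      have i2 : (p'⁻¹).mat * p'.mat = 1 := by rw [← PB.mat_mul]; simp [PB.mat_one]
      simpa only [← Matrix.mul_assoc, i1, Matrix.one_mul, Matrix.mul_assoc _ (p'⁻¹).mat p'.mat, i2, Matrix.mul_one] using this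
    · intro e; rw [e]
  simp only [e1]
  congr 2
  · simp only [PB.mul_A, PB.mul_C, PB.inv_A, PB.inv_C, hcl]
  · have hcl2 : ∀ (χ : Ch F) {ι : Type} [Fintype ι] [DecidableEq ι] (u v : GL ι F), 
        ev χ ((u * v * u⁻¹)⁻¹ : GL ι F).1 = ev χ (v⁻¹).1 := by
      intro χ ι _ _ u v
      rw [← hcl χ u v⁻¹]
      congr 2
      group
    simp only [PB.mul_A, PB.mul_C, PB.inv_A, PB.inv_C, hcl2]

lemma Sh_vanish (σ τ ρ ω : Ch F) (hσ : Cusp σ) (hk : Fintype.card k = σ.1) (h : MI F (k ⊕ a) (t ⊕ b))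
    (L : Matrix t a F) (hL : h.m.toBlocks₂₁ * L * h.m.toBlocks₂₁ = h.m.toBlocks₂₁)
    (R' : Matrix t k F) (R : Matrix k t F) (hR : R = h.m.toBlocks₁₁ * (1 - L * h.m.toBlocks₂₁))
    (hR' : R * R' * R = R) (h0 : R * R' ≠ 0) (h1 : R * R' ≠ 1) : Sh σ τ ρ ω h = 0 := by
  set h11 := h.m.toBlocks₁₁ with e11
  set h12 := h.m.toBlocks₁₂ with e12
  set h21 := h.m.toBlocks₂₁ with e21
  set h22 := h.m.toBlocks₂₂ with e22
  have hm : h.m = fromBlocks h11 h12 h21 h22 := (fromBlocks_toBlocks h.m).symm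
  set Q := 1 - L * h21 with hQ
  set ε := R * R' with hε
  have hQ0 : h21 * Q = 0 := by rw [hQ, Matrix.mul_sub, ← Matrix.mul_assoc, hL]; simp
  have hεε : ε * ε = ε := by rw [hε, ← Matrix.mul_assoc, hR']
  have hεR : (1 - ε) * R = 0 := by rw [Matrix.sub_mul, hR']; simp
  let n (φ : Matrix k k F) : Matrix k k F := ε * φ * (1 - ε)
  have hnn : ∀ φ ψ, n φ * n ψ = 0 := by
    intro φ ψ
    have : (1 - ε) * ε = 0 := by rw [Matrix.sub_mul, hεε]; simp
    calc n φ * n ψ = ε * φ * ((1 - ε) * ε) * ψ * (1 - ε) := by simp only [n, Matrix.mul_assoc]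
      _ = 0 := by rw [this]; simp
  let V (φ : Matrix k k F) : GL k F := ⟨1 + n φ, 1 - n φ, by
    simp [Matrix.add_mul, Matrix.mul_sub, hnn], by simp [Matrix.sub_mul, Matrix.mul_add, hnn]⟩
  let E2 := - (h11 * L)
  let v (φ : Matrix k k F) : PB F k a := ⟨V φ, n φ * E2, 1⟩
  let w (φ : Matrix k k F) : PB F t b := ⟨1, Q * (R' * φ * (1 - ε)) * (h12 + E2 * h22), 1⟩
  have hvw : ∀ φ, (v φ).mat * h.m = h.m * (w φ).mat := by
    intro φ
    rw [hm]
    simp only [PB.mat, v, w, fromBlocks_multiply, Units.val_one, V]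
    congr 1
    · have : n φ * h11 + n φ * E2 * h21 = 0 := by
        calc n φ * h11 + n φ * E2 * h21 = ε * φ * ((1 - ε) * R) := by
              rw [hR, hQ]; simp only [n, E2, Matrix.mul_add, Matrix.mul_sub, Matrix.mul_one, 
                Matrix.mul_assoc, Matrix.mul_neg, Matrix.neg_mul, Matrix.sub_mul, Matrix.one_mul]; abel
          _ = 0 := by rw [hεR]; simp
      simp only [Matrix.add_mul, Matrix.one_mul, Matrix.mul_one, Matrix.mul_zero, add_zero, add_assoc, this]
    · have : h11 * (Q * (R' * φ * (1 - ε)) * (h12 + E2 * h22)) = n φ * (h12 + E2 * h22) := by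
        simp only [n, hε, hR, Matrix.mul_assoc]
      rw [this]
      simp only [Matrix.add_mul, Matrix.one_mul, Matrix.mul_one, Matrix.mul_add, Matrix.mul_assoc]
      abel
    · simp
    · have : h21 * (Q * (R' * φ * (1 - ε)) * (h12 + E2 * h22)) = 0 := by
        simp only [← Matrix.mul_assoc, hQ0, Matrix.zero_mul]
      rw [this]; simp
  have hwi : ∀ φ, (w φ).mat * ((w φ)⁻¹).mat = 1 := by
    intro φ; rw [← PB.mat_mul]; simp [PB.mat_one]
  have key : ∀ φ, Sh σ τ ρ ω h = ∑ x : PB F k a, ∑ y : PB F t b, if x.mat * h.m = h.m * y.mat then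
    (ev σ (x.A.1 * (1 + ε * φ * (1 - ε))) * ev τ x.C.1) * (ev ρ (y.A⁻¹).1 * ev ω (y.C⁻¹).1) else 0 := by
    intro φ
    symm
    refine Fintype.sum_equiv (Equiv.mulRight (v φ)) _ _ fun x => ?_
    refine Fintype.sum_equiv (Equiv.mulRight (w φ)) _ _ fun y => ?_
    simp only [Equiv.coe_mulRight, PB.mul_A, PB.mul_C]
    have : ((x * v φ).mat * h.m = h.m * (y * w φ).mat) ↔ (x.mat * h.m = h.m * y.mat) := by
      rw [PB.mat_mul, PB.mat_mul, Matrix.mul_assoc, hvw, ← Matrix.mul_assoc, ← Matrix.mul_assoc]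
      constructor
      · intro e
        have := congrArg (fun m => m * ((w φ)⁻¹).mat) e
        simpa only [Matrix.mul_assoc, hwi, Matrix.mul_one] using this
      · intro e; rw [e]
    simp only [this]
    simp [v, w, V, n]
  have hcard : (Fintype.card (Matrix k k F) : ℂ) * Sh σ τ ρ ω h = 0 := by
    rw [← nsmul_eq_mul, ← Finset.card_univ, ← Finset.sum_const, Finset.sum_congr rfl fun φ _ => key φ]
    rw [Finset.sum_comm]
    refine Finset.sum_eq_zero fun x _ => ?_
    rw [Finset.sum_comm]
    refine Finset.sum_eq_zero fun y _ => ?_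
    split_ifs with hxy
    · rw [← Finset.sum_mul, ← Finset.sum_mul, hσ.sum_eq_zero hk ε _ hεε h0 h1 x.A.isUnit]
      · simp
      · rw [hm] at hxy
        simp only [PB.mat, fromBlocks_multiply, fromBlocks_inj, Matrix.zero_mul, Matrix.mul_zero, zero_add, add_zero] at hxy
        obtain ⟨q1, -, q3, -⟩ := hxy
        have q4 : h21 * (y.A.1 * Q) = 0 := by
          rw [← Matrix.mul_assoc, ← q3, Matrix.mul_assoc, hQ0]; simp
        have q5 : y.A.1 * Q = Q * (y.A.1 * Q) := by
          have : Q * (y.A.1 * Q) = (1 - L * h21) * (y.A.1 * Q) := by rw [← hQ]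
          rw [this, Matrix.sub_mul, Matrix.mul_assoc L, q4]
          simp
        have q6 : x.A.1 * R = R * (y.A.1 * Q) := by
          have := congrArg (fun m => m * Q) q1
          simp only [Matrix.add_mul, Matrix.mul_assoc, hQ0, Matrix.mul_zero, add_zero] at this
          rw [hR, this, Matrix.mul_assoc, ← q5]
        have q7 : x.A.1 * ε = R * (y.A.1 * Q) * R' := by rw [hε, ← Matrix.mul_assoc, q6]
        rw [Matrix.mul_assoc, q7]
        simp only [← Matrix.mul_assoc, hR']
    · simp
  rcases mul_eq_zero.mp hcard with h | h
  · exact absurd (by exact_mod_cast h) (Fintype.card_ne_zero (α := Matrix k k F))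
  · exact h

end Mackey

section Mackey2
open scoped Classical
set_option linter.unusedSectionVars false

variable {F : Type} [Field F] [Fintype F]
variable {k a t b c : Type} [Fintype k] [DecidableEq k] [Fintype a] [DecidableEq a]
  [Fintype t] [DecidableEq t] [Fintype b] [DecidableEq b] [Fintype c] [DecidableEq c]

lemma exists_gen_inv (M : Matrix k a F) : ∃ L : Matrix a k F, M * L * M = M := by
  let f := Matrix.toLin' M
  obtain ⟨s, hs⟩ := f.rangeRestrict.exists_rightInverse_of_surjective (LinearMap.range_rangeRestrict f)
  obtain ⟨g, hg⟩ := LinearMap.exists_extend s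
  refine ⟨LinearMap.toMatrix' g, ?_⟩
  apply Matrix.toLin'.injective
  rw [Matrix.toLin'_mul, Matrix.toLin'_mul, Matrix.toLin'_toMatrix']
  refine LinearMap.ext fun v => ?_
  have h1 : g (f v) = s (f.rangeRestrict v) := LinearMap.congr_fun hg (f.rangeRestrict v)
  have h2 := LinearMap.congr_fun hs (f.rangeRestrict v)
  change f (g (f v)) = f v
  rw [h1]
  exact congrArg Subtype.val h2

lemma Sh_class (σ τ ρ ω : Ch F) (hσ : Cusp σ) (hk : Fintype.card k = σ.1) 
    (htk : Fintype.card t ≤ Fintype.card k) (h : MI F (k ⊕ a) (t ⊕ b)) :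
    (∃ L : Matrix t a F, L * h.m.toBlocks₂₁ = 1) ∨
    (h.m.toBlocks₂₁ = 0 ∧ Fintype.card t = Fintype.card k) ∨ Sh σ τ ρ ω h = 0 := by
  obtain ⟨L, hL⟩ := exists_gen_inv h.m.toBlocks₂₁
  obtain ⟨R', hR'⟩ := exists_gen_inv (h.m.toBlocks₁₁ * (1 - L * h.m.toBlocks₂₁))
  set h11 := h.m.toBlocks₁₁ with e11
  set h12 := h.m.toBlocks₁₂ with e12
  set h21 := h.m.toBlocks₂₁ with e21
  set h22 := h.m.toBlocks₂₂ with e22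
  have hm : h.m = fromBlocks h11 h12 h21 h22 := (fromBlocks_toBlocks h.m).symm
  have hQ0 : h21 * (1 - L * h21) = 0 := by rw [Matrix.mul_sub, ← Matrix.mul_assoc, hL]; simp
  by_cases h0 : h11 * (1 - L * h21) * R' = 0
  · left
    rw [h0, Matrix.zero_mul] at hR'
    have him := h.im
    rw [hm, ← fromBlocks_toBlocks h.i, fromBlocks_multiply, ← fromBlocks_one, fromBlocks_inj] at him
    have : 1 - L * h21 = 0 := by
      calc 1 - L * h21 = (h.i.toBlocks₁₁ * h11 + h.i.toBlocks₁₂ * h21) * (1 - L * h21) := by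
            rw [him.1, Matrix.one_mul]
        _ = h.i.toBlocks₁₁ * (h11 * (1 - L * h21)) + h.i.toBlocks₁₂ * (h21 * (1 - L * h21)) := by
            rw [Matrix.add_mul]; simp only [Matrix.mul_assoc]
        _ = 0 := by rw [← hR', hQ0]; simp
    exact ⟨L, (sub_eq_zero.mp this).symm⟩
  · right
    by_cases h1 : h11 * (1 - L * h21) * R' = 1
    · left
      have hcard : Fintype.card t = Fintype.card k := by
        apply le_antisymm htk
        calc Fintype.card k = (1 : Matrix k k F).rank := by rw [Matrix.rank_one]
          _ ≤ _ := by rw [← h1]; exact Matrix.rank_mul_le_right _ _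
          _ ≤ _ := Matrix.rank_le_card_height _
      refine ⟨?_, hcard⟩
      have e := Fintype.equivOfCardEq hcard
      rw [Matrix.mul_assoc, Matrix.mul_eq_one_comm_of_equiv e.symm] at h1
      calc h21 = h21 * ((1 - L * h21) * R' * h11) := by rw [h1, Matrix.mul_one]
        _ = (h21 * (1 - L * h21)) * R' * h11 := by simp only [Matrix.mul_assoc]
        _ = 0 := by rw [hQ0]; simp
    · right
      exact Sh_vanish σ τ ρ ω hσ hk h L hL R' _ rfl hR' h0 h1

lemma exists_pb (M : Matrix (k ⊕ a) (k ⊕ a) F) (hM : IsUnit M) (h : M.toBlocks₂₁ = 0) :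
    ∃ p : PB F k a, p.mat = M := by
  rw [← fromBlocks_toBlocks M, h, Matrix.isUnit_fromBlocks_zero₂₁] at hM
  refine ⟨⟨hM.1.unit, M.toBlocks₁₂, hM.2.unit⟩, ?_⟩
  conv_rhs => rw [← fromBlocks_toBlocks M, h]
  rfl

/-- unit to MI -/
def MI.ofGL (u : GL k F) : MI F k k := ⟨u.1, (u⁻¹).1, by rw [← Units.val_mul]; simp, by rw [← Units.val_mul]; simp⟩

lemma MI.isUnit (h : MI F k k) : IsUnit h.m := ⟨⟨h.m, h.i, h.mi, h.im⟩, rfl⟩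

lemma sum_PB (f : GL k F → Matrix k a F → GL a F → ℂ) : 
    ∑ p : PB F k a, f p.A p.B p.C = ∑ x : GL k F, ∑ y : Matrix k a F, ∑ z : GL a F, f x y z := by
  have : ∑ p : PB F k a, f p.A p.B p.C = ∑ q : GL k F × Matrix k a F × GL a F, f q.1 q.2.1 q.2.2 :=
    Fintype.sum_equiv PB.equivProd _ _ fun p => rfl
  rw [this]
  simp only [Fintype.sum_prod_type]

lemma sum_h21_zero (σ τ ρ ω : Ch F) (hk : Fintype.card k = σ.1) (ha : Fintype.card a = τ.1)
    (hk' : Fintype.card k = ρ.1) (ha' : Fintype.card a = ω.1) :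
    ∑ h ∈ Finset.univ.filter (fun h : MI F (k ⊕ a) (k ⊕ a) => h.m.toBlocks₂₁ = 0), Sh σ τ ρ ω h = 
      if σ = ρ ∧ τ = ω then (Nat.card (PB F k a) : ℂ) * Nat.card (PB F k a) else 0 := by
  have h1 : ∀ p : PB F k a, Sh σ τ ρ ω (MI.ofGL p.gl) = Sh σ τ ρ ω (MI.ofGL (1 : GL (k ⊕ a) F)) := by
    intro p
    refine Sh_act σ τ ρ ω _ _ p 1 ?_
    simp [MI.ofGL, PB.mat_one]
  have h2 : ∑ p : PB F k a, Sh σ τ ρ ω (MI.ofGL p.gl) = 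
     ∑ h ∈ Finset.univ.filter (fun h : MI F (k ⊕ a) (k ⊕ a) => h.m.toBlocks₂₁ = 0), Sh σ τ ρ ω h := by
    refine Finset.sum_bij (fun p _ => MI.ofGL p.gl) ?_ ?_ ?_ ?_
    · intro p _; simp [MI.ofGL, PB.mat]
    · intro p _ p' _ h
      exact PB.mat_inj (congrArg MI.m h)
    · intro h hh
      obtain ⟨p, hp⟩ := exists_pb h.m h.isUnit (by simpa using hh)
      exact ⟨p, Finset.mem_univ _, MI.ext' hp⟩
    · intros; rfl
  rw [← h2]
  simp only [h1, Finset.sum_const, Finset.card_univ, nsmul_eq_mul, ← Nat.card_eq_fintype_card]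
  have h3 : Sh σ τ ρ ω (MI.ofGL (1 : GL (k ⊕ a) F)) = if σ = ρ ∧ τ = ω then (Nat.card (PB F k a) : ℂ) else 0 := by
    have : ∀ x y : PB F k a, (x.mat * (MI.ofGL (1 : GL (k ⊕ a) F)).m = (MI.ofGL (1 : GL (k ⊕ a) F)).m * y.mat) ↔ x = y := by
      intro x y
      simp only [MI.ofGL, Units.val_one, Matrix.mul_one, Matrix.one_mul]
      exact ⟨PB.mat_inj, fun h => by rw [h]⟩
    simp only [Sh, this, Finset.sum_ite_eq, Finset.mem_univ, if_true]
    rw [sum_PB (fun x _ z => (ev σ x.1 * ev τ z.1) * (ev ρ (x⁻¹).1 * ev ω (z⁻¹).1)), PB.card_eq]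
    simp only [Finset.sum_const, Finset.card_univ, ← Nat.card_eq_fintype_card]
    have : ∀ x : GL k F, ∑ z : GL a F, (ev σ x.1 * ev τ z.1) * (ev ρ (x⁻¹).1 * ev ω (z⁻¹).1) =
      (ev σ x.1 * ev ρ (x⁻¹).1) * ∑ z : GL a F, (ev τ z.1 * ev ω (z⁻¹).1) := by
      intro x; rw [Finset.mul_sum]; refine Finset.sum_congr rfl fun z _ => by ring
    simp only [this, ← Finset.smul_sum, ← Finset.sum_mul]
    rw [ev_orth σ ρ hk hk', ev_orth τ ω ha ha']
    by_cases q1 : σ = ρ <;> by_cases q2 : τ = ω <;> simp [q1, q2]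
    ring
  rw [h3]
  simp

end Mackey2

section Mackey3
open scoped Classical
set_option linter.unusedSectionVars false

variable {F : Type} [Field F] [Fintype F]
variable {k a t b c : Type} [Fintype k] [DecidableEq k] [Fintype a] [DecidableEq a]
  [Fintype t] [DecidableEq t] [Fintype b] [DecidableEq b] [Fintype c] [DecidableEq c]

lemma orbit_sum (σ τ ρ ω : Ch F) (h0 : MI F (k ⊕ a) (t ⊕ b)) (P : MI F (k ⊕ a) (t ⊕ b) → Prop) [DecidablePred P]
    (hP : ∀ h, P h ↔ ∃ (p : PB F k a) (p' : PB F t b), p.mat * h0.m = h.m * p'.mat) :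
    (∑ h ∈ Finset.univ.filter P, Sh σ τ ρ ω h) *
      Nat.card {z : PB F k a × PB F t b // z.1.mat * h0.m = h0.m * z.2.mat} =
    (Nat.card (PB F k a) : ℂ) * Nat.card (PB F t b) * Sh σ τ ρ ω h0 := by
  have h1 : ∀ h, P h → Nat.card {z : PB F k a × PB F t b // z.1.mat * h0.m = h0.m * z.2.mat} =
      Nat.card {z : PB F k a × PB F t b // z.1.mat * h0.m = h.m * z.2.mat} := by
    intro h hh
    obtain ⟨p, p', hpp⟩ := (hP h).1 hh
    have hinv : p⁻¹.mat * h.m = h0.m * p'⁻¹.mat := by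
      calc p⁻¹.mat * h.m = p⁻¹.mat * (h.m * p'.mat) * p'⁻¹.mat := by
            rw [Matrix.mul_assoc, Matrix.mul_assoc h.m, ← PB.mat_mul, mul_inv_cancel, PB.mat_one, Matrix.mul_one]
        _ = _ := by
            rw [← hpp, ← Matrix.mul_assoc, ← PB.mat_mul, inv_mul_cancel, PB.mat_one, Matrix.one_mul]
    refine Nat.card_congr ⟨fun z => ⟨(p * z.1.1, p' * z.1.2), ?_⟩, fun z => ⟨(p⁻¹ * z.1.1, p'⁻¹ * z.1.2), ?_⟩, ?_, ?_⟩
    · simp only [PB.mat_mul]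
      rw [Matrix.mul_assoc, z.2, ← Matrix.mul_assoc, hpp, Matrix.mul_assoc]
    · simp only [PB.mat_mul]
      rw [Matrix.mul_assoc, z.2, ← Matrix.mul_assoc, hinv, Matrix.mul_assoc]
    · intro z; ext1; simp
    · intro z; ext1; simp
  rw [Finset.sum_mul]
  have h2 : ∀ h ∈ Finset.univ.filter P, Sh σ τ ρ ω h * 
      Nat.card {z : PB F k a × PB F t b // z.1.mat * h0.m = h0.m * z.2.mat} = 
      ∑ z : PB F k a × PB F t b, if z.1.mat * h0.m = h.m * z.2.mat then Sh σ τ ρ ω h0 else 0 := by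
    intro h hh
    rw [h1 h (by simpa using hh), Nat.card_eq_fintype_card, Fintype.card_subtype]
    rw [← Finset.sum_filter]
    rw [Finset.sum_const, nsmul_eq_mul, mul_comm]
    obtain ⟨p, p', hpp⟩ := (hP h).1 (by simpa using hh)
    rw [Sh_act σ τ ρ ω h0 h p p' hpp]
  rw [Finset.sum_congr rfl h2, Finset.sum_comm]
  have h3 : ∀ z : PB F k a × PB F t b, (∑ h ∈ Finset.univ.filter P,
      if z.1.mat * h0.m = h.m * z.2.mat then Sh σ τ ρ ω h0 else 0) = Sh σ τ ρ ω h0 := by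
    intro z
    have hm : z.2.mat * z.2⁻¹.mat = 1 := by rw [← PB.mat_mul, mul_inv_cancel, PB.mat_one]
    have hm' : z.2⁻¹.mat * z.2.mat = 1 := by rw [← PB.mat_mul, inv_mul_cancel, PB.mat_one]
    have hn : z.1.mat * z.1⁻¹.mat = 1 := by rw [← PB.mat_mul, mul_inv_cancel, PB.mat_one]
    have hn' : z.1⁻¹.mat * z.1.mat = 1 := by rw [← PB.mat_mul, inv_mul_cancel, PB.mat_one]
    let h : MI F (k ⊕ a) (t ⊕ b) := ⟨z.1.mat * h0.m * z.2⁻¹.mat, z.2.mat * h0.i * z.1⁻¹.mat, by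
      rw [show z.1.mat * h0.m * z.2⁻¹.mat * (z.2.mat * h0.i * z.1⁻¹.mat) = 
        z.1.mat * (h0.m * (z.2⁻¹.mat * z.2.mat) * h0.i) * z.1⁻¹.mat by simp only [Matrix.mul_assoc], hm', Matrix.mul_one, h0.mi, Matrix.mul_one, hn], by
      rw [show (z.2.mat * h0.i * z.1⁻¹.mat) * (z.1.mat * h0.m * z.2⁻¹.mat) = 
        z.2.mat * (h0.i * (z.1⁻¹.mat * z.1.mat) * h0.m) * z.2⁻¹.mat by simp only [Matrix.mul_assoc], hn', Matrix.mul_one, h0.im, Matrix.mul_one, hm]⟩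
    have hh : z.1.mat * h0.m = h.m * z.2.mat := by
      change _ = z.1.mat * h0.m * z.2⁻¹.mat * z.2.mat
      rw [Matrix.mul_assoc _ z.2⁻¹.mat, hm', Matrix.mul_one]
    rw [Finset.sum_eq_single h]
    · rw [if_pos hh]
    · intro h' _ hne
      rw [if_neg]
      intro he
      apply hne
      apply MI.ext'
      change _ = z.1.mat * h0.m * z.2⁻¹.mat
      rw [he, Matrix.mul_assoc, hm, Matrix.mul_one]
    · intro hn
      exact absurd (by simpa using (hP h).2 ⟨_, _, hh⟩) hn
  simp only [h3, Finset.sum_const, Finset.card_univ, ← Nat.card_eq_fintype_card, Nat.card_prod, nsmul_eq_mul]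
  push_cast; ring

/-- the long double coset representative -/
def MI.swap (F : Type) [Field F] (k t c : Type) [Fintype k] [DecidableEq k] [Fintype t] [DecidableEq t] [Fintype c] [DecidableEq c] :
    MI F (k ⊕ (t ⊕ c)) (t ⊕ (k ⊕ c)) where
  m := fromBlocks 0 (fromCols 1 0) (fromRows 1 0) (fromBlocks 0 0 0 1)
  i := fromBlocks 0 (fromCols 1 0) (fromRows 1 0) (fromBlocks 0 0 0 1)
  mi := by
    ext i j
    rcases i with i | i | i <;> rcases j with j | j | j <;> simp [Matrix.mul_apply, Matrix.one_apply]
  im := by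
    ext i j
    rcases i with i | i | i <;> rcases j with j | j | j <;> simp [Matrix.mul_apply, Matrix.one_apply]

lemma aux_LU (A A' : Matrix t t F) (V : Matrix t b F) (C C' : Matrix b b F) (H U : Matrix b t F)
    (h1 : A * A' = 1) (h2 : C' * C = 1) (h3 : V * U = 1) (h4 : C * U = H * A) : A * V * C' * H = 1 := by
  calc A * V * C' * H = A * V * C' * (H * A) * A' := by
        rw [Matrix.mul_assoc _ _ A', Matrix.mul_assoc _ _ A', h1, Matrix.mul_one]
    _ = A * (V * (C' * C) * U) * A' := by rw [← h4]; simp only [Matrix.mul_assoc]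
    _ = 1 := by rw [h2, Matrix.mul_one, h3, Matrix.mul_one, h1]

lemma swap_orbit (h : MI F (k ⊕ (t ⊕ c)) (t ⊕ (k ⊕ c))) :
    (∃ L : Matrix t (t ⊕ c) F, L * h.m.toBlocks₂₁ = 1) ↔
    ∃ (p : PB F k (t ⊕ c)) (p' : PB F t (k ⊕ c)), p.mat * (MI.swap F k t c).m = h.m * p'.mat := by
  constructor
  · rintro ⟨L, hL⟩
    set f := Matrix.toLin' L
    have hf : Function.Surjective f := by
      intro v
      refine ⟨h.m.toBlocks₂₁ *ᵥ v, ?_⟩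
      simp [f, hL]
    have hker : Module.finrank F (LinearMap.ker f) = Fintype.card c := by
      have := LinearMap.finrank_range_add_finrank_ker f
      rw [LinearMap.range_eq_top.2 hf, finrank_top] at this
      simp at this
      omega
    let e : (c → F) ≃ₗ[F] LinearMap.ker f := LinearEquiv.ofFinrankEq _ _ (by rw [hker]; simp)
    let S : Matrix (t ⊕ c) c F := LinearMap.toMatrix' ((LinearMap.ker f).subtype ∘ₗ e.toLinearMap)
    have hS : ∀ w, S *ᵥ w = (e w).1 := by
      intro w
      rw [← Matrix.toLin'_apply]
      simp [S]
    have hβ : IsUnit (fromCols h.m.toBlocks₂₁ S) := by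
      rw [← Matrix.mulVec_injective_iff_isUnit]
      rw [← Matrix.coe_mulVecLin, injective_iff_map_eq_zero]
      intro v hv
      rw [Matrix.mulVecLin_apply, fromCols_mulVec] at hv
      have h1 : v ∘ Sum.inl = 0 := by
        have := congrArg (fun z => L *ᵥ z) hv
        simp only [Matrix.mulVec_add, Matrix.mulVec_mulVec, Matrix.mulVec_zero, hL, Matrix.one_mulVec] at this
        rw [← Matrix.mulVec_mulVec, hS] at this
        have h2 : L *ᵥ (e (v ∘ Sum.inr)).1 = 0 := (e (v ∘ Sum.inr)).2
        rwa [h2, add_zero] at this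
      rw [h1, Matrix.mulVec_zero, zero_add, hS] at hv
      have h3 : v ∘ Sum.inr = 0 := by
        have : e (v ∘ Sum.inr) = 0 := Subtype.ext hv
        simpa using this
      funext j
      rcases j with j | j
      · exact congrFun h1 j
      · exact congrFun h3 j
    let p : PB F k (t ⊕ c) := ⟨1, fromCols h.m.toBlocks₁₁ 0, hβ.unit⟩
    have hm : h.m = fromBlocks h.m.toBlocks₁₁ h.m.toBlocks₁₂ h.m.toBlocks₂₁ h.m.toBlocks₂₂ := (fromBlocks_toBlocks h.m).symm
    let E : Matrix (t ⊕ (k ⊕ c)) t F := fromRows 1 0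
    have hE : p.mat * (MI.swap F k t c).m * E = h.m * E := by
      have q1 : (MI.swap F k t c).m * E = fromRows 0 (fromRows 1 0) := by
        simp [MI.swap, E, fromBlocks_mul_fromRows]
      rw [Matrix.mul_assoc, q1]
      conv_rhs => rw [hm]
      simp [p, PB.mat, E, fromBlocks_mul_fromRows, fromCols_mul_fromRows]
    have hE2 : (h.i * (p.mat * (MI.swap F k t c).m)) * E = E := by
      rw [Matrix.mul_assoc, hE, ← Matrix.mul_assoc, h.im, Matrix.one_mul]
    obtain ⟨p', hp'⟩ := exists_pb (h.i * (p.mat * (MI.swap F k t c).m)) (by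
      refine ⟨⟨_, (MI.swap F k t c).i * p⁻¹.mat * h.m, ?_, ?_⟩, rfl⟩
      · rw [show h.i * (p.mat * (MI.swap F k t c).m) * ((MI.swap F k t c).i * p⁻¹.mat * h.m) =
          h.i * (p.mat * ((MI.swap F k t c).m * (MI.swap F k t c).i) * p⁻¹.mat) * h.m by simp only [Matrix.mul_assoc],
          (MI.swap F k t c).mi, Matrix.mul_one, ← PB.mat_mul, mul_inv_cancel, PB.mat_one, Matrix.mul_one, h.im]
      · rw [show ((MI.swap F k t c).i * p⁻¹.mat * h.m) * (h.i * (p.mat * (MI.swap F k t c).m)) =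
          (MI.swap F k t c).i * (p⁻¹.mat * (h.m * h.i) * p.mat) * (MI.swap F k t c).m by simp only [Matrix.mul_assoc],
          h.mi, Matrix.mul_one, ← PB.mat_mul, inv_mul_cancel, PB.mat_one, Matrix.mul_one, (MI.swap F k t c).im]) (by
      rw [← fromBlocks_toBlocks (h.i * (p.mat * (MI.swap F k t c).m))] at hE2
      simp only [E, fromBlocks_mul_fromRows, Matrix.mul_one, Matrix.mul_zero, add_zero] at hE2
      exact (fromRows_inj.eq_iff.1 hE2).2)
    refine ⟨p, p', ?_⟩
    rw [hp', ← Matrix.mul_assoc, h.mi, Matrix.one_mul]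
  · rintro ⟨p, p', hpp⟩
    obtain ⟨V, hV⟩ : ∃ V : Matrix t (t ⊕ c) F, V * (fromRows 1 0 : Matrix (t ⊕ c) t F) = 1 :=
      ⟨fromCols 1 0, by rw [fromCols_mul_fromRows]; simp⟩
    refine ⟨(p'.A.1 * V : Matrix t (t ⊕ c) F) * (p.C⁻¹).1, ?_⟩
    have hm : h.m = fromBlocks h.m.toBlocks₁₁ h.m.toBlocks₁₂ h.m.toBlocks₂₁ h.m.toBlocks₂₂ := (fromBlocks_toBlocks h.m).symm
    rw [hm] at hpp
    simp only [PB.mat, MI.swap, fromBlocks_multiply, Matrix.mul_zero, add_zero, zero_add, Matrix.zero_mul] at hpp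
    have h21 := (fromBlocks_inj.1 hpp).2.2.1
    have e1 : p'.A.1 * (p'.A⁻¹).1 = 1 := by rw [← Units.val_mul]; simp
    have e2 : (p.C⁻¹).1 * p.C.1 = 1 := by rw [← Units.val_mul]; simp
    exact aux_LU _ _ V _ _ _ _ e1 e2 hV h21

end Mackey3

section Mackey4
open scoped Classical
set_option linter.unusedSectionVars false

variable {F : Type} [Field F] [Fintype F]
variable {k a t b c : Type} [Fintype k] [DecidableEq k] [Fintype a] [DecidableEq a]
  [Fintype t] [DecidableEq t] [Fintype b] [DecidableEq b] [Fintype c] [DecidableEq c]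

lemma swap_stab (A : Matrix k k F) (B1 : Matrix k t F) (B2 : Matrix k c F) (C11 : Matrix t t F)
    (C12 : Matrix t c F) (C21 : Matrix c t F) (C22 : Matrix c c F)
    (A' : Matrix t t F) (B1' : Matrix t k F) (B2' : Matrix t c F) (C11' : Matrix k k F)
    (C12' : Matrix k c F) (C21' : Matrix c k F) (C22' : Matrix c c F) :
    fromBlocks A (fromCols B1 B2) 0 (fromBlocks C11 C12 C21 C22) * (MI.swap F k t c).m =
     (MI.swap F k t c).m * fromBlocks A' (fromCols B1' B2') 0 (fromBlocks C11' C12' C21' C22') ↔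
    B1 = 0 ∧ (A = C11' ∧ B2 = C12') ∧ (C11 = A' ∧ C21 = 0) ∧ (0 = B1' ∧ C12 = B2' ∧ 0 = C21' ∧ C22 = C22') := by
  have h1 : fromBlocks A (fromCols B1 B2) 0 (fromBlocks C11 C12 C21 C22) * (MI.swap F k t c).m =
      fromBlocks B1 (fromCols A B2) (fromRows C11 C21) (fromBlocks 0 C12 0 C22) := by
    ext i j
    rcases i with i | i | i <;> rcases j with j | j | j <;> simp [MI.swap, Matrix.mul_apply, Matrix.one_apply]
  have h2 : (MI.swap F k t c).m * fromBlocks A' (fromCols B1' B2') 0 (fromBlocks C11' C12' C21' C22') =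
      fromBlocks 0 (fromCols C11' C12') (fromRows A' 0) (fromBlocks B1' B2' C21' C22') := by
    ext i j
    rcases i with i | i | i <;> rcases j with j | j | j <;> simp [MI.swap, Matrix.mul_apply, Matrix.one_apply]
  rw [h1, h2, fromBlocks_inj, fromCols_inj.eq_iff, fromRows_inj.eq_iff, fromBlocks_inj]

/-- parametrisation of the stabilizer -/
noncomputable def stabMap (z : PB F k c × GL t F × Matrix t c F) : 
    {z : PB F k (t ⊕ c) × PB F t (k ⊕ c) // z.1.mat * (MI.swap F k t c).m = (MI.swap F k t c).m * z.2.mat} :=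
  ⟨(⟨z.1.A, fromCols 0 z.1.B, PB.gl ⟨z.2.1, z.2.2, z.1.C⟩⟩, ⟨z.2.1, fromCols 0 z.2.2, PB.gl z.1⟩),
   (swap_stab _ _ _ _ _ _ _ _ _ _ _ _ _ _).2 (by simp)⟩

lemma stabMap_bij : Function.Bijective (stabMap (F := F) (k := k) (t := t) (c := c)) := by
  constructor
  · rintro ⟨p, A, B⟩ ⟨p', A', B'⟩ h
    have h1 := congrArg (fun z => z.1.2) h
    simp only [stabMap, PB.mk.injEq] at h1
    obtain ⟨h2, h3, h4⟩ := h1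
    have h5 := (fromCols_inj.eq_iff.1 h3).2
    have h6 : p = p' := PB.mat_inj (congrArg Units.val h4)
    rw [h2, h5, h6]
  · rintro ⟨⟨x, y⟩, h⟩
    have h' := h
    simp only [PB.mat] at h
    rw [← fromCols_toCols x.B, ← fromCols_toCols y.B, ← fromBlocks_toBlocks x.C.1, ← fromBlocks_toBlocks y.C.1,
      swap_stab] at h
    obtain ⟨h1, ⟨h2, h3⟩, ⟨h4, h5⟩, h6, h7, h8, h9⟩ := h
    obtain ⟨p, hp⟩ := exists_pb y.C.1 ⟨y.C, rfl⟩ h8.symm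
    refine ⟨(p, y.A, toCols₂ y.B), ?_⟩
    have hp' := hp
    rw [← fromBlocks_toBlocks y.C.1, PB.mat, fromBlocks_inj] at hp'
    apply Subtype.ext
    simp only [stabMap]
    refine Prod.ext ?_ ?_
    · simp only
      ext1
      · apply Units.ext; rw [hp'.1, h2]
      · rw [← fromCols_toCols x.B, h1, hp'.2.1, h3]
      · apply Units.ext
        rw [← fromBlocks_toBlocks x.C.1, h4, h5, h7, h9]
        change fromBlocks _ _ _ _ = _
        rw [hp'.2.2.2]
    · simp only
      ext1
      · rfl
      · dsimp only
        conv_rhs => rw [← fromCols_toCols y.B, ← h6]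
      · exact Units.ext hp

lemma Sh_swap (σ τ ρ ω : Ch F) : Sh σ τ ρ ω (MI.swap F k t c) =
    ∑ p : PB F k c, ∑ A : GL t F, ∑ B : Matrix t c F,
      (ev σ p.A.1 * ev τ (PB.mk A B p.C).mat) * (ev ρ (A⁻¹).1 * ev ω (p⁻¹).mat) := by
  rw [Sh]
  have : ∑ p : PB F k c, ∑ A : GL t F, ∑ B : Matrix t c F,
      (ev σ p.A.1 * ev τ (PB.mk A B p.C).mat) * (ev ρ (A⁻¹).1 * ev ω (p⁻¹).mat) = 
      ∑ z : PB F k c × GL t F × Matrix t c F, (ev σ z.1.A.1 * ev τ (PB.mk z.2.1 z.2.2 z.1.C).mat) * 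
        (ev ρ (z.2.1⁻¹).1 * ev ω (z.1⁻¹).mat) := by
    simp only [Fintype.sum_prod_type]
  rw [this, ← Fintype.sum_prod_type', ← Finset.sum_filter]
  rw [← Finset.sum_subtype_of_mem (p := fun z : PB F k (t ⊕ c) × PB F t (k ⊕ c) => z.1.mat * (MI.swap F k t c).m = (MI.swap F k t c).m * z.2.mat) _ (by simp)]
  rw [show Finset.subtype (fun z : PB F k (t ⊕ c) × PB F t (k ⊕ c) => z.1.mat * (MI.swap F k t c).m = (MI.swap F k t c).m * z.2.mat)
     (Finset.univ.filter fun z : PB F k (t ⊕ c) × PB F t (k ⊕ c) => z.1.mat * (MI.swap F k t c).m = (MI.swap F k t c).m * z.2.mat) = Finset.univ by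
       ext z; simp [z.2]]
  symm
  refine Fintype.sum_bijective stabMap stabMap_bij _ _ ?_
  rintro ⟨p, A, B⟩
  simp only [stabMap, PB.gl_val, PB.gl_inv_val]

lemma kappa_sum (σ τ ρ ω : Ch F) :
    ∑ κ ∈ lvl F (Fintype.card c), pbSum F t c ρ κ τ * pbSum F k c σ κ ω =
      Nat.card (GL c F) * Sh σ τ ρ ω (MI.swap F k t c) := by
  have hcard : Nat.card (MI F c c) = Nat.card (GL c F) := 
    Nat.card_congr ⟨fun h => ⟨h.m, h.i, h.mi, h.im⟩, fun u => MI.ofGL u, fun _ => rfl, fun _ => Units.ext rfl⟩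
  have h1 : ∀ κ ∈ lvl F (Fintype.card c), pbSum F t c ρ κ τ * pbSum F k c σ κ ω = 
      ∑ p : PB F k c, ∑ p' : PB F t c, (ev σ p.A.1 * ev τ p'.mat * (ev ρ (p'.A⁻¹).1 * ev ω (p⁻¹).mat)) *
       (ev κ p.C.1 * ev κ (p'.C⁻¹).1) := by
    intro κ _
    rw [pbSum_inv σ κ ω, pbSum, Finset.sum_mul_sum, Finset.sum_comm]
    refine Finset.sum_congr rfl fun p _ => Finset.sum_congr rfl fun p' _ => by ring
  rw [Finset.sum_congr rfl h1, Finset.sum_comm]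
  have h2 : ∀ p : PB F k c, ∑ κ ∈ lvl F (Fintype.card c), ∑ p' : PB F t c, (ev σ p.A.1 * ev τ p'.mat * (ev ρ (p'.A⁻¹).1 * ev ω (p⁻¹).mat)) *
       (ev κ p.C.1 * ev κ (p'.C⁻¹).1) = ∑ h : MI F c c, ∑ A : GL t F, ∑ B : Matrix t c F,
      (ev σ p.A.1 * ev τ (PB.mk A B p.C).mat) * (ev ρ (A⁻¹).1 * ev ω (p⁻¹).mat) := by
    intro p
    rw [Finset.sum_comm]
    have h3 : ∀ p' : PB F t c, ∑ κ ∈ lvl F (Fintype.card c), (ev σ p.A.1 * ev τ p'.mat * (ev ρ (p'.A⁻¹).1 * ev ω (p⁻¹).mat)) *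
       (ev κ p.C.1 * ev κ (p'.C⁻¹).1) = ∑ h : MI F c c, if p.C.1 * h.m = h.m * p'.C.1 then 
         (ev σ p.A.1 * ev τ p'.mat * (ev ρ (p'.A⁻¹).1 * ev ω (p⁻¹).mat)) else 0 := by
      intro p'
      rw [← Finset.mul_sum, ev_col rfl rfl, ← Finset.sum_filter, Finset.sum_const, nsmul_eq_mul, mul_comm,
        Nat.card_eq_fintype_card, Fintype.card_subtype]
    simp only [h3]
    rw [Finset.sum_comm]
    refine Finset.sum_congr rfl fun h _ => ?_
    rw [sum_PB (fun A B C => if p.C.1 * h.m = h.m * C.1 then 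
         (ev σ p.A.1 * ev τ (PB.mk A B C).mat * (ev ρ (A⁻¹).1 * ev ω (p⁻¹).mat)) else 0)]
    refine Finset.sum_congr rfl fun A _ => ?_
    let u : GL c F := ⟨h.m, h.i, h.mi, h.im⟩
    have h4 : ∀ C : GL c F, p.C.1 * h.m = h.m * C.1 ↔ C = u⁻¹ * p.C * u := by
      intro C
      constructor
      · intro h
        have : p.C * u = u * C := Units.ext h
        rw [mul_assoc, this]; simp
      · rintro rfl
        have : p.C * u = u * (u⁻¹ * p.C * u) := by group
        exact congrArg Units.val this
    simp only [h4, Finset.sum_ite_eq', Finset.mem_univ, if_true]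
    refine Fintype.sum_equiv ⟨fun B => B * h.i, fun B => B * h.m, fun B => ?_, fun B => ?_⟩ _ _ fun B => ?_
    · dsimp only; rw [Matrix.mul_assoc, h.im, Matrix.mul_one]
    · dsimp only; rw [Matrix.mul_assoc, h.mi, Matrix.mul_one]
    · dsimp only [Equiv.coe_fn_mk]
      congr 2
      rw [← ev_conj_sq τ (fromBlocks 1 0 0 h.m) (fromBlocks 1 0 0 h.i) _ (by simp [fromBlocks_multiply, h.mi])]
      simp only [PB.mat, fromBlocks_multiply]
      have : h.m * (u⁻¹ * p.C * u).1 * h.i = p.C.1 := by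
        have : u * (u⁻¹ * p.C * u) * u⁻¹ = p.C := by group
        exact congrArg Units.val this
      simp only [Matrix.one_mul, Matrix.zero_mul, Matrix.mul_zero, add_zero, zero_add, Matrix.mul_one, this]
  simp only [h2]
  rw [Finset.sum_comm, Finset.sum_const, Finset.card_univ, ← Nat.card_eq_fintype_card, hcard, nsmul_eq_mul, Sh_swap]

lemma sum_inj (σ τ ρ ω : Ch F) (hk : Fintype.card k = σ.1) (ht : Fintype.card t = ρ.1) 
    (hτ : τ.1 = Fintype.card t + Fintype.card c) (hω : ω.1 = Fintype.card k + Fintype.card c) :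
    ∑ h ∈ Finset.univ.filter (fun h : MI F (k ⊕ (t ⊕ c)) (t ⊕ (k ⊕ c)) => ∃ L : Matrix t (t ⊕ c) F, L * h.m.toBlocks₂₁ = 1),
      Sh σ τ ρ ω h = (Nat.card (PB F k (t ⊕ c)) : ℂ) * Nat.card (PB F t (k ⊕ c)) *
        ∑ κ ∈ lvl F (Fintype.card c), (mm ρ κ τ : ℂ) * mm σ κ ω := by
  have h1 := orbit_sum σ τ ρ ω (MI.swap F k t c) (fun h : MI F (k ⊕ (t ⊕ c)) (t ⊕ (k ⊕ c)) => ∃ L : Matrix t (t ⊕ c) F, L * h.m.toBlocks₂₁ = 1) swap_orbit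
  have h2 := kappa_sum (k := k) (t := t) (c := c) σ τ ρ ω
  have h3 : ∑ κ ∈ lvl F (Fintype.card c), pbSum F t c ρ κ τ * pbSum F k c σ κ ω = 
     (Nat.card (PB F t c) : ℂ) * Nat.card (PB F k c) * ∑ κ ∈ lvl F (Fintype.card c), (mm ρ κ τ : ℂ) * mm σ κ ω := by
    rw [Finset.mul_sum]
    refine Finset.sum_congr rfl fun κ hκ => ?_
    rw [mem_lvl] at hκ
    rw [pbSum_eq ρ κ τ ht hκ.symm, pbSum_eq σ κ ω hk hκ.symm]; ring
  rw [h3] at h2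
  rw [← Nat.card_congr (Equiv.ofBijective _ stabMap_bij), Nat.card_prod, Nat.card_prod] at h1
  have h4 : (Nat.card (PB F t c) : ℂ) = Nat.card (GL t F) * (Nat.card (Matrix t c F) * Nat.card (GL c F)) := by
    exact_mod_cast PB.card_eq
  have c1 := PB.card_ne (F := F) (ι := t) (κ := c)
  have c2 := PB.card_ne (F := F) (ι := k) (κ := c)
  apply mul_right_cancel₀ (mul_ne_zero c1 c2)
  push_cast at h1
  rw [h4]
  linear_combination (Nat.card (GL c F) : ℂ) * h1 - (Nat.card (PB F k (t ⊕ c)) : ℂ) * Nat.card (PB F t (k ⊕ c)) * (h2 - (Nat.card (PB F k c) : ℂ) * (∑ κ ∈ lvl F (Fintype.card c), (mm ρ κ τ : ℂ) * mm σ κ ω) * h4)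

end Mackey4

section Mackey5
open scoped Classical
set_option linter.unusedSectionVars false

variable {F : Type} [Field F] [Fintype F]
variable {k a t b c : Type} [Fintype k] [DecidableEq k] [Fintype a] [DecidableEq a]
  [Fintype t] [DecidableEq t] [Fintype b] [DecidableEq b] [Fintype c] [DecidableEq c]

lemma Sh_split_lt (σ τ ρ ω : Ch F) (hσ : Cusp σ) (hk : Fintype.card k = σ.1) 
    (htk : Fintype.card t < Fintype.card k) :
    ∑ h : MI F (k ⊕ a) (t ⊕ b), Sh σ τ ρ ω h = 
     ∑ h ∈ Finset.univ.filter (fun h : MI F (k ⊕ a) (t ⊕ b) => ∃ L : Matrix t a F, L * h.m.toBlocks₂₁ = 1), Sh σ τ ρ ω h := by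
  symm
  apply Finset.sum_filter_of_ne
  intro h _ hne
  rcases Sh_class σ τ ρ ω hσ hk htk.le h with h1 | h1 | h1
  · exact h1
  · omega
  · exact absurd h1 hne

lemma Sh_split_eq (σ τ ρ ω : Ch F) (hσ : Cusp σ) (hk : Fintype.card k = σ.1) (ha : Fintype.card a = τ.1)
    (hk' : Fintype.card k = ρ.1) (ha' : Fintype.card a = ω.1) :
    ∑ h : MI F (k ⊕ a) (k ⊕ a), Sh σ τ ρ ω h = 
     ∑ h ∈ Finset.univ.filter (fun h : MI F (k ⊕ a) (k ⊕ a) => ∃ L : Matrix k a F, L * h.m.toBlocks₂₁ = 1), Sh σ τ ρ ω h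
      + if σ = ρ ∧ τ = ω then (Nat.card (PB F k a) : ℂ) * Nat.card (PB F k a) else 0 := by
  rw [← sum_h21_zero σ τ ρ ω hk ha hk' ha', ← Finset.sum_filter_add_sum_filter_not Finset.univ 
    (fun h : MI F (k ⊕ a) (k ⊕ a) => ∃ L : Matrix k a F, L * h.m.toBlocks₂₁ = 1)]
  congr 1
  symm
  apply Finset.sum_subset_zero_on_sdiff
  · intro h hh
    simp only [Finset.mem_filter, Finset.mem_univ, true_and] at hh ⊢
    rintro ⟨L, hL⟩
    rw [hh, Matrix.mul_zero] at hL
    have := hσ.1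
    have : Nonempty k := Fintype.card_pos_iff.1 (by omega)
    exact zero_ne_one hL
  · intro h hh
    simp only [Finset.mem_sdiff, Finset.mem_filter, Finset.mem_univ, true_and] at hh
    rcases Sh_class σ τ ρ ω hσ hk le_rfl h with h1 | h1 | h1
    · exact absurd h1 hh.1
    · exact absurd h1.1 hh.2
    · exact h1
  · intros; rfl

lemma no_inj (h : Fintype.card a < Fintype.card t) (M : Matrix a t F) : ¬ ∃ L : Matrix t a F, L * M = 1 := by
  rintro ⟨L, hL⟩
  have : Fintype.card t ≤ Fintype.card a := by
    calc Fintype.card t = (1 : Matrix t t F).rank := by rw [Matrix.rank_one]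
          _ ≤ _ := by rw [← hL]; exact Matrix.rank_mul_le_right _ _
          _ ≤ _ := Matrix.rank_le_card_height _
  omega

lemma mackey_pb (σ τ ρ ω : Ch F) {n : ℕ} (hk : Fintype.card k = σ.1) (ha : Fintype.card a = τ.1)
    (ht : Fintype.card t = ρ.1) (hb : Fintype.card b = ω.1) (h1 : n = σ.1 + τ.1) (h2 : n = ρ.1 + ω.1) :
    (Nat.card (PB F k a) : ℂ) * Nat.card (PB F t b) * ∑ χ ∈ lvl F n, (mm σ τ χ : ℂ) * mm ρ ω χ = 
      ∑ h : MI F (k ⊕ a) (t ⊕ b), Sh σ τ ρ ω h := by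
  rw [← mackey_lhs σ τ ρ ω (n := n) (by simp; omega) (by simp; omega), Finset.mul_sum]
  refine Finset.sum_congr rfl fun χ _ => ?_
  rw [pbSum_eq σ τ χ hk ha, pbSum_eq ρ ω χ ht hb]; ring

theorem mackey (σ τ ρ ω : Ch F) (hσ : Cusp σ) (hle : ρ.1 ≤ σ.1) {n : ℕ} (hn : n = σ.1 + τ.1) :
    ∑ χ ∈ lvl F n, mm σ τ χ * mm ρ ω χ = (if σ = ρ ∧ τ = ω then 1 else 0) + 
      ∑ κ ∈ lvl F (τ.1 - ρ.1), mm ρ κ τ * mm σ κ ω := by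
  by_cases hdeg : n = ρ.1 + ω.1
  swap
  · rw [Finset.sum_eq_zero (s := lvl F n), Finset.sum_eq_zero, if_neg]
    · rfl
    · rintro ⟨rfl, rfl⟩; exact hdeg hn
    · intro κ _
      by_contra hne
      have h1 := mm_deg (left_ne_zero_of_mul hne)
      have h2 := mm_deg (right_ne_zero_of_mul hne)
      omega
    · intro χ hχ
      rw [mem_lvl] at hχ
      by_contra hne
      have h2 := mm_deg (right_ne_zero_of_mul hne)
      omega
  suffices h : (∑ χ ∈ lvl F n, (mm σ τ χ : ℂ) * mm ρ ω χ) = (if σ = ρ ∧ τ = ω then 1 else 0) + 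
      ∑ κ ∈ lvl F (τ.1 - ρ.1), (mm ρ κ τ : ℂ) * mm σ κ ω by
    exact_mod_cast h
  by_cases hτ : ρ.1 ≤ τ.1
  · by_cases hlt : ρ.1 < σ.1
    · have h1 := mackey_pb (k := Fin σ.1) (a := Fin ρ.1 ⊕ Fin (τ.1 - ρ.1)) (t := Fin ρ.1) (b := Fin σ.1 ⊕ Fin (τ.1 - ρ.1)) σ τ ρ ω
        (n := n) (by simp) (by simp; omega) (by simp) (by simp; omega) hn hdeg
      rw [Sh_split_lt σ τ ρ ω hσ (by simp) (by simpa using hlt), sum_inj σ τ ρ ω (by simp) (by simp) (by simp; omega) (by simp; omega)] at h1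
      have h2 := mul_left_cancel₀ (mul_ne_zero PB.card_ne PB.card_ne) h1
      rw [h2, if_neg (by rintro ⟨rfl, rfl⟩; omega)]
      simp
    · have h1 := mackey_pb (k := Fin σ.1) (a := Fin σ.1 ⊕ Fin (τ.1 - ρ.1)) (t := Fin σ.1) (b := Fin σ.1 ⊕ Fin (τ.1 - ρ.1)) σ τ ρ ω
        (n := n) (by simp) (by simp; omega) (by simp; omega) (by simp; omega) hn hdeg
      rw [Sh_split_eq σ τ ρ ω hσ (by simp) (by simp; omega) (by simp; omega) (by simp; omega), sum_inj σ τ ρ ω (by simp) (by simp; omega) (by simp; omega) (by simp; omega)] at h1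
      apply mul_left_cancel₀ (mul_ne_zero (PB.card_ne (F := F) (ι := Fin σ.1) (κ := Fin σ.1 ⊕ Fin (τ.1 - ρ.1))) (PB.card_ne (F := F) (ι := Fin σ.1) (κ := Fin σ.1 ⊕ Fin (τ.1 - ρ.1))))
      rw [h1, Fintype.card_fin]
      split_ifs <;> ring
  · rw [Finset.sum_eq_zero (s := lvl F (τ.1 - ρ.1)), add_zero]
    swap
    · intro κ _
      by_contra hne
      have h1 := mm_deg (σ := ρ) (τ := κ) (χ := τ) (fun h => hne (by simp [h]))
      omega
    by_cases hlt : ρ.1 < σ.1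
    · have h1 := mackey_pb (k := Fin σ.1) (a := Fin τ.1) (t := Fin ρ.1) (b := Fin ω.1) σ τ ρ ω
        (n := n) (by simp) (by simp) (by simp) (by simp) hn hdeg
      rw [Sh_split_lt σ τ ρ ω hσ (by simp) (by simpa using hlt), Finset.sum_eq_zero (s := Finset.filter _ _)] at h1
      · have h2 := (mul_eq_zero.1 h1).resolve_left (mul_ne_zero PB.card_ne PB.card_ne)
        rw [h2, if_neg (by rintro ⟨rfl, rfl⟩; omega)]
      · intro h hh
        exact absurd (Finset.mem_filter.1 hh).2 (no_inj (by simp; omega) _)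
    · have h1 := mackey_pb (k := Fin σ.1) (a := Fin τ.1) (t := Fin σ.1) (b := Fin τ.1) σ τ ρ ω
        (n := n) (by simp) (by simp) (by simp; omega) (by simp; omega) hn hdeg
      rw [Sh_split_eq σ τ ρ ω hσ (by simp) (by simp) (by simp; omega) (by simp; omega), Finset.sum_eq_zero (s := Finset.filter _ _), zero_add] at h1
      · apply mul_left_cancel₀ (mul_ne_zero (PB.card_ne (F := F) (ι := Fin σ.1) (κ := Fin τ.1)) (PB.card_ne (F := F) (ι := Fin σ.1) (κ := Fin τ.1)))
        rw [h1]
        split_ifs <;> ring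
      · intro h hh
        exact absurd (Finset.mem_filter.1 hh).2 (no_inj (by simp; omega) _)

end Mackey5

section Exist
open scoped Classical
set_option linter.unusedSectionVars false

variable {F : Type} [Field F] [Fintype F]
variable {ι κ : Type} [Fintype ι] [DecidableEq ι] [Fintype κ] [DecidableEq κ]

lemma GL_card_MI : Nat.card (MI F ι ι) = Nat.card (GL ι F) := 
    Nat.card_congr ⟨fun h => ⟨h.m, h.i, h.mi, h.im⟩, fun u => MI.ofGL u, fun _ => rfl, fun _ => Units.ext rfl⟩

/-- to GL -/
def MI.toGL (h : MI F ι ι) : GL ι F := ⟨h.m, h.i, h.mi, h.im⟩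

lemma conj_GL_iff (A A' : GL ι F) (h : MI F ι ι) : A.1 * h.m = h.m * A'.1 ↔ A' = h.toGL⁻¹ * A * h.toGL := by
  constructor
  · intro e
    apply Units.ext
    change _ = h.i * A.1 * h.m
    rw [Matrix.mul_assoc, e, ← Matrix.mul_assoc, h.im, Matrix.one_mul]
  · rintro rfl
    change _ = h.m * (h.i * A.1 * h.m)
    rw [← Matrix.mul_assoc, ← Matrix.mul_assoc, h.mi, Matrix.one_mul]

lemma ev_col_sum {n : ℕ} (hι : Fintype.card ι = n) (A A' : GL ι F) : 
    ∑ ρ ∈ lvl F n, ev ρ A.1 * ev ρ (A'⁻¹).1 = 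
      ∑ h : MI F ι ι, if A' = h.toGL⁻¹ * A * h.toGL then (1 : ℂ) else 0 := by
  rw [ev_col hι hι, ← Finset.sum_filter, Finset.sum_const, nsmul_eq_mul, mul_one,
        Nat.card_eq_fintype_card, Fintype.card_subtype]
  simp only [conj_GL_iff]

/-- Jacquet restriction expansion -/
lemma expand (χ : Ch F) (A : GL ι F) (C : GL κ F) : 
    ∑ B : Matrix ι κ F, ev χ (fromBlocks A.1 B 0 C.1) = 
     Nat.card (Matrix ι κ F) * ∑ ρ ∈ lvl F (Fintype.card ι), ∑ η ∈ lvl F (Fintype.card κ), 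
      (mm ρ η χ : ℂ) * (ev ρ A.1 * ev η C.1) := by
  have h1 : (Nat.card (PB F ι κ) : ℂ) * ∑ ρ ∈ lvl F (Fintype.card ι), ∑ η ∈ lvl F (Fintype.card κ), 
      (mm ρ η χ : ℂ) * (ev ρ A.1 * ev η C.1) = Nat.card (GL ι F) * Nat.card (GL κ F) * 
        ∑ B : Matrix ι κ F, ev χ (fromBlocks A.1 B 0 C.1) := by
    have h2 : (Nat.card (PB F ι κ) : ℂ) * ∑ ρ ∈ lvl F (Fintype.card ι), ∑ η ∈ lvl F (Fintype.card κ), 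
      (mm ρ η χ : ℂ) * (ev ρ A.1 * ev η C.1) = ∑ p : PB F ι κ, ev χ p.mat * 
        ((∑ ρ ∈ lvl F (Fintype.card ι), ev ρ A.1 * ev ρ (p.A⁻¹).1) * ∑ η ∈ lvl F (Fintype.card κ), ev η C.1 * ev η (p.C⁻¹).1) := by
      simp only [Finset.sum_mul_sum]
      simp only [Finset.mul_sum]
      conv_rhs => rw [Finset.sum_comm]
      refine Finset.sum_congr rfl fun ρ hρ => ?_
      conv_rhs => rw [Finset.sum_comm]
      refine Finset.sum_congr rfl fun η hη => ?_
      rw [mem_lvl] at hρ hη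
      rw [← mul_assoc, ← pbSum_eq ρ η χ hρ.symm hη.symm, pbSum, Finset.sum_mul]
      refine Finset.sum_congr rfl fun p _ => by ring
    rw [h2]
    simp only [ev_col_sum]
    simp only [Finset.sum_mul_sum]
    simp only [Finset.mul_sum]
    rw [Finset.sum_comm]
    have h3 : ∀ h : MI F ι ι, ∑ p : PB F ι κ, ∑ h' : MI F κ κ, ev χ p.mat * 
        ((if p.A = h.toGL⁻¹ * A * h.toGL then (1 : ℂ) else 0) * 
        (if p.C = h'.toGL⁻¹ * C * h'.toGL then (1 : ℂ) else 0)) =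
        ∑ h' : MI F κ κ, ∑ B : Matrix ι κ F, ev χ (fromBlocks A.1 B 0 C.1) := by
      intro h
      rw [Finset.sum_comm]
      refine Finset.sum_congr rfl fun h' _ => ?_
      rw [sum_PB (fun x y z => ev χ (PB.mk x y z).mat * 
        ((if x = h.toGL⁻¹ * A * h.toGL then (1 : ℂ) else 0) * 
        (if z = h'.toGL⁻¹ * C * h'.toGL then (1 : ℂ) else 0)))]
      simp only [mul_ite, mul_one, mul_zero, ite_mul, one_mul, zero_mul, Finset.sum_ite_eq', Finset.mem_univ, if_true]
      rw [Finset.sum_comm]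
      simp only [Finset.sum_ite_eq', Finset.mem_univ, if_true]
      refine Fintype.sum_equiv ⟨fun B => h.m * B * h'.i, fun B => h.i * B * h'.m, fun B => ?_, fun B => ?_⟩ _ _ fun B => ?_
      · dsimp only
        rw [show h.i * (h.m * B * h'.i) * h'.m = (h.i * h.m) * B * (h'.i * h'.m) by simp only [Matrix.mul_assoc], h.im, h'.im]
        simp
      · dsimp only
        rw [show h.m * (h.i * B * h'.m) * h'.i = (h.m * h.i) * B * (h'.m * h'.i) by simp only [Matrix.mul_assoc], h.mi, h'.mi]
        simp
      · dsimp only [Equiv.coe_fn_mk]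
        rw [← ev_conj_sq χ (fromBlocks h.m 0 0 h'.m) (fromBlocks h.i 0 0 h'.i) _ (by simp [fromBlocks_multiply, h.mi, h'.mi])]
        simp only [PB.mat, fromBlocks_multiply, Units.val_mul]
        simp only [Matrix.one_mul, Matrix.zero_mul, Matrix.mul_zero, add_zero, zero_add, Matrix.mul_one]
        rw [show h.m * ((h.toGL⁻¹).1 * A.1 * h.toGL.1) * h.i = (h.m * h.i) * A.1 * (h.m * h.i) by change h.m * (h.i * A.1 * h.m) * h.i = _; simp only [Matrix.mul_assoc], h.mi, 
         show h'.m * ((h'.toGL⁻¹).1 * C.1 * h'.toGL.1) * h'.i = (h'.m * h'.i) * C.1 * (h'.m * h'.i) by change h'.m * (h'.i * C.1 * h'.m) * h'.i = _; simp only [Matrix.mul_assoc], h'.mi]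
        simp
    simp only [h3]
    simp only [Finset.sum_const, Finset.card_univ, ← Nat.card_eq_fintype_card, GL_card_MI, nsmul_eq_mul]
    simp only [Finset.mul_sum]
    refine Finset.sum_congr rfl fun p _ => by ring
  rw [PB.card_eq] at h1
  have c1 : (Nat.card (GL ι F) : ℂ) ≠ 0 := by exact_mod_cast Nat.card_pos.ne'
  have c2 : (Nat.card (GL κ F) : ℂ) ≠ 0 := by exact_mod_cast Nat.card_pos.ne'
  apply mul_left_cancel₀ (mul_ne_zero c1 c2)
  rw [← h1]; push_cast; ring

lemma coprime_expand (χ : Ch F) (A : GL ι F) (C : GL κ F) (h : ∀ X : Matrix ι κ F, A.1 * X = X * C.1 → X = 0) : 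
    ev χ (fromBlocks A.1 0 0 C.1) = 
     ∑ ρ ∈ lvl F (Fintype.card ι), ∑ η ∈ lvl F (Fintype.card κ), 
      (mm ρ η χ : ℂ) * (ev ρ A.1 * ev η C.1) := by
  have hs : Function.Surjective (fun X : Matrix ι κ F => A.1 * X - X * C.1) := by
    apply Finite.surjective_of_injective
    intro X Y hXY
    rw [← sub_eq_zero]
    apply h
    rw [Matrix.mul_sub, Matrix.sub_mul]
    simp only at hXY
    rw [sub_eq_sub_iff_add_eq_add] at hXY
    rw [sub_eq_sub_iff_add_eq_add, hXY, add_comm]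
  have h1 : ∀ B, ev χ (fromBlocks A.1 B 0 C.1) = ev χ (fromBlocks A.1 0 0 C.1) := by
    intro B
    obtain ⟨X, hX⟩ := hs B
    simp only at hX
    rw [← ev_conj_sq χ (fromBlocks 1 X 0 1) (fromBlocks 1 (-X) 0 1) (fromBlocks A.1 B 0 C.1) (by simp [fromBlocks_multiply])]
    simp only [fromBlocks_multiply]
    simp only [Matrix.one_mul, Matrix.zero_mul, Matrix.mul_zero, add_zero, zero_add, Matrix.mul_one, Matrix.mul_neg]
    rw [← hX]
    rw [neg_zero, zero_add]
    congr 2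
    abel
  have h2 := expand χ A C
  simp only [h1, Finset.sum_const, Finset.card_univ, nsmul_eq_mul] at h2
  rw [← Nat.card_eq_fintype_card (α := Matrix ι κ F)] at h2
  have c1 : (Nat.card (Matrix ι κ F) : ℂ) ≠ 0 := by exact_mod_cast Nat.card_pos.ne'
  exact mul_left_cancel₀ c1 h2

end Exist

section Exist2
open scoped Classical
set_option linter.unusedSectionVars false

variable {F : Type} [Field F] [Fintype F]
variable {ι κ μ : Type} [Fintype ι] [DecidableEq ι] [Fintype κ] [DecidableEq κ] [Fintype μ] [DecidableEq μ]

lemma irr_one {G : Type} [Group G] [Fintype G] (χ : Irr G) : ∃ d : ℕ, 0 < d ∧ χ.1 1 = d := by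
  obtain ⟨V, hV, hχ⟩ := χ.2
  have h1 : χ.1 1 = (Module.finrank ℂ V : ℂ) := by rw [← hχ, FDRep.char_one]
  refine ⟨_, ?_, h1⟩
  by_contra h0
  have h0 : Module.finrank ℂ V = 0 := by omega
  have h2 := irr_orth χ χ
  have : Subsingleton V := Module.finrank_zero_iff.1 h0
  have h3 : ∀ x, χ.1 x = 0 := by
    intro x
    rw [← hχ]
    change LinearMap.trace ℂ V (V.ρ x) = 0
    rw [Subsingleton.elim (V.ρ x) 0, map_zero]
  simp only [h3, zero_mul, Finset.sum_const_zero, if_true] at h2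
  have h4 : Nat.card G ≠ 0 := Nat.card_pos.ne'
  exact h4 (by exact_mod_cast h2.symm)

lemma ev_one (χ : Ch F) (h : Fintype.card ι = χ.1) : ∃ d : ℕ, 0 < d ∧ ev χ (1 : Matrix ι ι F) = d := by
  obtain ⟨d, hd, h1⟩ := irr_one χ.2
  refine ⟨d, hd, ?_⟩
  rw [← h1, show (1 : Matrix ι ι F) = (1 : GL ι F).1 from rfl, ev_eq χ (Fintype.equivFinOfCardEq h), map_one]

/-- degree -/
noncomputable def dg (χ : Ch F) : ℕ := (ev_one (ι := Fin χ.1) χ (by simp)).choose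

lemma dg_pos (χ : Ch F) : 0 < dg χ := (ev_one (ι := Fin χ.1) χ (by simp)).choose_spec.1

lemma ev_one_eq (χ : Ch F) (h : Fintype.card ι = χ.1) : ev χ (1 : Matrix ι ι F) = dg χ := by
  have h1 := (ev_one (ι := Fin χ.1) χ (by simp)).choose_spec.2
  rw [dg, ← h1, ← ev_submatrix χ (Fintype.equivFinOfCardEq h).symm]
  congr 1
  ext i j
  simp [Matrix.one_apply]

lemma expand_one (χ : Ch F) : ∑ B : Matrix ι κ F, ev χ (fromBlocks 1 B 0 1) = 
     Nat.card (Matrix ι κ F) * ∑ ρ ∈ lvl F (Fintype.card ι), ∑ η ∈ lvl F (Fintype.card κ), 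
      (mm ρ η χ : ℂ) * (dg ρ * dg η) := by
  have h := expand χ (1 : GL ι F) (1 : GL κ F)
  simp only [Units.val_one] at h
  rw [h]
  congr 1
  refine Finset.sum_congr rfl fun ρ hρ => Finset.sum_congr rfl fun η hη => ?_
  rw [mem_lvl] at hρ hη
  rw [ev_one_eq ρ hρ.symm, ev_one_eq η hη.symm]

lemma ev_three (χ : Ch F) (X : Matrix ι κ F) (D : Matrix (ι ⊕ κ) μ F) :
    ev χ (fromBlocks (fromBlocks 1 X 0 1) D 0 1) = 
      ev χ (fromBlocks 1 (fromCols X D.toRows₁) 0 (fromBlocks 1 D.toRows₂ 0 1)) := by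
  rw [← ev_submatrix χ (Equiv.sumAssoc ι κ μ)]
  congr 1
  ext i j
  rcases i with (i | i) | i <;> rcases j with (j | j) | j <;> simp [Matrix.one_apply]

lemma mm_trans (α β ρ η χ : Ch F) (h1 : mm α β ρ ≠ 0) (h2 : mm ρ η χ ≠ 0) :
    ∃ α' γ, α'.1 = α.1 ∧ mm α' γ χ ≠ 0 := by
  by_contra! hno
  have d1 := mm_deg h1
  have d2 := mm_deg h2
  have hA : ∑ X : Matrix (Fin α.1) (Fin β.1) F, ∑ D : Matrix (Fin α.1 ⊕ Fin β.1) (Fin η.1) F,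
      ev χ (fromBlocks (fromBlocks 1 X 0 1) D 0 1) = 0 := by
    simp only [ev_three]
    have e1 : ∀ X : Matrix (Fin α.1) (Fin β.1) F, ∑ D : Matrix (Fin α.1 ⊕ Fin β.1) (Fin η.1) F,
       ev χ (fromBlocks 1 (fromCols X D.toRows₁) 0 (fromBlocks 1 D.toRows₂ 0 1)) =
       ∑ z : Matrix (Fin α.1) (Fin η.1) F × Matrix (Fin β.1) (Fin η.1) F, ev χ (fromBlocks 1 (fromCols X z.1) 0 (fromBlocks 1 z.2 0 1)) := by
      intro X
      exact Fintype.sum_equiv ⟨fun D => (D.toRows₁, D.toRows₂), fun z => fromRows z.1 z.2, fun D => by simp, fun z => by simp⟩ _ _ (fun D => rfl)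
    simp only [e1, Fintype.sum_prod_type]
    have e2 : ∀ X : Matrix (Fin α.1) (Fin β.1) F, ∑ Y : Matrix (Fin α.1) (Fin η.1) F, ∑ Z : Matrix (Fin β.1) (Fin η.1) F, ev χ (fromBlocks 1 (fromCols X Y) 0 (fromBlocks 1 Z 0 1))
      = ∑ Z : Matrix (Fin β.1) (Fin η.1) F, ∑ Y : Matrix (Fin α.1) (Fin η.1) F, ev χ (fromBlocks 1 (fromCols X Y) 0 (fromBlocks 1 Z 0 1)) := fun X => Finset.sum_comm
    simp only [e2]
    rw [Finset.sum_comm]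
    apply Finset.sum_eq_zero
    intro Z _
    have e3 : ∑ X : Matrix (Fin α.1) (Fin β.1) F, ∑ Y : Matrix (Fin α.1) (Fin η.1) F, ev χ (fromBlocks 1 (fromCols X Y) 0 (fromBlocks 1 Z 0 1)) = 
       ∑ B : Matrix (Fin α.1) (Fin β.1 ⊕ Fin η.1) F, ev χ (fromBlocks 1 B 0 (fromBlocks 1 Z 0 1)) := by
      rw [← Fintype.sum_prod_type']
      exact Fintype.sum_equiv ⟨fun z => fromCols z.1 z.2, fun D => (D.toCols₁, D.toCols₂), fun z => by simp, fun D => by simp⟩ _ _ (fun D => rfl)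
    rw [e3]
    have e4 := expand χ (1 : GL (Fin α.1) F) (PB.gl ⟨1, Z, 1⟩ : GL (Fin β.1 ⊕ Fin η.1) F)
    simp only [PB.gl_val, PB.mat, Units.val_one] at e4
    rw [e4, Finset.sum_eq_zero, mul_zero]
    intro ρ' hρ'
    apply Finset.sum_eq_zero
    intro η' _
    rw [mem_lvl, Fintype.card_fin] at hρ'
    rw [hno ρ' η' hρ']
    simp
  have hB : ∀ X : Matrix (Fin α.1) (Fin β.1) F, ∑ D : Matrix (Fin α.1 ⊕ Fin β.1) (Fin η.1) F,
      ev χ (fromBlocks (fromBlocks 1 X 0 1) D 0 1) = 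
      (Nat.card (Matrix (Fin α.1 ⊕ Fin β.1) (Fin η.1) F) : ℂ) * ∑ ρ' ∈ lvl F (α.1 + β.1), ∑ η' ∈ lvl F η.1, 
      (mm ρ' η' χ : ℂ) * (ev ρ' (fromBlocks 1 X 0 1) * dg η') := by
    intro X
    have e4 := expand χ (PB.gl ⟨1, X, 1⟩ : GL (Fin α.1 ⊕ Fin β.1) F) (1 : GL (Fin η.1) F) 
    simp only [PB.gl_val, PB.mat, Units.val_one, Fintype.card_sum, Fintype.card_fin] at e4
    rw [e4]
    congr 1
    refine Finset.sum_congr rfl fun ρ hρ => Finset.sum_congr rfl fun η hη => ?_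
    rw [mem_lvl] at hη
    rw [ev_one_eq η (by simp [hη])]
  simp only [hB] at hA
  have hC : (Nat.card (Matrix (Fin α.1 ⊕ Fin β.1) (Fin η.1) F)) * (Nat.card (Matrix (Fin α.1) (Fin β.1) F) * ∑ ρ' ∈ lvl F (α.1 + β.1), ∑ η' ∈ lvl F η.1, 
      (mm ρ' η' χ) * ((∑ α' ∈ lvl F α.1, ∑ β' ∈ lvl F β.1, mm α' β' ρ' * (dg α' * dg β')) * dg η')) = 0 := by
    suffices h : (Nat.card (Matrix (Fin α.1 ⊕ Fin β.1) (Fin η.1) F) : ℂ) * (Nat.card (Matrix (Fin α.1) (Fin β.1) F) * ∑ ρ' ∈ lvl F (α.1 + β.1), ∑ η' ∈ lvl F η.1, 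
      (mm ρ' η' χ : ℂ) * ((∑ α' ∈ lvl F α.1, ∑ β' ∈ lvl F β.1, (mm α' β' ρ' : ℂ) * (dg α' * dg β')) * dg η')) = 0 by
      exact_mod_cast h
    rw [← hA, ← Finset.mul_sum]
    congr 1
    conv_rhs => rw [Finset.sum_comm]
    rw [Finset.mul_sum]
    refine Finset.sum_congr rfl fun ρ hρ => ?_
    conv_rhs => rw [Finset.sum_comm]
    rw [Finset.mul_sum]
    refine Finset.sum_congr rfl fun η hη => ?_
    have := expand_one (ι := Fin α.1) (κ := Fin β.1) ρ
    simp only [Fintype.card_fin] at this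
    rw [← Finset.mul_sum, ← Finset.sum_mul, this]
    ring
  have c1 : Nat.card (Matrix (Fin α.1 ⊕ Fin β.1) (Fin η.1) F) ≠ 0 := Nat.card_pos.ne'
  have c2 : Nat.card (Matrix (Fin α.1) (Fin β.1) F) ≠ 0 := Nat.card_pos.ne'
  have hD := (mul_eq_zero.1 ((mul_eq_zero.1 hC).resolve_left c1)).resolve_left c2
  simp only [Finset.sum_eq_zero_iff, mem_lvl] at hD
  have hE := hD ρ d1 η rfl
  rcases mul_eq_zero.1 hE with h | h
  · exact h2 h
  rcases mul_eq_zero.1 h with h | h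
  swap
  · exact (dg_pos η).ne' h
  simp only [Finset.sum_eq_zero_iff, mem_lvl] at h
  have := h α rfl β rfl
  have q1 := dg_pos α
  have q2 := dg_pos β
  rcases mul_eq_zero.1 this with h | h
  · exact h1 h
  · have := Nat.mul_pos q1 q2; omega

lemma rank_factor (ε : Matrix ι ι F) (hε : ε * ε = ε) : ∃ (s : ℕ) (U : Matrix ι (Fin s) F) (V : Matrix (Fin s) ι F),
    U * V = ε ∧ V * U = 1 := by
  let f := Matrix.toLin' ε
  have hf : ∀ v, f (f v) = f v := by
    intro v
    simp [f, hε]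
  let e : LinearMap.range f ≃ₗ[F] (Fin (Module.finrank F (LinearMap.range f)) → F) := LinearEquiv.ofFinrankEq _ _ (by simp)
  refine ⟨_, LinearMap.toMatrix' ((LinearMap.range f).subtype ∘ₗ e.symm.toLinearMap), LinearMap.toMatrix' (e.toLinearMap ∘ₗ f.rangeRestrict), ?_, ?_⟩
  · rw [← LinearMap.toMatrix'_comp]
    apply Matrix.toLin'.injective
    rw [Matrix.toLin'_toMatrix']
    ext1 v
    ext1
    simp [f]
  · rw [← LinearMap.toMatrix'_comp]
    apply Matrix.toLin'.injective
    rw [Matrix.toLin'_toMatrix', Matrix.toLin'_one]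
    refine LinearMap.ext fun v => ?_
    have : f.rangeRestrict (e.symm v).1 = e.symm v := by
      apply Subtype.ext
      obtain ⟨w, hw⟩ := (e.symm v).2
      change f (e.symm v).1 = (e.symm v).1
      rw [← hw, hf]
    change e (f.rangeRestrict (e.symm v).1) = v
    rw [this]; simp

lemma idem_normal (ε : Matrix ι ι F) (hε : ε * ε = ε) (h0 : ε ≠ 0) (h1 : ε ≠ 1) : ∃ (s s' : ℕ) (a : MI F (Fin s ⊕ Fin s') ι),
    0 < s ∧ 0 < s' ∧ a.m * ε * a.i = fromBlocks 1 0 0 0 := by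
  obtain ⟨s, U, V, hUV, hVU⟩ := rank_factor ε hε
  have hε' : (1 - ε) * (1 - ε) = 1 - ε := by
    rw [Matrix.mul_sub, Matrix.sub_mul, Matrix.sub_mul, hε]; simp
  obtain ⟨s', U', V', hUV', hVU'⟩ := rank_factor (1 - ε) hε'
  have hx : ε * (1 - ε) = 0 := by rw [Matrix.mul_sub, hε]; simp
  have hx' : (1 - ε) * ε = 0 := by rw [Matrix.sub_mul, hε]; simp
  have k1 : V * U' = 0 := by
    calc V * U' = (V * U) * V * U' * (V' * U') := by rw [hVU, hVU']; simp
      _ = V * (U * V * (U' * V')) * U' := by simp only [Matrix.mul_assoc]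
      _ = 0 := by rw [hUV, hUV', hx]; simp
  have k2 : V' * U = 0 := by
    calc V' * U = (V' * U') * V' * U * (V * U) := by rw [hVU, hVU']; simp
      _ = V' * (U' * V' * (U * V)) * U := by simp only [Matrix.mul_assoc]
      _ = 0 := by rw [hUV, hUV', hx']; simp
  refine ⟨s, s', ⟨fromRows V V', fromCols U U', ?_, ?_⟩, ?_, ?_, ?_⟩
  · rw [fromRows_mul_fromCols, hVU, hVU', k1, k2, fromBlocks_one]
  · rw [fromCols_mul_fromRows, hUV, hUV']; simp
  · by_contra hs
    obtain rfl : s = 0 := by omega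
    apply h0
    rw [← hUV]; ext i j; simp [Matrix.mul_apply]
  · by_contra hs
    obtain rfl : s' = 0 := by omega
    apply h1
    have : (1 - ε) = 0 := by rw [← hUV']; ext i j; simp [Matrix.mul_apply]
    exact (sub_eq_zero.1 this).symm
  · change fromRows V V' * ε * fromCols U U' = _
    rw [← hUV, fromRows_mul, fromRows_mul_fromCols]
    congr 1
    · rw [← Matrix.mul_assoc, Matrix.mul_assoc, hVU]; simp
    · rw [Matrix.mul_assoc, Matrix.mul_assoc, k1]; simp
    · rw [← Matrix.mul_assoc, k2]; simp
    · rw [← Matrix.mul_assoc, k2]; simp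

lemma sum_conj_zero {s s' : ℕ} (a : MI F (Fin s ⊕ Fin s') ι) (f : Matrix (Fin s) (Fin s') F → ℂ) (hf : ∑ B, f B = 0) :
    ∑ φ : Matrix ι ι F, f (a.m * φ * a.i).toBlocks₁₂ = 0 := by
  let E : Matrix ι ι F ≃ Matrix (Fin s ⊕ Fin s') (Fin s ⊕ Fin s') F := ⟨fun φ => a.m * φ * a.i, fun M => a.i * M * a.m, fun φ => by
      dsimp only
      rw [show a.i * (a.m * φ * a.i) * a.m = (a.i * a.m) * φ * (a.i * a.m) by simp only [Matrix.mul_assoc], a.im]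
      simp, fun M => by
      dsimp only
      rw [show a.m * (a.i * M * a.m) * a.i = (a.m * a.i) * M * (a.m * a.i) by simp only [Matrix.mul_assoc], a.mi]
      simp⟩
  have h1 : ∑ φ : Matrix ι ι F, f (a.m * φ * a.i).toBlocks₁₂ = ∑ M : Matrix (Fin s ⊕ Fin s') (Fin s ⊕ Fin s') F, f M.toBlocks₁₂ :=
    E.sum_comp (fun M => f M.toBlocks₁₂)
  let E' : Matrix (Fin s ⊕ Fin s') (Fin s ⊕ Fin s') F ≃ (Matrix (Fin s) (Fin s) F × Matrix (Fin s') (Fin s) F × Matrix (Fin s') (Fin s') F) × Matrix (Fin s) (Fin s') F :=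
    ⟨fun M => ((M.toBlocks₁₁, M.toBlocks₂₁, M.toBlocks₂₂), M.toBlocks₁₂), fun z => fromBlocks z.1.1 z.2 z.1.2.1 z.1.2.2,
      fun M => by simp [fromBlocks_toBlocks], fun z => by simp⟩
  have h2 := E'.sum_comp (fun z => f z.2)
  refine h1.trans (h2.trans ?_)
  rw [Fintype.sum_prod_type]
  simp [hf]

lemma one_sub_e {s s' : ℕ} : (1 : Matrix (Fin s ⊕ Fin s') (Fin s ⊕ Fin s') F) - fromBlocks 1 0 0 0 = fromBlocks 0 0 0 1 := by
  rw [← fromBlocks_one, sub_eq_iff_eq_add, fromBlocks_add]; simp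

lemma cusp_of (ρ : Ch F) (hpos : 0 < ρ.1) (h : ∀ α β : Ch F, 0 < α.1 → 0 < β.1 → mm α β ρ = 0) : Cusp ρ := by
  refine ⟨hpos, fun ε x hε h0 h1 hx hxe => ?_⟩
  obtain ⟨s, s', a, hs, hs', hae⟩ := idem_normal ε hε h0 h1
  set e : Matrix (Fin s ⊕ Fin s') (Fin s ⊕ Fin s') F := fromBlocks 1 0 0 0 with he
  set y := a.m * x * a.i with hy
  have hconj : ∀ M N : Matrix (Fin ρ.1) (Fin ρ.1) F, (a.m * M * a.i) * (a.m * N * a.i) = a.m * (M * N) * a.i := by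
    intro M N
    rw [show (a.m * M * a.i) * (a.m * N * a.i) = a.m * (M * (a.i * a.m) * N) * a.i by simp only [Matrix.mul_assoc], a.im, Matrix.mul_one]
  have hye : y * e = e * y * e := by
    rw [← hae, hconj, hconj, hconj, hxe]
  have hyu : IsUnit y := by
    obtain ⟨u, rfl⟩ := hx
    refine ⟨⟨y, a.m * (u⁻¹).1 * a.i, ?_, ?_⟩, rfl⟩
    · rw [hconj, ← Units.val_mul, mul_inv_cancel, Units.val_one, Matrix.mul_one, a.mi]
    · rw [hconj, ← Units.val_mul, inv_mul_cancel, Units.val_one, Matrix.mul_one, a.mi]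
  obtain ⟨p, hp⟩ := exists_pb y hyu (by
    rw [← fromBlocks_toBlocks y, he, fromBlocks_multiply, fromBlocks_multiply, fromBlocks_multiply, fromBlocks_inj] at hye
    simpa using hye.2.2.1)
  have hterm : ∀ φ, ev ρ (x * (1 + ε * φ * (1 - ε))) = ev ρ (fromBlocks p.A.1 (p.A.1 * (a.m * φ * a.i).toBlocks₁₂ + p.B) 0 p.C.1) := by
    intro φ
    rw [← ev_conj ρ a]
    congr 1
    rw [← hconj, ← hy, ← hp, Matrix.mul_add, Matrix.add_mul, Matrix.mul_one, a.mi, ← hconj, ← hconj, hae,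
      Matrix.mul_sub, Matrix.sub_mul, Matrix.mul_one, a.mi, hae]
    rw [← fromBlocks_toBlocks (a.m * φ * a.i), he, one_sub_e, fromBlocks_multiply, fromBlocks_multiply,
      ← fromBlocks_one, fromBlocks_add, PB.mat, fromBlocks_multiply]
    simp
  simp only [hterm]
  apply sum_conj_zero a (fun B => ev ρ (fromBlocks p.A.1 (p.A.1 * B + p.B) 0 p.C.1))
  have hB : ∑ B : Matrix (Fin s) (Fin s') F, ev ρ (fromBlocks p.A.1 (p.A.1 * B + p.B) 0 p.C.1) = ∑ B : Matrix (Fin s) (Fin s') F, ev ρ (fromBlocks p.A.1 B 0 p.C.1) := by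
    refine Fintype.sum_equiv ⟨fun B => p.A.1 * B + p.B, fun B => (p.A⁻¹).1 * (B - p.B), ?_, ?_⟩ _ _ fun φ => rfl
    · intro B
      dsimp only
      rw [add_sub_cancel_right, ← Matrix.mul_assoc, ← Units.val_mul]; simp
    · intro B
      dsimp only
      rw [← Matrix.mul_assoc, ← Units.val_mul]; simp
  rw [hB, expand, Finset.sum_eq_zero, mul_zero]
  intro α hα
  apply Finset.sum_eq_zero
  intro β hβ
  rw [mem_lvl, Fintype.card_fin] at hα hβ
  rw [h α β (by omega) (by omega)]
  simp

theorem exists_cusp (χ : Ch F) (hχ : 0 < χ.1) : ∃ σ τ : Ch F, Cusp σ ∧ mm σ τ χ ≠ 0 := by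
  have hex : ∃ t, 0 < t ∧ ∃ ρ η : Ch F, ρ.1 = t ∧ mm ρ η χ ≠ 0 := by
    refine ⟨χ.1, hχ, ?_⟩
    by_contra! hno
    have h := expand_one (ι := Fin χ.1) (κ := Fin 0) χ
    rw [Fintype.sum_subsingleton _ 0, Finset.sum_eq_zero, mul_zero, fromBlocks_one, ev_one_eq χ (by simp)] at h
    · have := dg_pos χ
      have h' : dg χ = 0 := by exact_mod_cast h
      omega
    · intro ρ hρ
      rw [mem_lvl, Fintype.card_fin] at hρ
      apply Finset.sum_eq_zero
      intro η _
      rw [hno ρ η hρ]; simp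
  classical
  obtain ⟨h0, ρ, η, hρ, hmm⟩ := Nat.find_spec hex
  refine ⟨ρ, η, cusp_of ρ (by omega) fun α β hα hβ => ?_, hmm⟩
  by_contra hne
  obtain ⟨α', γ, hα', hne'⟩ := mm_trans α β ρ η χ hne hmm
  have := mm_deg hne
  exact Nat.find_min hex (m := α.1) (by omega) ⟨hα, α', γ, hα', hne'⟩

end Exist2

section Ops
open scoped Classical
set_option linter.unusedSectionVars false

variable {F : Type} [Field F] [Fintype F]

variable (F) in
/-- levels indexed by integers -/
noncomputable def lz (n : ℤ) : Finset (Ch F) := if 0 ≤ n then lvl F n.toNat else ∅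

lemma mem_lz {n : ℤ} {χ : Ch F} : χ ∈ lz F n ↔ (χ.1 : ℤ) = n := by
  unfold lz
  split_ifs with h
  · rw [mem_lvl]; omega
  · simp; omega

lemma lz_nat (n : ℕ) : lz F n = lvl F n := by
  ext χ; rw [mem_lz, mem_lvl]; omega

noncomputable def opU (σ : Ch F) (f : Ch F → ℤ) (χ : Ch F) : ℤ := ∑ τ ∈ lz F (χ.1 - σ.1), (mm σ τ χ : ℤ) * f τ
noncomputable def opD (σ : Ch F) (f : Ch F → ℤ) (τ : Ch F) : ℤ := ∑ χ ∈ lz F (τ.1 + σ.1), (mm σ τ χ : ℤ) * f χ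
noncomputable def pr (n : ℤ) (f g : Ch F → ℤ) : ℤ := ∑ χ ∈ lz F n, f χ * g χ

lemma pr_comm (n : ℤ) (f g : Ch F → ℤ) : pr n f g = pr n g f := by
  unfold pr; exact Finset.sum_congr rfl fun _ _ => mul_comm _ _

lemma pr_add (n : ℤ) (f g h : Ch F → ℤ) : pr n (f + g) h = pr n f h + pr n g h := by
  unfold pr; rw [← Finset.sum_add_distrib]; exact Finset.sum_congr rfl fun _ _ => by simp [add_mul]

lemma pr_add' (n : ℤ) (f g h : Ch F → ℤ) : pr n h (f + g) = pr n h f + pr n h g := by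
  rw [pr_comm, pr_add, pr_comm n f, pr_comm n g]

lemma pr_sub (n : ℤ) (f g : Ch F → ℤ) : pr n (f - g) (f - g) = pr n f f - 2 * pr n f g + pr n g g := by
  unfold pr; rw [Finset.mul_sum, ← Finset.sum_sub_distrib, ← Finset.sum_add_distrib]
  exact Finset.sum_congr rfl fun _ _ => by simp; ring

lemma pr_zero_iff (n : ℤ) (f : Ch F → ℤ) : pr n f f = 0 ↔ ∀ χ : Ch F, (χ.1 : ℤ) = n → f χ = 0 := by
  unfold pr
  rw [Finset.sum_eq_zero_iff_of_nonneg fun _ _ => mul_self_nonneg _]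
  simp only [mem_lz, mul_self_eq_zero]

lemma pr_adj (n : ℤ) (σ : Ch F) (f g : Ch F → ℤ) : pr (n + σ.1) (opU σ f) g = pr n f (opD σ g) := by
  unfold pr
  have h1 : ∀ χ ∈ lz F (n + σ.1), opU σ f χ * g χ = ∑ τ ∈ lz F n, (mm σ τ χ : ℤ) * f τ * g χ := by
    intro χ hχ
    rw [mem_lz] at hχ
    rw [opU, Finset.sum_mul, hχ]; simp
  have h2 : ∀ τ ∈ lz F n, f τ * opD σ g τ = ∑ χ ∈ lz F (n + σ.1), (mm σ τ χ : ℤ) * f τ * g χ := by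
    intro τ hτ
    rw [mem_lz] at hτ
    rw [opD, Finset.mul_sum, hτ]
    exact Finset.sum_congr rfl fun _ _ => by ring
  rw [Finset.sum_congr rfl h1, Finset.sum_congr rfl h2, Finset.sum_comm]

lemma mackey_aux (σ ρ τ ω : Ch F) (hσ : Cusp σ) (hρ : Cusp ρ) (h : (τ.1 : ℤ) + σ.1 = ω.1 + ρ.1) :
    ∑ χ ∈ lz F (τ.1 + σ.1), mm σ τ χ * mm ρ ω χ = (if σ = ρ ∧ τ = ω then 1 else 0) + 
      ∑ κ ∈ lz F (ω.1 - σ.1), mm ρ κ τ * mm σ κ ω := by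
  have key : ∀ σ ρ τ ω : Ch F, Cusp σ → ρ.1 ≤ σ.1 → ((τ.1 : ℤ) + σ.1 = ω.1 + ρ.1) → 
    ∑ χ ∈ lz F (τ.1 + σ.1), mm σ τ χ * mm ρ ω χ = (if σ = ρ ∧ τ = ω then 1 else 0) + 
      ∑ κ ∈ lz F (ω.1 - σ.1), mm ρ κ τ * mm σ κ ω := by
    intro σ ρ τ ω hσ hle h
    have h0 := mackey σ τ ρ ω hσ hle (n := τ.1 + σ.1) (add_comm _ _)
    rw [← lz_nat] at h0
    push_cast at h0
    rw [h0]
    congr 1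
    by_cases hτ : ρ.1 ≤ τ.1
    · rw [show (ω.1 : ℤ) - σ.1 = (τ.1 - ρ.1 : ℕ) by omega, lz_nat]
    · rw [Finset.sum_eq_zero, Finset.sum_eq_zero]
      · intro κ hκ
        rw [mem_lz] at hκ
        omega
      · intro κ _
        by_contra hne
        have := mm_deg (left_ne_zero_of_mul hne)
        omega
  rcases le_total ρ.1 σ.1 with hle | hle
  · exact key σ ρ τ ω hσ hle h
  · have := key ρ σ ω τ hρ hle h.symm
    rw [← h] at this
    rw [show (ω.1 : ℤ) - σ.1 = τ.1 - ρ.1 by omega]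
    rw [Finset.sum_congr rfl fun χ _ => mul_comm (mm σ τ χ) (mm ρ ω χ), this]
    refine congrArg₂ _ ?_ (Finset.sum_congr rfl fun κ _ => mul_comm _ _)
    exact if_congr (and_congr eq_comm eq_comm) rfl rfl

lemma opDU (σ ρ : Ch F) (hσ : Cusp σ) (hρ : Cusp ρ) (f : Ch F → ℤ) : 
    opD ρ (opU σ f) = (if σ = ρ then f else 0) + opU σ (opD ρ f) := by
  funext ω
  have h1 : opD ρ (opU σ f) ω = ∑ τ ∈ lz F (ω.1 + ρ.1 - σ.1), (∑ χ ∈ lz F (τ.1 + σ.1), mm σ τ χ * mm ρ ω χ : ℕ) * f τ := by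
    unfold opD opU
    have : ∀ χ ∈ lz F (ω.1 + ρ.1), (mm ρ ω χ : ℤ) * ∑ τ ∈ lz F (χ.1 - σ.1), (mm σ τ χ : ℤ) * f τ = 
        ∑ τ ∈ lz F (ω.1 + ρ.1 - σ.1), (mm σ τ χ * mm ρ ω χ : ℤ) * f τ := by
      intro χ hχ
      rw [mem_lz] at hχ
      rw [hχ, Finset.mul_sum]
      exact Finset.sum_congr rfl fun _ _ => by ring
    rw [Finset.sum_congr rfl this, Finset.sum_comm]
    refine Finset.sum_congr rfl fun τ hτ => ?_
    rw [mem_lz] at hτ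
    rw [← Finset.sum_mul, hτ]
    push_cast
    simp
  have h2 : ∀ τ ∈ lz F (ω.1 + ρ.1 - σ.1), ((∑ χ ∈ lz F (τ.1 + σ.1), mm σ τ χ * mm ρ ω χ : ℕ) : ℤ) * f τ =
     (if σ = ρ ∧ τ = ω then f τ else 0) + ∑ κ ∈ lz F (ω.1 - σ.1), ((mm ρ κ τ : ℤ) * mm σ κ ω * f τ) := by
    intro τ hτ
    rw [mem_lz] at hτ
    rw [mackey_aux σ ρ τ ω hσ hρ (by omega), Nat.cast_add, add_mul]
    push_cast
    rw [Finset.sum_mul]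
    congr 1
    split_ifs <;> simp
  rw [h1, Finset.sum_congr rfl h2, Finset.sum_add_distrib]
  rw [Pi.add_apply]
  congr 1
  · by_cases h : σ = ρ
    · subst h
      simp [Finset.sum_ite_eq', mem_lz]
    · simp [h]
  · unfold opU opD
    rw [Finset.sum_comm]
    refine Finset.sum_congr rfl fun κ hκ => ?_
    rw [mem_lz] at hκ
    rw [Finset.mul_sum, hκ, show (ω.1 : ℤ) - σ.1 + ρ.1 = ω.1 + ρ.1 - σ.1 by ring]
    exact Finset.sum_congr rfl fun _ _ => by ring

lemma opU_add (σ : Ch F) (f g : Ch F → ℤ) : opU σ (f + g) = opU σ f + opU σ g := by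
  funext χ
  simp only [opU, Pi.add_apply, mul_add, Finset.sum_add_distrib]

lemma norm_identity (n : ℤ) (σ ρ : Ch F) (hσ : Cusp σ) (hρ : Cusp ρ) (hne : σ ≠ ρ) (f : Ch F → ℤ) :
    pr (n + σ.1 + ρ.1) (opU ρ (opU σ f)) (opU ρ (opU σ f)) = 
      pr n f f + pr (n - σ.1) (opD σ f) (opD σ f) + pr (n - ρ.1) (opD ρ f) (opD ρ f) + pr (n - ρ.1 - σ.1) (opD σ (opD ρ f)) (opD σ (opD ρ f)) := by
  have c1 : ∀ g : Ch F → ℤ, opD ρ (opU σ g) = opU σ (opD ρ g) := fun g => by rw [opDU σ ρ hσ hρ, if_neg hne, zero_add]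
  have cs : ∀ g : Ch F → ℤ, opD σ (opU σ g) = g + opU σ (opD σ g) := fun g => by rw [opDU σ σ hσ hσ, if_pos rfl]
  have cr : ∀ g : Ch F → ℤ, opD ρ (opU ρ g) = g + opU ρ (opD ρ g) := fun g => by rw [opDU ρ ρ hρ hρ, if_pos rfl]
  have us : ∀ (m : ℤ) (g : Ch F → ℤ), pr (m + σ.1) (opU σ g) (opU σ g) = pr m g g + pr (m - σ.1) (opD σ g) (opD σ g) := by
    intro m g
    rw [pr_adj, cs, pr_add']
    congr 1
    have := pr_adj (m - σ.1) σ (opD σ g) g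
    rw [sub_add_cancel] at this
    rw [pr_comm, this]
  rw [pr_adj, cr, pr_add', us, c1]
  have h := pr_adj (n + σ.1 - ρ.1) ρ (opU σ (opD ρ f)) (opU σ f)
  rw [sub_add_cancel] at h
  rw [pr_comm _ (opU σ f), h, c1, show n + σ.1 - ρ.1 = (n - ρ.1) + σ.1 by ring, us]
  ring

lemma cross_identity (n : ℤ) (σ ρ : Ch F) (hσ : Cusp σ) (hρ : Cusp ρ) (hne : σ ≠ ρ) (f : Ch F → ℤ) :
    pr (n + σ.1 + ρ.1) (opU ρ (opU σ f)) (opU σ (opU ρ f)) = 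
      pr n f f + pr (n - σ.1) (opD σ f) (opD σ f) + pr (n - ρ.1) (opD ρ f) (opD ρ f) + pr (n - ρ.1 - σ.1) (opD σ (opD ρ f)) (opD ρ (opD σ f)) := by
  have c1 : ∀ g : Ch F → ℤ, opD ρ (opU σ g) = opU σ (opD ρ g) := fun g => by rw [opDU σ ρ hσ hρ, if_neg hne, zero_add]
  have cr : ∀ g : Ch F → ℤ, opD ρ (opU ρ g) = g + opU ρ (opD ρ g) := fun g => by rw [opDU ρ ρ hρ hρ, if_pos rfl]
  have cs : ∀ g : Ch F → ℤ, opD σ (opU σ g) = g + opU σ (opD σ g) := fun g => by rw [opDU σ σ hσ hσ, if_pos rfl]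
  rw [pr_adj, c1, cr, opU_add, pr_add', pr_adj, cs, pr_add']
  have h1 : pr n f (opU σ (opD σ f)) = pr (n - σ.1) (opD σ f) (opD σ f) := by
    have := pr_adj (n - σ.1) σ (opD σ f) f
    rw [sub_add_cancel] at this
    rw [pr_comm, this]
  have c2 : ∀ g : Ch F → ℤ, opD σ (opU ρ g) = opU ρ (opD σ g) := fun g => by rw [opDU ρ σ hρ hσ, if_neg (Ne.symm hne), zero_add]
  have h2 : pr (n + σ.1) (opU σ f) (opU σ (opU ρ (opD ρ f))) = pr (n - ρ.1) (opD ρ f) (opD ρ f) + pr (n - ρ.1 - σ.1) (opD σ (opD ρ f)) (opD ρ (opD σ f)) := by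
    rw [pr_adj, cs, c2, pr_add']
    have e1 := pr_adj (n - ρ.1) ρ (opD ρ f) f
    rw [sub_add_cancel] at e1
    rw [pr_comm, e1]
    congr 1
    have e2 := pr_adj (n - σ.1) σ (opU ρ (opD σ (opD ρ f))) f
    rw [sub_add_cancel] at e2
    have e3 := pr_adj (n - σ.1 - ρ.1) ρ (opD σ (opD ρ f)) (opD σ f)
    rw [sub_add_cancel] at e3
    rw [pr_comm, e2, e3]
    congr 1
    ring
  rw [h1, h2]
  ring

lemma comm_identity (n : ℤ) (σ ρ : Ch F) (hσ : Cusp σ) (hρ : Cusp ρ) (hne : σ ≠ ρ) (f : Ch F → ℤ) :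
    pr (n + σ.1 + ρ.1) (opU ρ (opU σ f) - opU σ (opU ρ f)) (opU ρ (opU σ f) - opU σ (opU ρ f)) = 
    pr (n - ρ.1 - σ.1) (opD σ (opD ρ f) - opD ρ (opD σ f)) (opD σ (opD ρ f) - opD ρ (opD σ f)) := by
  rw [pr_sub, pr_sub, norm_identity n σ ρ hσ hρ hne, cross_identity n σ ρ hσ hρ hne]
  have := norm_identity n ρ σ hρ hσ hne.symm f
  rw [show n + ρ.1 + σ.1 = n + σ.1 + ρ.1 by ring, show n - σ.1 - ρ.1 = n - ρ.1 - σ.1 by ring] at this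
  rw [this]
  ring

lemma pr_single (n : ℤ) (f : Ch F → ℤ) (ζ : Ch F) (h : (ζ.1 : ℤ) = n) : pr n (Pi.single ζ 1) f = f ζ := by
  unfold pr
  rw [Finset.sum_eq_single ζ]
  · simp
  · intro b _ hb
    simp [Pi.single_eq_of_ne hb]
  · intro h'
    exact absurd (mem_lz.2 h) h'

lemma opD_comm (σ ρ : Ch F) (hσ : Cusp σ) (hρ : Cusp ρ) (hne : σ ≠ ρ) (f : Ch F → ℤ) : opD σ (opD ρ f) = opD ρ (opD σ f) := by
  have key : ∀ (n : ℕ) (f : Ch F → ℤ) (ζ : Ch F), ζ.1 = n → opD σ (opD ρ f) ζ = opD ρ (opD σ f) ζ := by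
    intro n
    induction n using Nat.strong_induction_on with
    | _ n ih =>
      intro f ζ hζ
      have h1 : ∀ χ : Ch F, (χ.1 : ℤ) = ζ.1 + σ.1 + ρ.1 → (opU ρ (opU σ (Pi.single ζ 1)) - opU σ (opU ρ (Pi.single ζ 1))) χ = 0 := by
        rw [← pr_zero_iff, comm_identity _ σ ρ hσ hρ hne, pr_zero_iff]
        intro χ hχ
        rw [Pi.sub_apply, ih χ.1 (by have := hσ.1; omega) _ χ rfl, sub_self]
      have e1 : pr (ζ.1 + σ.1 + ρ.1) (opU ρ (opU σ (Pi.single ζ 1))) f = opD σ (opD ρ f) ζ := by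
        rw [pr_adj, pr_adj, pr_single _ _ _ rfl]
      have e2 : pr (ζ.1 + σ.1 + ρ.1) (opU σ (opU ρ (Pi.single ζ 1))) f = opD ρ (opD σ f) ζ := by
        rw [add_right_comm, pr_adj, pr_adj, pr_single _ _ _ rfl]
      rw [← e1, ← e2]
      unfold pr
      refine Finset.sum_congr rfl fun χ hχ => ?_
      rw [mem_lz] at hχ
      have := h1 χ hχ
      rw [Pi.sub_apply, sub_eq_zero] at this
      rw [this]
  funext ζ
  exact key _ f ζ rfl

lemma opD_single (σ χ τ : Ch F) : opD σ (Pi.single χ 1) τ = mm σ τ χ := by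
  unfold opD
  by_cases h : (χ.1 : ℤ) = τ.1 + σ.1
  · rw [Finset.sum_eq_single χ]
    · simp
    · intro b _ hb
      simp [Pi.single_eq_of_ne hb]
    · intro h'
      exact absurd (mem_lz.2 h) h'
  · have h0 : mm σ τ χ = 0 := by
      by_contra hne
      have := mm_deg hne
      omega
    rw [h0, Finset.sum_eq_zero]
    · simp
    · intro b hb
      rw [mem_lz] at hb
      have : b ≠ χ := by rintro rfl; exact h hb
      simp [Pi.single_eq_of_ne this]

/-- downward closure -/
lemma mm_down (σ ρ χ τ κ : Ch F) (hσ : Cusp σ) (hρ : Cusp ρ) (hne : σ ≠ ρ) (h1 : mm σ τ χ ≠ 0) (h2 : mm ρ κ τ ≠ 0) :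
    ∃ ω, mm ρ ω χ ≠ 0 := by
  by_contra! hno
  have e := congrFun (opD_comm σ ρ hσ hρ hne (Pi.single χ 1)) κ
  have e1 : opD ρ (Pi.single χ 1) = 0 := by
    funext ω
    rw [opD_single, hno]; rfl
  rw [e1] at e
  have e2 : opD σ (0 : Ch F → ℤ) κ = 0 := by simp [opD]
  rw [e2] at e
  have e3 : (mm ρ κ τ : ℤ) * opD σ (Pi.single χ 1) τ = 0 := by
    refine (Finset.sum_eq_zero_iff_of_nonneg ?_).1 e.symm τ ?_
    · intro b _
      rw [opD_single]; positivity
    · rw [mem_lz]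
      have := mm_deg h2
      omega
  rw [opD_single] at e3
  have : mm ρ κ τ * mm σ τ χ = 0 := by exact_mod_cast e3
  rcases mul_eq_zero.1 this with h | h
  exacts [h2 h, h1 h]

/-- upward closure -/
lemma mm_up (σ ρ χ τ ω : Ch F) (hσ : Cusp σ) (hρ : Cusp ρ) (hne : σ ≠ ρ) (h1 : mm σ τ χ ≠ 0) (h2 : mm ρ ω χ ≠ 0) :
    ∃ κ, mm ρ κ τ ≠ 0 ∧ mm σ κ ω ≠ 0 := by
  have d1 := mm_deg h1
  have d2 := mm_deg h2
  have h := mackey_aux σ ρ τ ω hσ hρ (by omega)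
  rw [if_neg (by tauto), zero_add] at h
  have hp : 0 < ∑ χ ∈ lz F (τ.1 + σ.1), mm σ τ χ * mm ρ ω χ := by
    refine Finset.sum_pos' (fun _ _ => Nat.zero_le _) ⟨χ, mem_lz.2 (by omega), Nat.mul_pos (Nat.pos_of_ne_zero h1) (Nat.pos_of_ne_zero h2)⟩
  rw [h] at hp
  obtain ⟨κ, _, hκ⟩ := Finset.exists_ne_zero_of_sum_ne_zero hp.ne'
  exact ⟨κ, left_ne_zero_of_mul hκ, right_ne_zero_of_mul hκ⟩

end Ops

section Count
open scoped Classical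
set_option linter.unusedSectionVars false

variable {F : Type} [Field F] [Fintype F]

/-- squared norm of the restriction -/
noncomputable def nn (σ χ : Ch F) : ℕ := ∑ τ ∈ lz F (χ.1 - σ.1), mm σ τ χ ^ 2

lemma nn_up (σ τ : Ch F) (hσ : Cusp σ) : ∑ χ ∈ lz F (τ.1 + σ.1), mm σ τ χ ^ 2 = 1 + nn σ τ := by
  have h := mackey_aux σ σ τ τ hσ hσ rfl
  simp only [and_self, if_true] at h
  simp only [nn, sq]
  exact h

lemma nn_eq {σ χ : Ch F} {n : ℤ} (h : (χ.1 : ℤ) = n + σ.1) : nn σ χ = ∑ τ ∈ lz F n, mm σ τ χ ^ 2 := by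
  rw [nn, h, add_sub_cancel_right]

lemma nn_eq_zero {σ χ : Ch F} : nn σ χ = 0 ↔ ∀ τ, mm σ τ χ = 0 := by
  rw [nn, Finset.sum_eq_zero_iff]
  constructor
  · intro h τ
    by_contra hne
    have := mm_deg hne
    exact hne (by simpa using h τ (mem_lz.2 (by omega)))
  · intro h τ _
    simp [h τ]

noncomputable def yl (Y : Ch F → Prop) (n : ℤ) : Finset (Ch F) := (lz F n).filter Y

lemma mem_yl {Y : Ch F → Prop} {n : ℤ} {χ : Ch F} : χ ∈ yl Y n ↔ (χ.1 : ℤ) = n ∧ Y χ := by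
  rw [yl, Finset.mem_filter, mem_lz]

lemma S_rec (Y : Ch F → Prop) (σ : Ch F) (hσ : Cusp σ) (hup : ∀ τ χ, Y τ → mm σ τ χ ≠ 0 → Y χ)
    (hdn : ∀ τ χ, Y χ → mm σ τ χ ≠ 0 → Y τ) (n : ℤ) : 
    ∑ χ ∈ yl Y (n + σ.1), nn σ χ = (yl Y n).card + ∑ χ ∈ yl Y n, nn σ χ := by
  have h1 : ∑ χ ∈ yl Y (n + σ.1), nn σ χ = ∑ χ ∈ lz F (n + σ.1), ∑ τ ∈ yl Y n, mm σ τ χ ^ 2 := by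
    rw [yl, Finset.sum_filter]
    refine Finset.sum_congr rfl fun χ hχ => ?_
    rw [mem_lz] at hχ
    rw [yl, Finset.sum_filter]
    split_ifs with h
    · rw [nn_eq hχ]
      refine Finset.sum_congr rfl fun τ _ => ?_
      split_ifs with h'
      · rfl
      · have : mm σ τ χ = 0 := by by_contra hne; exact h' (hdn τ χ h hne)
        simp [this]
    · symm
      apply Finset.sum_eq_zero
      intro τ _
      split_ifs with h'
      · have : mm σ τ χ = 0 := by by_contra hne; exact h (hup τ χ h' hne)
        simp [this]
      · rfl
  rw [h1, Finset.sum_comm, Finset.card_eq_sum_ones, ← Finset.sum_add_distrib]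
  refine Finset.sum_congr rfl fun τ hτ => ?_
  rw [mem_yl] at hτ
  rw [← nn_up σ τ hσ, hτ.1]

lemma adj_count (Y : Ch F → Prop) (σ : Ch F) (hup : ∀ τ χ, Y τ → mm σ τ χ ≠ 0 → Y χ) (n : ℤ) :
    ((yl Y n).filter fun μ => ∃ l, mm σ μ l ≠ 0 ∧ 2 ≤ nn σ l).card ≤ 2 * ∑ χ ∈ yl Y (n + σ.1), (nn σ χ - 1) := by
  have h1 : ((yl Y n).filter fun μ => ∃ l, mm σ μ l ≠ 0 ∧ 2 ≤ nn σ l) ⊆ 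
      ((yl Y (n + σ.1)).filter fun l => 2 ≤ nn σ l).biUnion fun l => (lz F n).filter fun μ => mm σ μ l ≠ 0 := by
    intro μ hμ
    rw [Finset.mem_filter, mem_yl] at hμ
    obtain ⟨⟨h1, h2⟩, l, h3, h4⟩ := hμ
    simp only [Finset.mem_biUnion, Finset.mem_filter, mem_lz, mem_yl]
    have := mm_deg h3
    exact ⟨l, ⟨⟨by omega, hup μ l h2 h3⟩, h4⟩, h1, h3⟩
  refine (Finset.card_le_card h1).trans (Finset.card_biUnion_le.trans ?_)
  rw [Finset.sum_filter, Finset.mul_sum]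
  refine Finset.sum_le_sum fun l hl => ?_
  rw [mem_yl] at hl
  split_ifs with h
  · have : ((lz F n).filter fun μ => mm σ μ l ≠ 0).card ≤ nn σ l := by
      rw [nn_eq hl.1, Finset.card_eq_sum_ones, Finset.sum_filter]
      refine Finset.sum_le_sum fun μ _ => ?_
      split_ifs with h'
      · exact Nat.one_le_iff_ne_zero.2 (pow_ne_zero _ h')
      · exact Nat.zero_le _
    omega
  · exact Nat.zero_le _

/-- two distinct elements carrying nonzero multiplicity give norm at least two -/
lemma two_le_nn {σ χ a b : Ch F} (hab : a ≠ b) (ha : mm σ a χ ≠ 0) (hb : mm σ b χ ≠ 0) : 2 ≤ nn σ χ := by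
  have d1 := mm_deg ha
  have d2 := mm_deg hb
  have h1 : ∑ τ ∈ ({a, b} : Finset (Ch F)), mm σ τ χ ^ 2 ≤ nn σ χ := by
    apply Finset.sum_le_sum_of_subset
    intro x hx
    rw [mem_lz]
    simp only [Finset.mem_insert, Finset.mem_singleton] at hx
    rcases hx with rfl | rfl <;> omega
  rw [Finset.sum_pair hab] at h1
  have := Nat.pos_of_ne_zero (pow_ne_zero 2 ha)
  have := Nat.pos_of_ne_zero (pow_ne_zero 2 hb)
  omega

lemma nn_pos_of {σ χ a : Ch F} (ha : mm σ a χ ≠ 0) : 1 ≤ nn σ χ := by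
  rw [Nat.one_le_iff_ne_zero, Ne, nn_eq_zero]
  intro h; exact ha (h a)

lemma exists_two (s : Finset (Ch F)) (f : Ch F → ℕ) (h : ∑ x ∈ s, f x ^ 2 = 2) : ∃ a ∈ s, ∃ b ∈ s, a ≠ b ∧ f a ≠ 0 ∧ f b ≠ 0 := by
  by_contra! hno
  obtain ⟨a, ha, hfa⟩ : ∃ a ∈ s, f a ≠ 0 := by
    by_contra! h0
    rw [Finset.sum_eq_zero] at h
    · omega
    · intro x hx; rw [h0 x hx]; rfl
  rw [Finset.sum_eq_single a] at h
  · have : f a ≤ 1 ∨ 2 ≤ f a := by omega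
    rcases this with h' | h'
    · have : f a ^ 2 ≤ 1 := by nlinarith
      omega
    · nlinarith
  · intro b hb hba
    rw [hno a ha b hb hba.symm hfa]; rfl
  · exact fun h' => absurd ha h'

lemma common_up (σ l l' μ : Ch F) (hσ : Cusp σ) (hl : mm σ μ l ≠ 0) (hl' : mm σ μ l' ≠ 0) :
    ∃ α, mm σ l α ≠ 0 ∧ mm σ l' α ≠ 0 := by
  have d1 := mm_deg hl
  have d2 := mm_deg hl'
  have h := mackey_aux σ σ l l' hσ hσ (by omega)
  have hp : 0 < ∑ χ ∈ lz F (l.1 + σ.1), mm σ l χ * mm σ l' χ := by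
    rw [h]
    apply Nat.add_pos_right
    refine Finset.sum_pos' (fun _ _ => Nat.zero_le _) ⟨μ, mem_lz.2 (by omega), Nat.mul_pos (Nat.pos_of_ne_zero hl) (Nat.pos_of_ne_zero hl')⟩
  obtain ⟨α, _, hα⟩ := Finset.exists_ne_zero_of_sum_ne_zero hp.ne'
  exact ⟨α, left_ne_zero_of_mul hα, right_ne_zero_of_mul hα⟩

lemma key_count (Y : Ch F → Prop) (σ : Ch F) (hσ : Cusp σ) (hup : ∀ τ χ, Y τ → mm σ τ χ ≠ 0 → Y χ) (n : ℤ) :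
    (yl Y n).card ≤ ((yl Y n).filter fun χ => nn σ χ = 0).card + ∑ χ ∈ yl Y n, (nn σ χ - 1) +
      2 * ∑ χ ∈ yl Y (n + σ.1), (nn σ χ - 1) + 2 * ∑ χ ∈ yl Y (n + σ.1 + σ.1), (nn σ χ - 1) := by
  set B1 := (yl Y n).filter fun μ => ∃ l, mm σ μ l ≠ 0 ∧ 2 ≤ nn σ l with hB1
  set C := (yl Y (n + σ.1)).filter fun μ => ∃ l, mm σ μ l ≠ 0 ∧ 2 ≤ nn σ l with hC
  set A := (yl Y n).filter fun μ => nn σ μ = 1 with hA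
  have h1 : (yl Y n).card ≤ ((yl Y n).filter fun χ => nn σ χ = 0).card + A.card + ((yl Y n).filter fun χ => 2 ≤ nn σ χ).card := by
    refine le_trans (Finset.card_le_card ?_) ((Finset.card_union_le _ _).trans (Nat.add_le_add_right (Finset.card_union_le _ _) _))
    intro χ hχ
    simp only [Finset.mem_union, Finset.mem_filter, hA, hχ, true_and]
    omega
  have h2 : ((yl Y n).filter fun χ => 2 ≤ nn σ χ).card ≤ ∑ χ ∈ yl Y n, (nn σ χ - 1) := by
    rw [Finset.card_eq_sum_ones, Finset.sum_filter]
    refine Finset.sum_le_sum fun χ _ => ?_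
    split_ifs <;> omega
  have h3 : A.card ≤ B1.card + (A \ B1).card := by
    rw [← Finset.card_sdiff_add_card_inter A B1]
    have := Finset.card_le_card (Finset.inter_subset_right : A ∩ B1 ⊆ B1)
    omega
  have h4 : (A \ B1).card ≤ C.card := by
    have hex : ∀ μ ∈ A \ B1, ∃ l, mm σ μ l ≠ 0 ∧ nn σ l = 1 ∧ l ∈ C := by
      intro μ hμ
      rw [Finset.mem_sdiff, hA, hB1, Finset.mem_filter, Finset.mem_filter] at hμ
      obtain ⟨⟨hμY, hμ1⟩, hμB⟩ := hμ
      have hno : ∀ l, mm σ μ l ≠ 0 → nn σ l = 1 := by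
        intro l hl
        by_contra hne
        have := nn_pos_of hl
        exact hμB ⟨hμY, l, hl, by omega⟩
      obtain ⟨a, ha, b, hb, hab, ha1, hb1⟩ := exists_two _ (fun χ => mm σ μ χ) (by rw [nn_up σ μ hσ, hμ1])
      obtain ⟨α, hα1, hα2⟩ := common_up σ a b μ hσ ha1 hb1
      refine ⟨a, ha1, hno a ha1, ?_⟩
      rw [hC, Finset.mem_filter, mem_yl]
      rw [mem_yl] at hμY
      have := mm_deg ha1
      exact ⟨⟨by omega, hup _ _ hμY.2 ha1⟩, α, hα1, two_le_nn hab hα1 hα2⟩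
    choose! f hf using hex
    refine Finset.card_le_card_of_injOn f (fun μ hμ => (hf μ hμ).2.2) ?_
    intro μ hμ μ' hμ' heq
    by_contra hne
    have q1 := hf μ hμ
    have q2 := hf μ' hμ'
    rw [← heq] at q2
    have := two_le_nn hne q1.1 q2.1
    omega
  have h5 : B1.card ≤ _ := adj_count Y σ hup n
  have h6 : C.card ≤ _ := adj_count Y σ hup (n + σ.1)
  omega

lemma e_add (s : Finset (Ch F)) (σ : Ch F) : ∑ χ ∈ s, (nn σ χ - 1) + s.card = ∑ χ ∈ s, nn σ χ + (s.filter fun χ => nn σ χ = 0).card := by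
  rw [Finset.card_eq_sum_ones, Finset.card_eq_sum_ones, Finset.sum_filter, ← Finset.sum_add_distrib, ← Finset.sum_add_distrib]
  refine Finset.sum_congr rfl fun χ _ => ?_
  split_ifs <;> omega

set_option maxHeartbeats 1000000 in
lemma summable_step (y z e S : ℕ → ℝ) (hy : ∀ n, 0 ≤ y n) (hz : ∀ n, 0 ≤ z n) (he : ∀ n, 0 ≤ e n) (hS : ∀ n, 0 ≤ S n) (k : ℕ) (hk : 0 < k)
    (h1 : ∀ n, e n + y n = S n + z n) (h2 : ∀ n, S (n + k) = y n + S n) (h3 : ∀ n < k, S n = 0) 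
    (h4 : ∀ n, y n ≤ z n + e n + 2 * e (n + k) + 2 * e (n + k + k)) (w : ℝ) (hw : 0 < w) (hw2 : w ≤ 1 / 2)
    (hsum : Summable fun n => z n * w ^ n) : Summable fun n => y n * w ^ n := by
  have hwk : w ^ k ≤ 1 / 2 := (pow_le_of_le_one hw.le (by linarith) hk.ne').trans hw2
  have hwk0 : 0 < w ^ k := pow_pos hw k
  have hp : ∀ n, 0 < w ^ n := fun n => pow_pos hw n
  have hSN : ∀ N, ∑ n ∈ Finset.range N, S n * w ^ n ≤ ∑ n ∈ Finset.range N, y n * w ^ n := by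
    intro N
    have a1 : ∑ n ∈ Finset.range N, S n * w ^ n ≤ ∑ n ∈ Finset.range (k + N), S n * w ^ n :=
      Finset.sum_le_sum_of_subset_of_nonneg (Finset.range_mono (by omega)) fun n _ _ => mul_nonneg (hS n) (hp n).le
    rw [Finset.sum_range_add, Finset.sum_eq_zero (s := Finset.range k), zero_add] at a1
    swap
    · intro n hn; rw [h3 n (Finset.mem_range.1 hn), zero_mul]
    have a2 : ∑ x ∈ Finset.range N, S (k + x) * w ^ (k + x) = w ^ k * (∑ n ∈ Finset.range N, y n * w ^ n + ∑ n ∈ Finset.range N, S n * w ^ n) := by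
      rw [← Finset.sum_add_distrib, Finset.mul_sum]
      refine Finset.sum_congr rfl fun n _ => ?_
      rw [add_comm k n, h2, pow_add]; ring
    rw [a2] at a1
    have a3 : 0 ≤ ∑ n ∈ Finset.range N, y n * w ^ n := Finset.sum_nonneg fun n _ => mul_nonneg (hy n) (hp n).le
    have a4 : 0 ≤ ∑ n ∈ Finset.range N, S n * w ^ n := Finset.sum_nonneg fun n _ => mul_nonneg (hS n) (hp n).le
    have a5 := mul_le_mul_of_nonneg_right hwk (add_nonneg a3 a4)
    linarith
  have hE : Summable fun n => e n * w ^ n := by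
    refine summable_of_sum_range_le (c := ∑' n, z n * w ^ n) (fun n => mul_nonneg (he n) (hp n).le) fun N => ?_
    have b1 : ∑ n ∈ Finset.range N, e n * w ^ n + ∑ n ∈ Finset.range N, y n * w ^ n = ∑ n ∈ Finset.range N, S n * w ^ n + ∑ n ∈ Finset.range N, z n * w ^ n := by
      rw [← Finset.sum_add_distrib, ← Finset.sum_add_distrib]
      refine Finset.sum_congr rfl fun n _ => ?_
      rw [← add_mul, h1, add_mul]
    have b2 := hSN N
    have b3 := hsum.sum_le_tsum (Finset.range N) fun n _ => mul_nonneg (hz n) (hp n).le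
    linarith
  have hE1 : Summable fun n => e (n + k) * w ^ (n + k) := (summable_nat_add_iff k).2 hE
  have hE2 : Summable fun n => e (n + (k + k)) * w ^ (n + (k + k)) := (summable_nat_add_iff (k + k)).2 hE
  refine Summable.of_nonneg_of_le (fun n => mul_nonneg (hy n) (hp n).le) (fun n => ?_) 
    (((hsum.add hE).add (hE1.mul_left (2 / w ^ k))).add (hE2.mul_left (2 / w ^ (k + k))))
  have c1 : 2 / w ^ k * (e (n + k) * w ^ (n + k)) = 2 * e (n + k) * w ^ n := by
    rw [pow_add]; field_simp
  have c2 : 2 / w ^ (k + k) * (e (n + (k + k)) * w ^ (n + (k + k))) = 2 * e (n + k + k) * w ^ n := by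
    rw [pow_add w n, ← add_assoc]; field_simp
  rw [c1, c2]
  refine (mul_le_mul_of_nonneg_right (h4 n) (hp n).le).trans (le_of_eq ?_)
  ring

/-- all cuspidal constituents lie in `T` -/
def YY (T : Finset (Ch F)) (χ : Ch F) : Prop := ∀ ρ τ : Ch F, Cusp ρ → mm ρ τ χ ≠ 0 → ρ ∈ T

theorem YY_summable (T : Finset (Ch F)) : Summable fun n : ℕ => ((yl (YY T) n).card : ℝ) * (1 / (Fintype.card F : ℝ)) ^ n := by
  have hc : (2 : ℝ) ≤ Fintype.card F := by exact_mod_cast Fintype.one_lt_card (α := F)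
  induction T using Finset.induction_on with
  | empty =>
    apply summable_of_ne_finset_zero (s := {0})
    intro n hn
    have : yl (YY (∅ : Finset (Ch F))) n = ∅ := by
      rw [Finset.eq_empty_iff_forall_notMem]
      intro χ hχ
      rw [mem_yl] at hχ
      obtain ⟨σ, τ, hσ, hm⟩ := exists_cusp χ (by have : n ≠ 0 := by simpa using hn
                                                 omega)
      exact absurd (hχ.2 σ τ hσ hm) (Finset.notMem_empty _)
    rw [this]; simp
  | insert σ T hσT ih =>
    by_cases hσ : Cusp σ
    swap
    · have : YY (insert σ T) = YY T := by
        funext χ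
        apply propext
        constructor
        · intro h ρ τ hρ hm
          rcases Finset.mem_insert.1 (h ρ τ hρ hm) with rfl | h'
          · exact absurd hρ hσ
          · exact h'
        · intro h ρ τ hρ hm
          exact Finset.mem_insert_of_mem (h ρ τ hρ hm)
      rw [this]; exact ih
    have hup : ∀ τ χ, YY (insert σ T) τ → mm σ τ χ ≠ 0 → YY (insert σ T) χ := by
      intro τ χ hτ hm ρ ω hρ hω
      by_cases h : σ = ρ
      · rw [← h]; exact Finset.mem_insert_self _ _
      · obtain ⟨κ, hκ, _⟩ := mm_up σ ρ χ τ ω hσ hρ h hm hω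
        exact hτ ρ κ hρ hκ
    have hdn : ∀ τ χ, YY (insert σ T) χ → mm σ τ χ ≠ 0 → YY (insert σ T) τ := by
      intro τ χ hχ hm ρ κ hρ hκ
      by_cases h : σ = ρ
      · rw [← h]; exact Finset.mem_insert_self _ _
      · obtain ⟨ω, hω⟩ := mm_down σ ρ χ τ κ hσ hρ h hm hκ
        exact hχ ρ ω hρ hω
    have hz : ∀ n : ℤ, (yl (YY (insert σ T)) n).filter (fun χ => nn σ χ = 0) = yl (YY T) n := by
      intro n
      ext χ
      rw [Finset.mem_filter, mem_yl, mem_yl, nn_eq_zero]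
      constructor
      · rintro ⟨⟨h1, h2⟩, h3⟩
        refine ⟨h1, fun ρ τ hρ hm => ?_⟩
        rcases Finset.mem_insert.1 (h2 ρ τ hρ hm) with rfl | h'
        · exact absurd (h3 τ) hm
        · exact h'
      · rintro ⟨h1, h2⟩
        refine ⟨⟨h1, fun ρ τ hρ hm => Finset.mem_insert_of_mem (h2 ρ τ hρ hm)⟩, fun τ => ?_⟩
        by_contra hm
        exact hσT (h2 σ τ hσ hm)
    set Y := YY (insert σ T) with hY
    refine summable_step (fun n : ℕ => ((yl Y n).card : ℝ)) (fun n : ℕ => ((yl (YY T) n).card : ℝ)) (fun n : ℕ => ((∑ χ ∈ yl Y n, (nn σ χ - 1) : ℕ) : ℝ))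
      (fun n : ℕ => ((∑ χ ∈ yl Y n, nn σ χ : ℕ) : ℝ)) (fun n => Nat.cast_nonneg _) (fun n => Nat.cast_nonneg _) (fun n => Nat.cast_nonneg _) (fun n => Nat.cast_nonneg _) σ.1 hσ.1 ?_ ?_ ?_ ?_ _ ?_ ?_ ih
    · intro n
      have := e_add (yl Y n) σ
      rw [hz] at this
      exact_mod_cast this
    · intro n
      have := S_rec Y σ hσ hup hdn n
      rw [Nat.cast_add n σ.1, this, Nat.cast_add]
    · intro n hn
      rw [Finset.sum_eq_zero, Nat.cast_zero]
      intro χ hχ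
      rw [mem_yl] at hχ
      rw [nn_eq_zero]
      intro τ
      by_contra hne
      have := mm_deg hne
      omega
    · intro n
      have := key_count Y σ hσ hup n
      rw [hz] at this
      rw [Nat.cast_add (n + σ.1) σ.1, Nat.cast_add n σ.1]
      exact_mod_cast this
    · positivity
    · exact one_div_le_one_div_of_le (by norm_num) hc

end Count

section Lower
open scoped Classical
set_option linter.unusedSectionVars false

variable {F : Type} [Field F] [Fintype F]

lemma exists_charpoly {n : ℕ} (p : Polynomial F) (hp : p.Monic) (hn : p.natDegree = n) :
    ∃ M : Matrix (Fin n) (Fin n) F, M.charpoly = p := by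
  let b := AdjoinRoot.powerBasis' hp
  have hd : b.dim = n := by simp [b, hn]
  refine ⟨reindex (finCongr hd) (finCongr hd) (Algebra.leftMulMatrix b.basis b.gen), ?_⟩
  rw [charpoly_reindex, charpoly_leftMulMatrix]
  simp only [b, AdjoinRoot.powerBasis'_gen]
  rw [AdjoinRoot.minpoly_root hp.ne_zero, hp.leadingCoeff]; simp

lemma exists_gl_charpoly {m : ℕ} (a : Fin (m + 1) → F) (h0 : a 0 ≠ 0) :
    ∃ u : GL (Fin (m + 1)) F, ∀ i : Fin (m + 1), u.1.charpoly.coeff i = a i := by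
  have hdeg := Polynomial.degree_sum_fin_lt a
  have hmon := Polynomial.monic_X_pow_add hdeg
  have hnd : (Polynomial.X ^ (m + 1) + ∑ i : Fin (m + 1), Polynomial.C (a i) * Polynomial.X ^ (i : ℕ)).natDegree = m + 1 := by
    rw [Polynomial.natDegree_add_eq_left_of_degree_lt]
    · simp
    · rwa [Polynomial.degree_X_pow]
  obtain ⟨M, hM⟩ := exists_charpoly _ hmon hnd
  have hco : ∀ i : Fin (m + 1), M.charpoly.coeff i = a i := by
    intro i
    rw [hM, Polynomial.coeff_add, Polynomial.coeff_X_pow, if_neg (by omega), zero_add, Polynomial.finsetSum_coeff]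
    rw [Finset.sum_eq_single i]
    · simp
    · intro j _ hj
      rw [Polynomial.coeff_C_mul_X_pow, if_neg]
      intro h; exact hj (Fin.ext h.symm)
    · simp
  have hu : IsUnit M := by
    rw [Matrix.isUnit_iff_isUnit_det, Matrix.det_eq_sign_charpoly_coeff]
    have := hco 0
    rw [Fin.val_zero] at this
    rw [this]
    simp [h0]
  exact ⟨hu.unit, hco⟩

lemma lower_bound (m : ℕ) : (Fintype.card F) ^ (m + 1) ≤ 2 * Nat.card (Irr (GL (Fin (m + 1)) F)) := by
  rw [irr_card]
  have hex : ∀ z : Fˣ × (Fin m → F), ∃ u : GL (Fin (m + 1)) F, ∀ i : Fin (m + 1), u.1.charpoly.coeff i = (Fin.cons z.1.1 z.2 : Fin (m + 1) → F) i := by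
    intro z
    exact exists_gl_charpoly _ (by simp)
  choose f hf using hex
  have hinj : Function.Injective fun z => ConjClasses.mk (f z) := by
    intro z z' h
    simp only [ConjClasses.mk_eq_mk_iff_isConj, isConj_iff] at h
    obtain ⟨c, hc⟩ := h
    have hcp : (f z').1.charpoly = (f z).1.charpoly := by
      rw [← hc, Units.val_mul, Units.val_mul, Matrix.coe_units_inv]
      exact Matrix.charpoly_units_conj c (f z).1
    have hall : (Fin.cons z.1.1 z.2 : Fin (m + 1) → F) = Fin.cons z'.1.1 z'.2 := by
      funext i
      rw [← hf z i, ← hf z' i, hcp]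
    rw [Fin.cons_inj] at hall
    exact Prod.ext (Units.ext hall.1) hall.2
  have : Finite (ConjClasses (GL (Fin (m + 1)) F)) := Finite.of_surjective _ (ConjClasses.mk_surjective)
  have h1 := Nat.card_le_card_of_injective _ hinj
  rw [Nat.card_prod, Nat.card_eq_fintype_card (α := Fˣ), Fintype.card_units, Nat.card_eq_fintype_card (α := Fin m → F), Fintype.card_fun, Fintype.card_fin] at h1
  have hc : 2 ≤ Fintype.card F := Fintype.one_lt_card (α := F)
  have : Fintype.card F ≤ 2 * (Fintype.card F - 1) := by omega
  calc Fintype.card F ^ (m + 1) = Fintype.card F * Fintype.card F ^ m := by ring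
    _ ≤ (2 * (Fintype.card F - 1)) * Fintype.card F ^ m := Nat.mul_le_mul_right _ this
    _ = 2 * ((Fintype.card F - 1) * Fintype.card F ^ m) := by ring
    _ ≤ _ := Nat.mul_le_mul_left _ h1

end Lower

section Divis
open scoped Classical
set_option linter.unusedSectionVars false

variable {F : Type} [Field F] [Fintype F]
variable {ι κ : Type} [Fintype ι] [DecidableEq ι] [Fintype κ] [DecidableEq κ]

lemma support_down (σ τ ρ η χ : Ch F) (hσ : Cusp σ) (hlt : ρ.1 < σ.1) (h1 : mm σ τ χ ≠ 0) (h2 : mm ρ η χ ≠ 0) :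
    ∃ κ, mm σ κ η ≠ 0 := by
  have h := mackey σ τ ρ η hσ hlt.le (mm_deg h1)
  have hne : σ ≠ ρ := by rintro rfl; omega
  rw [if_neg (by tauto), zero_add] at h
  have hp : 0 < ∑ χ' ∈ lvl F χ.1, mm σ τ χ' * mm ρ η χ' := 
    Finset.sum_pos' (fun _ _ => Nat.zero_le _) ⟨χ, mem_lvl.2 rfl, Nat.mul_pos (Nat.pos_of_ne_zero h1) (Nat.pos_of_ne_zero h2)⟩
  rw [h] at hp
  obtain ⟨κ, _, hκ⟩ := Finset.exists_ne_zero_of_sum_ne_zero hp.ne'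
  exact ⟨κ, right_ne_zero_of_mul hκ⟩

lemma ev_avg_integral (χ : Ch F) (y c : GL ι F) (hyc : Commute y c) (m : ℕ) (hm : 0 < m) (hc : c ^ m = 1) :
    IsIntegral ℤ ((m : ℂ)⁻¹ * ∑ j ∈ Finset.range m, ev χ (y * c ^ j).1) := by
  by_cases h : Fintype.card ι = χ.1
  · have e := Fintype.equivFinOfCardEq h
    simp only [ev_eq χ e, map_mul, map_pow]
    refine irr_avg_integral χ.2 _ _ (hyc.map _) m hm ?_
    rw [← map_pow, hc, map_one]
  · simp only [ev_ne_card χ h, Finset.sum_const_zero, mul_zero]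
    exact isIntegral_zero

lemma ev_integral (χ : Ch F) (M : Matrix ι ι F) : IsIntegral ℤ (ev χ M) := by
  rw [ev]
  split_ifs
  · exact irr_integral _ _
  · exact isIntegral_zero

lemma sylvester (A : Matrix ι ι F) (C : Matrix κ κ F) (hA : IsUnit (A - 1)) (hC : IsNilpotent (C - 1)) (X : Matrix ι κ F)
    (h : A * X = X * C) : X = 0 := by
  obtain ⟨m, hm⟩ := hC
  have h1 : (A - 1) * X = X * (C - 1) := by
    rw [Matrix.sub_mul, Matrix.mul_sub, h]; simp
  have h2 : ∀ k : ℕ, (A - 1) ^ k * X = X * (C - 1) ^ k := by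
    intro k
    induction k with
    | zero => simp
    | succ k ih => rw [pow_succ, Matrix.mul_assoc, h1, ← Matrix.mul_assoc, ih, Matrix.mul_assoc, ← pow_succ]
  obtain ⟨u, hu⟩ := hA.pow m
  have h3 := h2 m
  rw [hm, Matrix.mul_zero, ← hu] at h3
  have h4 : (u⁻¹).1 * (u.1 * X) = X := by
    rw [← Matrix.mul_assoc, ← Units.val_mul]; simp
  rw [← h4, h3, Matrix.mul_zero]

lemma nilp_blocks (u : Matrix ι ι F) (hu : IsNilpotent (u - 1)) : IsNilpotent (fromBlocks u 0 0 (1 : Matrix κ κ F) - 1) := by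
  obtain ⟨m, hm⟩ := hu
  have h1 : fromBlocks u 0 0 (1 : Matrix κ κ F) - 1 = fromBlocks (u - 1) 0 0 0 := by
    rw [← fromBlocks_one, sub_eq_iff_eq_add, fromBlocks_add]; simp
  have h2 : ∀ k : ℕ, (fromBlocks (u - 1) 0 0 (0 : Matrix κ κ F)) ^ (k + 1) = fromBlocks ((u - 1) ^ (k + 1)) 0 0 0 := by
    intro k
    induction k with
    | zero => simp
    | succ k ih => rw [pow_succ, ih, fromBlocks_multiply, ← pow_succ]; simp
  refine ⟨m + 1, ?_⟩
  rw [h1, h2, pow_succ, hm, zero_mul]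
  ext (i | i) (j | j) <;> simp

/-- block diagonal element -/
noncomputable def dgl (A : GL ι F) (C : GL κ F) : GL (ι ⊕ κ) F := PB.gl ⟨A, 0, C⟩

lemma dgl_val (A : GL ι F) (C : GL κ F) : (dgl A C).1 = fromBlocks A.1 0 0 C.1 := by
  rw [dgl, PB.gl_val, PB.mat]

lemma dgl_mul (A A' : GL ι F) (C C' : GL κ F) : dgl A C * dgl A' C' = dgl (A * A') (C * C') := by
  apply Units.ext
  rw [Units.val_mul, dgl_val, dgl_val, dgl_val, fromBlocks_multiply]; simp

lemma dgl_one : dgl (1 : GL ι F) (1 : GL κ F) = 1 := by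
  apply Units.ext
  rw [dgl_val]; simp

lemma dgl_pow (A : GL ι F) (j : ℕ) : (dgl A (1 : GL κ F)) ^ j = dgl (A ^ j) 1 := by
  induction j with
  | zero => simp [dgl_one]
  | succ j ih => rw [pow_succ, ih, dgl_mul, pow_succ, one_mul]

/-- divisibility for a coprime block decomposition -/
lemma dvd_coprime (L : ℕ) (σ χ : Ch F) (hσ : Cusp σ) (hχ : ∃ τ, mm σ τ χ ≠ 0) (A : GL ι F) (C : GL κ F)
    (hA : IsUnit (A.1 - 1)) (hC : IsNilpotent (C.1 - 1)) (hcard : Fintype.card ι < σ.1)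
    (hd : ∀ η : Ch F, η.1 = Fintype.card κ → (∃ τ, mm σ τ η ≠ 0) → IsIntegral ℤ (ev η C.1 / (L : ℂ))) :
    IsIntegral ℤ (ev χ (fromBlocks A.1 0 0 C.1) / (L : ℂ)) := by
  rw [coprime_expand χ A C fun X hX => sylvester _ _ hA hC X hX, Finset.sum_div]
  refine IsIntegral.sum _ fun ρ hρ => ?_
  rw [Finset.sum_div]
  refine IsIntegral.sum _ fun η hη => ?_
  rw [mem_lvl] at hρ hη
  by_cases hm : mm ρ η χ = 0
  · rw [hm]; simp [isIntegral_zero]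
  · obtain ⟨τ, hτ⟩ := hχ
    have h1 := support_down σ τ ρ η χ hσ (by omega) hτ hm
    rw [show (mm ρ η χ : ℂ) * (ev ρ A.1 * ev η C.1) / L = (mm ρ η χ : ℂ) * (ev ρ A.1 * (ev η C.1 / L)) by ring]
    refine IsIntegral.mul ?_ (IsIntegral.mul (ev_integral _ _) (hd η hη h1))
    exact_mod_cast isIntegral_algebraMap (R := ℤ) (A := ℂ) (x := (mm ρ η χ : ℤ))

lemma ev_shuffle (χ : Ch F) (u : Matrix ι ι F) (d N : ℕ) :
    ev χ (fromBlocks u 0 0 (1 : Matrix (Fin (d + N)) (Fin (d + N)) F)) = 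
      ev χ (fromBlocks (1 : Matrix (Fin d) (Fin d) F) 0 0 (fromBlocks u 0 0 (1 : Matrix (Fin N) (Fin N) F))) := by
  let e : Fin d ⊕ (ι ⊕ Fin N) ≃ ι ⊕ Fin (d + N) := 
    (Equiv.sumAssoc (Fin d) ι (Fin N)).symm.trans (((Equiv.sumComm (Fin d) ι).sumCongr (Equiv.refl _)).trans 
      ((Equiv.sumAssoc ι (Fin d) (Fin N)).trans ((Equiv.refl ι).sumCongr finSumFinEquiv)))
  rw [← ev_submatrix χ e]
  congr 1
  ext i j
  have hdis : ∀ (a : Fin d) (b : Fin N), Fin.castAdd N a ≠ Fin.natAdd d b := by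
    intro a b h
    have := congrArg Fin.val h
    simp at this
    omega
  rcases i with i | i | i <;> rcases j with j | j | j <;> 
    simp [e, Matrix.one_apply, hdis, (hdis _ _).symm]

lemma dvd_unip (L d : ℕ) (hL : 0 < L) (hd : 0 < d) (c : GL (Fin d) F) (hcL : c ^ L = 1) (hcu : ∀ j, 0 < j → j < L → IsUnit ((c ^ j).1 - 1)) 
    (σ : Ch F) (hσ : Cusp σ) (u : GL ι F) (hu : IsNilpotent (u.1 - 1)) (hcard : Fintype.card ι + d < σ.1) (N : ℕ) (χ : Ch F) 
    (hχN : χ.1 = Fintype.card ι + N) (hχ : ∃ τ, mm σ τ χ ≠ 0) : 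
    IsIntegral ℤ (ev χ (fromBlocks u.1 0 0 (1 : Matrix (Fin N) (Fin N) F)) / (L : ℂ)) := by
  induction N using Nat.strong_induction_on generalizing χ with
  | _ N ih =>
    obtain ⟨τ, hτ⟩ := hχ
    have hdeg := mm_deg hτ
    obtain ⟨N', rfl⟩ : ∃ N', N = d + N' := ⟨N - d, by omega⟩
    set C : GL (ι ⊕ Fin N') F := dgl u 1 with hC
    have hCv : C.1 = fromBlocks u.1 0 0 1 := by rw [hC, dgl_val, Units.val_one]
    have havg := ev_avg_integral χ (dgl (1 : GL (Fin d) F) C) (dgl c 1) (by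
      rw [Commute, SemiconjBy, dgl_mul, dgl_mul]; simp) L hL (by rw [dgl_pow, hcL, dgl_one])
    obtain ⟨L', rfl⟩ : ∃ L', L = L' + 1 := ⟨L - 1, by omega⟩
    rw [Finset.sum_range_succ', mul_add] at havg
    have h0 : ev χ (dgl (1 : GL (Fin d) F) C * (dgl c 1) ^ 0).1 = ev χ (fromBlocks u.1 0 0 (1 : Matrix (Fin (d + N')) (Fin (d + N')) F)) := by
      rw [pow_zero, mul_one, dgl_val, hCv, ev_shuffle, Units.val_one]
    rw [h0] at havg
    have hrest : IsIntegral ℤ (((L' + 1 : ℕ) : ℂ)⁻¹ * ∑ j ∈ Finset.range L', ev χ (dgl (1 : GL (Fin d) F) C * (dgl c 1) ^ (j + 1)).1) := by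
      rw [Finset.mul_sum]
      refine IsIntegral.sum _ fun j hj => ?_
      rw [Finset.mem_range] at hj
      rw [dgl_pow, dgl_mul, one_mul, mul_one, dgl_val, mul_comm, ← div_eq_mul_inv]
      refine dvd_coprime (L' + 1) σ χ hσ ⟨τ, hτ⟩ (c ^ (j + 1)) C (hcu _ (by omega) (by omega)) ?_ ?_ ?_
      · rw [hCv]; exact nilp_blocks _ hu
      · simp; omega
      · intro η hη hη'
        rw [hCv]
        exact ih N' (by omega) η (by rw [hη]; simp) hη'
    have := havg.sub hrest
    rw [add_sub_cancel_left, mul_comm, ← div_eq_mul_inv] at this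
    exact this

lemma exists_idem_pow {M : Type} [Monoid M] [Finite M] (f : M) : ∃ k, 0 < k ∧ f ^ k * f ^ k = f ^ k := by
  obtain ⟨i, j, hne, hij⟩ := Finite.exists_ne_map_eq_of_infinite (fun n : ℕ => f ^ n)
  wlog hlt : i < j generalizing i j
  · exact this j i hne.symm hij.symm (by omega)
  obtain ⟨p, rfl⟩ : ∃ p, j = i + p := ⟨j - i, by omega⟩
  have h1 : ∀ n, i ≤ n → f ^ (n + p) = f ^ n := by
    intro n hn
    obtain ⟨t, rfl⟩ : ∃ t, n = i + t := ⟨n - i, by omega⟩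
    have hij' : f ^ i = f ^ (i + p) := hij
    rw [show i + t + p = i + p + t by ring, pow_add f (i + p), ← hij', ← pow_add]
  have h2 : ∀ t n, i ≤ n → f ^ (n + p * t) = f ^ n := by
    intro t
    induction t with
    | zero => simp
    | succ t ih => 
      intro n hn
      rw [show n + p * (t + 1) = (n + p * t) + p by ring, h1 _ (by omega), ih n hn]
  have hp : 0 < p := by omega
  refine ⟨p * (i + 1), by positivity, ?_⟩
  rw [← pow_add, h2]
  nlinarith

lemma idem_normal' (ε : Matrix ι ι F) (hε : ε * ε = ε) : ∃ (s s' : ℕ) (a : MI F (Fin s ⊕ Fin s') ι),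
    a.m * ε * a.i = fromBlocks 1 0 0 0 := by
  by_cases h0 : ε = 0
  · let e := Fintype.equivFin ι
    let f : Fin 0 ⊕ Fin (Fintype.card ι) ≃ ι := (Equiv.emptySum _ _).trans e.symm
    refine ⟨0, Fintype.card ι, ⟨(1 : Matrix ι ι F).submatrix f id, (1 : Matrix ι ι F).submatrix id f, ?_, ?_⟩, ?_⟩
    · rw [← Matrix.submatrix_mul _ _ _ id _ Function.bijective_id]; simp
    · rw [← Matrix.submatrix_mul _ _ _ f _ f.bijective]; simp
    · rw [h0]; ext (i | i) (j | j)
      · exact i.elim0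
      · exact i.elim0
      · exact j.elim0
      · simp
  by_cases h1 : ε = 1
  · let e := Fintype.equivFin ι
    let f : Fin (Fintype.card ι) ⊕ Fin 0 ≃ ι := (Equiv.sumEmpty _ _).trans e.symm
    refine ⟨Fintype.card ι, 0, ⟨(1 : Matrix ι ι F).submatrix f id, (1 : Matrix ι ι F).submatrix id f, ?_, ?_⟩, ?_⟩
    · rw [← Matrix.submatrix_mul _ _ _ id _ Function.bijective_id]; simp
    · rw [← Matrix.submatrix_mul _ _ _ f _ f.bijective]; simp
    · rw [h1, Matrix.mul_one, ← Matrix.submatrix_mul _ _ _ id _ Function.bijective_id]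
      ext (i | i) (j | j)
      · simp [Matrix.one_apply]
      · exact j.elim0
      · exact i.elim0
      · exact i.elim0
  · obtain ⟨s, s', a, _, _, h⟩ := idem_normal ε hε h0 h1
    exact ⟨s, s', a, h⟩

lemma fitting (g : GL ι F) : ∃ (s s' : ℕ) (a : MI F (Fin s ⊕ Fin s') ι) (v : GL (Fin s) F) (u : GL (Fin s') F),
    a.m * g.1 * a.i = fromBlocks v.1 0 0 u.1 ∧ IsUnit (v.1 - 1) ∧ IsNilpotent (u.1 - 1) := by
  obtain ⟨k, hk, hid⟩ := exists_idem_pow (g.1 - 1)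
  obtain ⟨s, s', a, ha⟩ := idem_normal' _ hid
  have hconj : ∀ M N : Matrix ι ι F, (a.m * M * a.i) * (a.m * N * a.i) = a.m * (M * N) * a.i := by
    intro M N
    rw [show (a.m * M * a.i) * (a.m * N * a.i) = a.m * (M * (a.i * a.m) * N) * a.i by simp only [Matrix.mul_assoc], a.im, Matrix.mul_one]
  have hpow : ∀ (M : Matrix ι ι F) (k : ℕ), (a.m * M * a.i) ^ k = a.m * M ^ k * a.i := by
    intro M k
    induction k with
    | zero => simp [a.mi]
    | succ k ih => rw [pow_succ, ih, hconj, pow_succ]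
  set y := a.m * g.1 * a.i with hy
  set yi := a.m * (g⁻¹).1 * a.i with hyi
  have hy1 : y * yi = 1 := by rw [hconj, ← Units.val_mul]; simp [a.mi]
  have hy2 : yi * y = 1 := by rw [hconj, ← Units.val_mul]; simp [a.mi]
  have hcg : Commute g.1 ((g.1 - 1) ^ k) := (((Commute.refl g.1).sub_right (Commute.one_right _))).pow_right k
  have hcgi : Commute (g⁻¹).1 ((g.1 - 1) ^ k) := (hcg.units_inv_left)
  have hcy : y * fromBlocks 1 0 0 0 = fromBlocks 1 0 0 0 * y := by
    rw [← ha, hconj, hconj, hcg.eq]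
  have hcyi : yi * fromBlocks 1 0 0 0 = fromBlocks 1 0 0 0 * yi := by
    rw [← ha, hconj, hconj, hcgi.eq]
  have hblk : ∀ z : Matrix (Fin s ⊕ Fin s') (Fin s ⊕ Fin s') F, z * fromBlocks 1 0 0 0 = fromBlocks 1 0 0 0 * z → z = fromBlocks z.toBlocks₁₁ 0 0 z.toBlocks₂₂ := by
    intro z hz
    rw [← fromBlocks_toBlocks z, fromBlocks_multiply, fromBlocks_multiply, fromBlocks_inj] at hz
    simp at hz
    conv_lhs => rw [← fromBlocks_toBlocks z]
    rw [← hz.1, hz.2]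
  have hb := hblk y hcy
  have hbi := hblk yi hcyi
  have h11 := hy1
  have h22 := hy2
  rw [hb, hbi, fromBlocks_multiply, ← fromBlocks_one, fromBlocks_inj] at h11 h22
  simp at h11 h22
  refine ⟨s, s', a, ⟨y.toBlocks₁₁, yi.toBlocks₁₁, h11.1, h22.1⟩, ⟨y.toBlocks₂₂, yi.toBlocks₂₂, h11.2, h22.2⟩, hb, ?_, ?_⟩
  all_goals
    have hp := hpow (g.1 - 1) k
    rw [ha, Matrix.mul_sub, Matrix.sub_mul, Matrix.mul_one, a.mi, ← hy, hb] at hp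
    have hsub : fromBlocks y.toBlocks₁₁ 0 0 y.toBlocks₂₂ - 1 = fromBlocks (y.toBlocks₁₁ - 1) 0 0 (y.toBlocks₂₂ - 1) := by
      rw [← fromBlocks_one, sub_eq_iff_eq_add, fromBlocks_add]; simp
    have hpw : ∀ k : ℕ, fromBlocks (y.toBlocks₁₁ - 1) 0 0 (y.toBlocks₂₂ - 1) ^ k = fromBlocks ((y.toBlocks₁₁ - 1) ^ k) 0 0 ((y.toBlocks₂₂ - 1) ^ k) := by
      intro k
      induction k with
      | zero => simp
      | succ k ih => rw [pow_succ, ih, fromBlocks_multiply, pow_succ, pow_succ]; simp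
    rw [hsub, hpw, fromBlocks_inj] at hp
  · change IsUnit (y.toBlocks₁₁ - 1)
    exact (isUnit_pow_iff hk.ne').1 (by rw [hp.1]; exact isUnit_one)
  · exact ⟨k, hp.2.2.2⟩

theorem dvd_main (L d : ℕ) (hL : 0 < L) (hd : 0 < d) (c : GL (Fin d) F) (hcL : c ^ L = 1) (hcu : ∀ j, 0 < j → j < L → IsUnit ((c ^ j).1 - 1)) 
    (σ : Ch F) (hσ : Cusp σ) (g : GL ι F) (hcard : Fintype.card ι + d < σ.1) (N : ℕ) (χ : Ch F) (hχ : ∃ τ, mm σ τ χ ≠ 0) : 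
    IsIntegral ℤ (ev χ (fromBlocks g.1 0 0 (1 : Matrix (Fin N) (Fin N) F)) / (L : ℂ)) := by
  obtain ⟨s, s', a, v, u, ha, hv, hu⟩ := fitting g
  have hc := a.card
  rw [Fintype.card_sum, Fintype.card_fin, Fintype.card_fin] at hc
  have h1 : ev χ (fromBlocks g.1 0 0 (1 : Matrix (Fin N) (Fin N) F)) = ev χ (fromBlocks v.1 0 0 (dgl u (1 : GL (Fin N) F)).1) := by
    let b : MI F ((Fin s ⊕ Fin s') ⊕ Fin N) (ι ⊕ Fin N) := ⟨fromBlocks a.m 0 0 1, fromBlocks a.i 0 0 1, by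
      rw [fromBlocks_multiply]; simp [a.mi], by rw [fromBlocks_multiply]; simp [a.im]⟩
    rw [← ev_conj χ b]
    change ev χ (fromBlocks a.m 0 0 1 * fromBlocks g.1 0 0 1 * fromBlocks a.i 0 0 1) = _
    rw [fromBlocks_multiply, fromBlocks_multiply]
    simp only [Matrix.mul_zero, Matrix.zero_mul, add_zero, zero_add, Matrix.mul_one, ha]
    rw [← ev_submatrix χ (Equiv.sumAssoc (Fin s) (Fin s') (Fin N)), dgl_val]
    congr 1
    ext i j
    rcases i with (i | i) | i <;> rcases j with (j | j) | j <;> simp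
  rw [h1]
  refine dvd_coprime L σ χ hσ hχ v _ hv ?_ ?_ ?_
  · rw [dgl_val]; exact nilp_blocks _ hu
  · simp; omega
  · intro η hη hη'
    rw [dgl_val]
    exact dvd_unip L d hL hd c hcL hcu σ hσ u hu (by simp; omega) N η (by rw [hη]; simp) hη'

lemma exists_c (p r : ℕ) (hp : p.Prime) (hr : 0 < r) (hF : (p : F) ≠ 0) : ∃ (d : ℕ) (c : GL (Fin d) F), 0 < d ∧ c ^ (p ^ r) = 1 ∧ 
    ∀ j, 0 < j → j < p ^ r → IsUnit ((c ^ j).1 - 1) := by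
  obtain ⟨r, rfl⟩ : ∃ r', r = r' + 1 := ⟨r - 1, by omega⟩
  obtain ⟨d, hd⟩ : ∃ d, (Polynomial.cyclotomic (p ^ (r + 1)) F).natDegree = d := ⟨_, rfl⟩
  obtain ⟨M, hM⟩ := exists_charpoly (F := F) _ (Polynomial.cyclotomic.monic (p ^ (r + 1)) F) hd
  have hd0 : 0 < d := by
    rw [← hd, Polynomial.natDegree_cyclotomic]
    exact Nat.totient_pos.2 (pow_pos hp.pos _)
  have hCH := Matrix.aeval_self_charpoly M
  rw [hM, Polynomial.cyclotomic_prime_pow_eq_geom_sum hp] at hCH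
  simp only [map_sum, map_pow, Polynomial.aeval_X] at hCH
  set N := M ^ p ^ r with hN
  have hN1 : N ^ p = 1 := by
    have := mul_geom_sum N p
    rw [hCH, mul_zero] at this
    exact (sub_eq_zero.1 this.symm)
  have hML : M ^ (p ^ (r + 1)) = 1 := by rw [pow_succ, pow_mul, ← hN, hN1]
  have hpos : 0 < p ^ (r + 1) := pow_pos hp.pos _
  have hNu : IsUnit (N - 1) := by
    have hdv : ∃ Q, ∑ i ∈ Finset.range p, N ^ i = (p : Matrix (Fin d) (Fin d) F) + (N - 1) * Q := by
      refine ⟨∑ i ∈ Finset.range p, ∑ k ∈ Finset.range i, N ^ k, ?_⟩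
      rw [Finset.mul_sum]
      simp only [mul_geom_sum]
      rw [Finset.sum_sub_distrib]
      simp
    obtain ⟨Q, hQ⟩ := hdv
    rw [hCH] at hQ
    have hpp : (p : Matrix (Fin d) (Fin d) F) = (p : F) • (1 : Matrix (Fin d) (Fin d) F) := by
      rw [Nat.cast_smul_eq_nsmul, nsmul_one]
    have h1 : (N - 1) * (-(p : F)⁻¹ • Q) = 1 := by
      rw [Matrix.mul_smul, eq_neg_of_add_eq_zero_right hQ.symm, hpp]
      rw [neg_smul, smul_neg, neg_neg, smul_smul, inv_mul_cancel₀ hF, one_smul]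
    exact IsUnit.of_mul_eq_one _ h1
  have hMM : M * M ^ (p ^ (r + 1) - 1) = 1 := by
    rw [← pow_succ', Nat.sub_add_cancel hpos, hML]
  refine ⟨d, ⟨M, M ^ (p ^ (r + 1) - 1), hMM, mul_eq_one_comm.1 hMM⟩, hd0, Units.ext ?_, ?_⟩
  · rw [Units.val_pow_eq_pow_val]; exact hML
  · intro j hj hjL
    rw [Units.val_pow_eq_pow_val]
    change IsUnit (M ^ j - 1)
    have hg : Nat.gcd j (p ^ (r + 1)) ∣ p ^ r := by
      obtain ⟨t, ht, hgt⟩ := (Nat.dvd_prime_pow hp).1 (Nat.gcd_dvd_right j (p ^ (r + 1)))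
      rw [hgt]
      apply pow_dvd_pow
      by_contra hlt
      have : t = r + 1 := by omega
      rw [this] at hgt
      have := Nat.le_of_dvd hj (hgt ▸ Nat.gcd_dvd_left j (p ^ (r + 1)))
      omega
    obtain ⟨b, hb⟩ := hg
    have hgl : Nat.gcd j (p ^ (r + 1)) < p ^ (r + 1) := lt_of_le_of_lt (Nat.gcd_le_left _ hj) hjL
    obtain ⟨m, _, hm⟩ := Nat.exists_mul_mod_eq_gcd hgl
    have hpw : M ^ (j * (m * b)) = N := by
      rw [← mul_assoc, pow_mul, pow_eq_pow_mod (j * m) hML, hm, ← pow_mul, ← hb]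
    rw [pow_mul] at hpw
    rw [← hpw, ← mul_geom_sum] at hNu
    have hc : Commute (M ^ j - 1) (∑ i ∈ Finset.range (m * b), (M ^ j) ^ i) := by
      rw [Commute, SemiconjBy, mul_geom_sum, geom_sum_mul]
    exact (hc.isUnit_mul_iff.1 hNu).1

end Divis

section Final
open scoped Classical
set_option linter.unusedSectionVars false

variable {F : Type} [Field F] [Fintype F]

lemma ev_embed {n₀ n : ℕ} (h : n₀ ≤ n) (g : GL (Fin n₀) F) (χ : Irr (GL (Fin n) F)) :
    ev (⟨n, χ⟩ : Ch F) (fromBlocks g.1 0 0 (1 : Matrix (Fin (n - n₀)) (Fin (n - n₀)) F)) = χ.1 (glEmbed h g) := by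
  have h1 := ev_eq (⟨n, χ⟩ : Ch F) ((finSumFinEquiv (m := n₀) (n := n - n₀)).trans (finCongr (Nat.add_sub_cancel' h))) (dgl g (1 : GL (Fin (n - n₀)) F))
  rw [dgl_val, Units.val_one] at h1
  rw [h1]
  have h2 : (Units.mapEquiv (reindexAlgEquiv F F ((finSumFinEquiv (m := n₀) (n := n - n₀)).trans (finCongr (Nat.add_sub_cancel' h)))).toMulEquiv) (dgl g (1 : GL (Fin (n - n₀)) F)) = glEmbed h g := by
    apply Units.ext
    change (reindexAlgEquiv F F ((finSumFinEquiv (m := n₀) (n := n - n₀)).trans (finCongr (Nat.add_sub_cancel' h)))) (dgl g (1 : GL (Fin (n - n₀)) F)).1 = _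
    rw [dgl_val]
    rfl
  exact congrArg χ.1 h2

lemma cast_prime_ne {p : ℕ} (h : Nat.Coprime (Fintype.card F) p) : (p : F) ≠ 0 := by
  intro h0
  obtain ⟨a, b, hab⟩ := Nat.isCoprime_iff_coprime.2 h
  have := congrArg (Int.cast : ℤ → F) hab
  push_cast at this
  rw [h0, FiniteField.cast_card_eq_zero] at this
  simp at this

lemma bad_count (L d : ℕ) (hL : 0 < L) (hd : 0 < d) (c : GL (Fin d) F) (hcL : c ^ L = 1) (hcu : ∀ j, 0 < j → j < L → IsUnit ((c ^ j).1 - 1)) 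
    (n₀ : ℕ) (g : GL (Fin n₀) F) : ∃ T : Finset (Ch F), ∀ (n : ℕ) (h : n₀ ≤ n), 
      Nat.card {χ : GL (Fin n) F → ℂ // IsIrrChar _ χ ∧ ¬ NatDvdAlg L (χ (glEmbed h g))} ≤ (yl (YY T) n).card := by
  refine ⟨(Finset.range (n₀ + d + 1)).biUnion fun i => lvl F i, fun n h => ?_⟩
  rw [← Nat.card_eq_finsetCard]
  have key : ∀ x : {χ : GL (Fin n) F → ℂ // IsIrrChar _ χ ∧ ¬ NatDvdAlg L (χ (glEmbed h g))},
      (⟨n, ⟨x.1, x.2.1⟩⟩ : Ch F) ∈ yl (YY ((Finset.range (n₀ + d + 1)).biUnion fun i => lvl F i)) n := by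
    intro x
    rw [mem_yl]
    refine ⟨rfl, fun ρ τ hρ hm => ?_⟩
    by_contra hT
    have hlt : n₀ + d < ρ.1 := by
      by_contra hle
      exact hT (Finset.mem_biUnion.2 ⟨ρ.1, Finset.mem_range.2 (by omega), mem_lvl.2 rfl⟩)
    have := dvd_main L d hL hd c hcL hcu ρ hρ g (by rw [Fintype.card_fin]; exact hlt) (n - n₀)
      ⟨n, ⟨x.1, x.2.1⟩⟩ ⟨τ, hm⟩
    rw [ev_embed h] at this
    exact x.2.2 this
  refine Nat.card_le_card_of_injective (fun x => ⟨_, key x⟩) ?_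
  intro x y hxy
  have h1 := congrArg Subtype.val hxy
  have h2 := eq_of_heq (Sigma.mk.inj h1).2
  exact Subtype.ext (Subtype.mk.inj h2)

end Final

theorem ell_power_divisibility_of_character_values
    (ℓ : ℕ) (hℓ : ℓ.Prime) (hodd : Odd ℓ)
    (q : ℕ) (hq : IsPrimePow q) (hco : Nat.Coprime q ℓ)
    (F : Type) [Field F] [Fintype F] (hFq : Fintype.card F = q)
    (r n₀ : ℕ) (hr : 0 < r) (hn₀ : 0 < n₀) (g : GL (Fin n₀) F) :
    Filter.Tendsto
      (fun n : ℕ =>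
        (Nat.card {χ : GL (Fin (n₀ + n)) F → ℂ //
            IsIrrChar _ χ ∧ ¬ NatDvdAlg (ℓ ^ r) (χ (glEmbed (Nat.le_add_right n₀ n) g))} : ℝ) /
          (Nat.card {χ : GL (Fin (n₀ + n)) F → ℂ // IsIrrChar _ χ} : ℝ))
      Filter.atTop (nhds 0) := by
  subst hFq
  obtain ⟨d, c, hd, hcL, hcu⟩ := exists_c (F := F) ℓ r hℓ hr (cast_prime_ne hco)
  obtain ⟨T, hT⟩ := bad_count (ℓ ^ r) d (pow_pos hℓ.pos r) hd c hcL hcu n₀ g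
  have hlim := (YY_summable T).tendsto_atTop_zero
  have hlim2 := (hlim.comp (Filter.tendsto_add_atTop_nat n₀)).const_mul 2
  rw [mul_zero] at hlim2
  refine squeeze_zero (fun n => by positivity) (fun n => ?_) hlim2
  have h1 := hT (n₀ + n) (Nat.le_add_right n₀ n)
  obtain ⟨k, rfl⟩ : ∃ k, n₀ = k + 1 := ⟨n₀ - 1, by omega⟩
  have h2 : Fintype.card F ^ (k + 1 + n) ≤ 2 * Nat.card {χ : GL (Fin (k + 1 + n)) F → ℂ // IsIrrChar _ χ} := by
    have e : k + 1 + n = (k + n) + 1 := by ring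
    rw [e]
    exact lower_bound (F := F) (k + n)
  have hq0 : (0 : ℝ) < (Fintype.card F : ℝ) := by exact_mod_cast Fintype.card_pos
  have h2' : (Fintype.card F : ℝ) ^ (k + 1 + n) ≤ 2 * (Nat.card {χ : GL (Fin (k + 1 + n)) F → ℂ // IsIrrChar _ χ} : ℝ) := by
    exact_mod_cast h2
  have hp : (0 : ℝ) < (Fintype.card F : ℝ) ^ (k + 1 + n) := pow_pos hq0 _
  have hI : (0 : ℝ) < (Nat.card {χ : GL (Fin (k + 1 + n)) F → ℂ // IsIrrChar _ χ} : ℝ) := by linarith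
  have h1' := (Nat.cast_le (α := ℝ)).2 h1
  simp only [Function.comp]
  rw [show n + (k + 1) = k + 1 + n by ring]
  rw [div_le_iff₀ hI, one_div, inv_pow]
  refine h1'.trans ?_
  have h3 : (1 : ℝ) ≤ ((Fintype.card F : ℝ) ^ (k + 1 + n))⁻¹ * (2 * (Nat.card {χ : GL (Fin (k + 1 + n)) F → ℂ // IsIrrChar _ χ} : ℝ)) := by
    rw [← inv_mul_cancel₀ hp.ne']
    exact mul_le_mul_of_nonneg_left h2' (inv_nonneg.2 hp.le)
  have h4 := mul_le_mul_of_nonneg_left h3 (Nat.cast_nonneg (α := ℝ) (yl (YY T) ((k + 1 + n : ℕ) : ℤ)).card)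
  rw [mul_one] at h4
  refine h4.trans (le_of_eq ?_)
  ring
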